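/- arXiv:2605.25444 — 5 statements merged into one kernel-verified Lean document; each statement's English description precedes it below -/
import Mathlib

section
/- For every real ε with 0 < ε ≤ 1 there exist a real constant c with c ≥ ε⁴/640000 and a natural number n₀ such that for all n ≥ n₀ the following holds for every signing M of K_{n,n}: either (i) there exists a 1-factorization (π_t)_{t : Fin n} of K_{n,n} such that for every t, |∑ i, M i (π_t i)| ≥ c·n, or (ii) M is ε-close to a balanced one-sided signing. -/
open Finset

/-- `M` is a signing of `K_{n,n}`: every entry is `+1` or `-1`. -/
def IsSigning (n : ℕ) (M : Fin n → Fin n → ℤ) : Prop :=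
  ∀ i j, M i j = 1 ∨ M i j = -1

/-- A `±1`-vector `z` is balanced if its numbers of `+1` and `-1` entries
differ by at most `1`. -/
def IsBalanced (n : ℕ) (z : Fin n → ℤ) : Prop :=
  (∀ i, z i = 1 ∨ z i = -1) ∧
  |((univ.filter fun i => z i = 1).card : ℤ) -
    ((univ.filter fun i => z i = -1).card : ℤ)| ≤ 1

/-- A family `π_t` of permutations is a 1-factorization of `K_{n,n}`:
for every edge `(i,j)` there is exactly one `t` with `π_t i = j`. -/
def IsOneFactorization (n : ℕ) (π : Fin n → Equiv.Perm (Fin n)) : Prop :=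
  ∀ i j, ∃! t, π t i = j

lemma perm_count {K : Type*} [Fintype K] [DecidableEq K] (k : ℕ) (a : Fin k ↪ K)
    (ρ₀ : Equiv.Perm K) :
    (univ.filter fun ρ : Equiv.Perm K => ∀ i, ρ (a i) = ρ₀ (a i)).card ≤
      (Fintype.card K - k).factorial := by
  classical
  have h1 : Fintype.card {x : K // x ∉ Set.range a} = Fintype.card K - k := by
    rw [Fintype.card_subtype_compl]
    congr 1
    have := Fintype.card_congr (Equiv.ofInjective a a.injective)
    rw [Fintype.card_fin] at this
    exact this.symm
  rw [← h1, ← Fintype.card_perm,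
    Fintype.card_congr (Equiv.Perm.subtypeEquivSubtypePerm (fun x : K => x ∉ Set.range a)),
    Fintype.card_subtype]
  apply Finset.card_le_card_of_injOn (fun ρ => ρ₀⁻¹ * ρ)
  · intro ρ hρ
    simp only [coe_filter, mem_univ, true_and, Set.mem_ofPred_eq] at hρ ⊢
    intro x hx
    simp only [Set.mem_range, not_exists, not_forall, not_not] at hx
    obtain ⟨i, rfl⟩ := hx
    simp [hρ i]
  · intro x _ y _ h
    simpa using h

lemma desc_sum {K : Type*} [Fintype K] [DecidableEq K] (B : K → K → Bool) (k : ℕ) :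
    ∑ ρ : Equiv.Perm K, ((univ.filter fun a => B a (ρ a) = true).card).descFactorial k ≤
      (Fintype.card K - k).factorial *
        ((univ.filter fun p : K × K => B p.1 p.2 = true).card) ^ k := by
  classical
  have h1 : ∀ ρ : Equiv.Perm K,
      ((univ.filter fun a => B a (ρ a) = true).card).descFactorial k =
        Fintype.card (Fin k ↪ {a // B a (ρ a) = true}) := by
    intro ρ
    rw [Fintype.card_embedding_eq, Fintype.card_subtype, Fintype.card_fin]
  have h2 : ((univ.filter fun p : K × K => B p.1 p.2 = true).card) ^ k =
      Fintype.card (Fin k → {p : K × K // B p.1 p.2 = true}) := by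
    rw [Fintype.card_fun, Fintype.card_subtype, Fintype.card_fin]
  rw [h2, Finset.sum_congr rfl (fun ρ _ => h1 ρ), ← Fintype.card_sigma]
  let F : (Σ ρ : Equiv.Perm K, (Fin k ↪ {a // B a (ρ a) = true})) →
      (Fin k → {p : K × K // B p.1 p.2 = true}) :=
    fun x i => ⟨((x.2 i).1, x.1 (x.2 i).1), (x.2 i).2⟩
  have := Finset.card_le_mul_card_image_of_maps_to (s := univ) (t := univ) (f := F)
    (fun _ _ => mem_univ _) ((Fintype.card K - k).factorial) ?_
  · simpa using this
  intro f _
  rcases Finset.eq_empty_or_nonempty (univ.filter fun x => F x = f) with he | ⟨x₀, hx₀⟩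
  · rw [he]; simp
  simp only [mem_filter, mem_univ, true_and] at hx₀
  let a₀ : Fin k ↪ K := x₀.2.trans (Function.Embedding.subtype _)
  refine le_trans ?_ (perm_count k a₀ x₀.1)
  have key : ∀ x, F x = f → ∀ i, ((x.2 i).1 = a₀ i ∧ x.1 (a₀ i) = x₀.1 (a₀ i)) := by
    intro x hx i
    have h := congrFun (hx.trans hx₀.symm) i
    simp only [F, Subtype.mk.injEq, Prod.mk.injEq] at h
    refine ⟨h.1, ?_⟩
    have : a₀ i = (x₀.2 i).1 := rfl
    rw [this, ← h.2, h.1]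
  apply Finset.card_le_card_of_injOn (fun x => x.1)
  · intro x hx
    simp only [coe_filter, mem_univ, true_and, Set.mem_ofPred_eq] at hx ⊢
    exact fun i => (key x hx i).2
  · rintro ⟨ρ, a⟩ hx ⟨ρ', a'⟩ hy h
    simp only [coe_filter, mem_univ, true_and, Set.mem_ofPred_eq] at hx hy h
    subst h
    have : a = a' := by
      ext i
      have h1 := (key _ hx i).1
      have h2 := (key _ hy i).1
      simp only at h1 h2
      rw [h1, h2]
    rw [this]

/-- few permutations hit the bad set too often -/
lemma bad_bound {K : Type*} [Fintype K] [DecidableEq K] (B : K → K → Bool) (k : ℕ)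
    (q η : ℝ) (hq : 0 ≤ q) (hη : 0 < η) (hk : (k : ℝ) ≤ η / 4 * Fintype.card K)
    (hK : 0 < Fintype.card K) (hqη : q + η < 1)
    (hB : ((univ.filter fun p : K × K => B p.1 p.2 = true).card : ℝ) ≤
      q * (Fintype.card K) ^ 2) :
    ((univ.filter fun ρ : Equiv.Perm K => (q + η) * Fintype.card K <
      ((univ.filter fun a => B a (ρ a) = true).card : ℝ)).card : ℝ) * (1 + η / 2) ^ k ≤
      (Fintype.card K).factorial := by
  classical
  set m := Fintype.card K with hm
  set bad := univ.filter fun ρ : Equiv.Perm K => (q + η) * m <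
      ((univ.filter fun a => B a (ρ a) = true).card : ℝ) with hbad
  have hm0 : (0 : ℝ) < m := by exact_mod_cast hK
  have hkm : k ≤ m := by
    have : (k : ℝ) ≤ m := by nlinarith
    exact_mod_cast this
  have h0 := desc_sum B k
  have h1 : (bad.card : ℝ) * ((q + 3 * η / 4) * m) ^ k ≤
      ((m - k).factorial : ℝ) * (q * m ^ 2) ^ k := by
    calc (bad.card : ℝ) * ((q + 3 * η / 4) * m) ^ k
        = ∑ ρ ∈ bad, ((q + 3 * η / 4) * m) ^ k := by simp
      _ ≤ ∑ ρ ∈ bad, ((((univ.filter fun a => B a (ρ a) = true).card).descFactorial k : ℕ) : ℝ) := by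
          apply Finset.sum_le_sum
          intro ρ hρ
          simp only [hbad, mem_filter, mem_univ, true_and] at hρ
          set Y := (univ.filter fun a => B a (ρ a) = true).card
          have hY : k ≤ Y := by
            have : (k : ℝ) ≤ Y := by nlinarith
            exact_mod_cast this
          have h2 := Nat.pow_sub_le_descFactorial Y k
          refine le_trans ?_ (by exact_mod_cast h2 : (((Y + 1 - k : ℕ) ^ k : ℕ) : ℝ) ≤ _)
          push_cast
          apply pow_le_pow_left₀ (by positivity)
          rw [Nat.cast_sub (by omega)]
          push_cast
          nlinarith
      _ ≤ ∑ ρ : Equiv.Perm K, ((((univ.filter fun a => B a (ρ a) = true).card).descFactorial k : ℕ) : ℝ) := by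
          apply Finset.sum_le_sum_of_subset_of_nonneg (subset_univ _)
          intros; positivity
      _ ≤ ((m - k).factorial : ℝ) * (((univ.filter fun p : K × K => B p.1 p.2 = true).card : ℝ)) ^ k := by
          exact_mod_cast h0
      _ ≤ _ := by gcongr
  have h3 : ((m - k).factorial : ℝ) * ((1 - η / 4) * m) ^ k ≤ m.factorial := by
    rw [← Nat.factorial_mul_descFactorial hkm]
    push_cast
    gcongr
    refine le_trans ?_ (by exact_mod_cast Nat.pow_sub_le_descFactorial m k :
      (((m + 1 - k : ℕ) ^ k : ℕ) : ℝ) ≤ _)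
    push_cast
    apply pow_le_pow_left₀
    · apply mul_nonneg _ hm0.le; linarith
    rw [Nat.cast_sub (by omega)]
    push_cast
    nlinarith
  have h4 : (q * (m : ℝ) ^ 2) * (1 + η / 2) ≤ ((q + 3 * η / 4) * m) * ((1 - η / 4) * m) := by
    have : q * (1 + η / 2) ≤ (q + 3 * η / 4) * (1 - η / 4) := by nlinarith
    nlinarith [sq_nonneg (m : ℝ), mul_le_mul_of_nonneg_right this (sq_nonneg (m : ℝ))]
  set u := (q + 3 * η / 4) * (m : ℝ) with hu
  set v := (1 - η / 4) * (m : ℝ) with hv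
  have hu0 : 0 < u := by positivity
  have hv0 : 0 < v := by apply mul_pos _ hm0; linarith
  have h5 : (bad.card : ℝ) * (1 + η / 2) ^ k * (u ^ k * v ^ k) ≤ m.factorial * (u ^ k * v ^ k) := by
    calc (bad.card : ℝ) * (1 + η / 2) ^ k * (u ^ k * v ^ k)
        = (bad.card * u ^ k) * ((1 + η / 2) ^ k * v ^ k) := by ring
      _ ≤ ((m - k).factorial * (q * m ^ 2) ^ k) * ((1 + η / 2) ^ k * v ^ k) := by gcongr
      _ = ((m - k).factorial * v ^ k) * ((q * m ^ 2) * (1 + η / 2)) ^ k := by rw [mul_pow _ (1 + η / 2)]; ring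
      _ ≤ m.factorial * (u * v) ^ k := by gcongr
      _ = _ := by rw [mul_pow]
  exact le_of_mul_le_mul_right h5 (by positivity)

lemma growth (η : ℝ) (hη : 0 < η) :
    ∃ m₀ : ℕ, ∀ m : ℕ, m₀ ≤ m → (m + 1 : ℝ) < (1 + η / 2) ^ (⌊η / 4 * m⌋₊) := by
  have h1 := tendsto_pow_const_div_const_pow_of_one_lt 1 (r := 1 + η / 2) (by linarith)
  set C : ℝ := 4 / η + 1 with hC
  have hC0 : 0 < C := by positivity
  have h2 : ∀ᶠ k : ℕ in Filter.atTop, C * (k + 1) < (1 + η / 2) ^ k := by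
    filter_upwards [h1.eventually (gt_mem_nhds (show (0 : ℝ) < 1 / (2 * C) by positivity)),
      Filter.eventually_ge_atTop 1] with k hk hk1
    rw [div_lt_div_iff₀ (by positivity) (by positivity)] at hk
    have : (1 : ℝ) ≤ k := by exact_mod_cast hk1
    nlinarith
  have h3 : Filter.Tendsto (fun m : ℕ => ⌊η / 4 * (m : ℝ)⌋₊) Filter.atTop Filter.atTop := by
    apply tendsto_nat_floor_atTop.comp
    exact Filter.Tendsto.const_mul_atTop (by positivity) tendsto_natCast_atTop_atTop
  obtain ⟨m₀, hm₀⟩ := Filter.eventually_atTop.1 (h3.eventually h2)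
  refine ⟨m₀, fun m hm => lt_of_le_of_lt ?_ (hm₀ m hm)⟩
  have h4 := Nat.lt_floor_add_one (η / 4 * (m : ℝ))
  set k : ℝ := (⌊η / 4 * (m : ℝ)⌋₊ : ℝ) with hk
  have h5 : (m : ℝ) = 4 / η * (η / 4 * m) := by field_simp
  have h6 : (m : ℝ) ≤ 4 / η * (k + 1) := by
    rw [h5]; gcongr
  have : 0 ≤ k := by positivity
  rw [hC]; nlinarith

lemma exists_perm (η : ℝ) (hη : 0 < η) :
    ∃ m₀ : ℕ, ∀ (K ι : Type) [Fintype K] [DecidableEq K] [Fintype ι], m₀ ≤ Fintype.card K →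
      Fintype.card ι ≤ Fintype.card K + 1 → ∀ (B : ι → K → K → Bool) (q : ℝ), 0 ≤ q →
      (∀ t, ((univ.filter fun p : K × K => B t p.1 p.2 = true).card : ℝ) ≤
        q * (Fintype.card K) ^ 2) →
      ∃ ρ : Equiv.Perm K, ∀ t, ((univ.filter fun a => B t a (ρ a) = true).card : ℝ) ≤
        (q + η) * Fintype.card K := by
  obtain ⟨m₀, hm₀⟩ := growth η hη
  refine ⟨m₀ + 1, ?_⟩
  intro K ι _ _ _ hK hι B q hq hB
  by_cases hqη : q + η < 1
  swap
  · refine ⟨1, fun t => ?_⟩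
    have h1 : ((univ.filter fun a => B t a ((1 : Equiv.Perm K) a) = true).card : ℝ) ≤
      Fintype.card K := by
      exact_mod_cast Finset.card_le_univ _
    have h2 : (0 : ℝ) ≤ Fintype.card K := by positivity
    nlinarith
  by_contra hcon
  push Not at hcon
  set m := Fintype.card K with hm
  set k := ⌊η / 4 * (m : ℝ)⌋₊ with hk
  have hg := hm₀ m (by omega)
  have hbd := fun t => bad_bound (B t) k q η hq hη (Nat.floor_le (by positivity)) (by omega) hqη (hB t)
  have hcov : (univ : Finset (Equiv.Perm K)) ⊆ univ.biUnion (fun t : ι =>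
      univ.filter fun ρ : Equiv.Perm K => (q + η) * m <
      ((univ.filter fun a => B t a (ρ a) = true).card : ℝ)) := by
    intro ρ _
    obtain ⟨t, ht⟩ := hcon ρ
    simp only [mem_biUnion, mem_filter, mem_univ, true_and]
    exact ⟨t, ht⟩
  have h1 := (Finset.card_le_card hcov).trans Finset.card_biUnion_le
  rw [Finset.card_univ, Fintype.card_perm] at h1
  have h2 : (m.factorial : ℝ) ≤ ∑ t : ι, ((univ.filter fun ρ : Equiv.Perm K => (q + η) * m <
      ((univ.filter fun a => B t a (ρ a) = true).card : ℝ)).card : ℝ) := by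
    exact_mod_cast h1
  have h3 : (m.factorial : ℝ) * (1 + η / 2) ^ k ≤ (m + 1) * m.factorial := by
    calc (m.factorial : ℝ) * (1 + η / 2) ^ k ≤ _ := mul_le_mul_of_nonneg_right h2 (by positivity)
      _ ≤ ∑ t : ι, (m.factorial : ℝ) := by
        rw [Finset.sum_mul]
        exact Finset.sum_le_sum (fun t _ => hbd t)
      _ = Fintype.card ι * m.factorial := by simp
      _ ≤ _ := by
        gcongr
        exact_mod_cast hι
  have h4 : (0 : ℝ) < m.factorial := by exact_mod_cast Nat.factorial_pos m
  nlinarith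

/-- `M` has a 1-factorization all of whose members have absolute sum at least `h`. -/
def Fac {X : Type} [Fintype X] (M : X → X → ℤ) (h : ℝ) : Prop :=
  ∃ π : X → Equiv.Perm X, (∀ i, Function.Injective fun t => π t i) ∧
    ∀ t, h ≤ |((∑ i, M i (π t i) : ℤ) : ℝ)|

lemma Fac.transport {X Y : Type} [Fintype X] [Fintype Y] (M : Y → Y → ℤ) (h : ℝ)
    (e f : X ≃ Y) (H : Fac (fun i j => M (e i) (f j)) h) : Fac M h := by
  obtain ⟨π, hinj, hs⟩ := H
  refine ⟨fun t => (e.symm.trans (π (e.symm t))).trans f, ?_, ?_⟩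
  · intro i t t' htt
    simp only [Equiv.trans_apply, EmbeddingLike.apply_eq_iff_eq] at htt
    exact e.symm.injective (hinj _ htt)
  · intro t
    have := hs (e.symm t)
    rw [← Equiv.sum_comp e (fun i => M i _)]
    simpa using this

lemma Fac.mono {X : Type} [Fintype X] {M : X → X → ℤ} {h h' : ℝ} (hh : h' ≤ h)
    (H : Fac M h) : Fac M h' := by
  obtain ⟨π, hinj, hs⟩ := H
  exact ⟨π, hinj, fun t => hh.trans (hs t)⟩

lemma Fac.neg {X : Type} [Fintype X] {M : X → X → ℤ} {h : ℝ}
    (H : Fac (fun i j => - M i j) h) : Fac M h := by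
  obtain ⟨π, hinj, hs⟩ := H
  refine ⟨π, hinj, fun t => ?_⟩
  simpa using hs t

lemma Fac.final {n : ℕ} {M : Fin n → Fin n → ℤ} {h : ℝ} (H : Fac M h) :
    ∃ π : Fin n → Equiv.Perm (Fin n), IsOneFactorization n π ∧
        ∀ t : Fin n, |(∑ i, (M i (π t i) : ℝ))| ≥ h := by
  obtain ⟨π, hinj, hs⟩ := H
  refine ⟨π, ?_, fun t => by simpa using hs t⟩
  intro i j
  have hb := Finite.injective_iff_bijective.1 (hinj i)
  exact hb.existsUnique j

lemma sum_pm {X : Type} [Fintype X] (f : X → ℤ) (hf : ∀ x, f x = 1 ∨ f x = -1) :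
    ∑ x, f x = Fintype.card X - 2 * ((univ.filter fun x => decide (f x = -1) = true).card : ℤ) := by
  have h1 : ∀ x, f x = 1 - 2 * (if decide (f x = -1) = true then 1 else 0) := by
    intro x
    rcases hf x with h | h <;> rw [h] <;> norm_num
  rw [Finset.sum_congr rfl (fun x _ => h1 x), Finset.sum_sub_distrib, ← Finset.mul_sum,
    Finset.sum_boole]
  simp

lemma caseA (δ : ℝ) (hδ : 0 < δ) : ∃ n₀ : ℕ, ∀ (K : Type) [Fintype K] [DecidableEq K]
    [AddCommGroup K],
    n₀ ≤ Fintype.card K → ∀ M : K → K → ℤ, (∀ i j, M i j = 1 ∨ M i j = -1) →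
    δ * (Fintype.card K) ^ 2 ≤ |((∑ i, ∑ j, M i j : ℤ) : ℝ)| → Fac M (δ / 2 * Fintype.card K) := by
  obtain ⟨m₀, hm₀⟩ := exists_perm (δ / 4) (by positivity)
  refine ⟨m₀ + 1, ?_⟩
  intro K _ _ _ hK
  have main : ∀ M : K → K → ℤ, (∀ i j, M i j = 1 ∨ M i j = -1) →
    δ * (Fintype.card K) ^ 2 ≤ ((∑ i, ∑ j, M i j : ℤ) : ℝ) → Fac M (δ / 2 * Fintype.card K) := by
    intro M hM hS
    have hK0 : (0 : ℝ) < Fintype.card K := by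
      have : 0 < Fintype.card K := by omega
      exact_mod_cast this
    have hcard : ∀ t : K, ((univ.filter fun p : K × K => decide (M p.1 (p.2 + t) = -1) = true).card : ℝ) ≤
        ((1 - δ) / 2) * (Fintype.card K) ^ 2 := by
      intro t
      have h1 := sum_pm (fun p : K × K => M p.1 (p.2 + t)) (fun p => hM _ _)
      have h2 : ∑ p : K × K, M p.1 (p.2 + t) = ∑ i, ∑ j, M i j := by
        rw [Fintype.sum_prod_type]
        refine Finset.sum_congr rfl (fun i _ => ?_)
        exact Equiv.sum_comp (Equiv.addRight t) (fun j => M i j)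
      rw [← h2, h1] at hS
      push_cast [Fintype.card_prod] at hS
      nlinarith
    have hq : 0 ≤ (1 - δ) / 2 := by
      have h1 := hcard 0
      by_contra hneg
      push Not at hneg
      have : (0 : ℝ) ≤ ((univ.filter fun p : K × K => decide (M p.1 (p.2 + 0) = -1) = true).card : ℝ) := by
        positivity
      nlinarith [pow_pos hK0 2]
    obtain ⟨ρ, hρ⟩ := hm₀ K K (by omega) (by omega)
      (fun t i j => decide (M i (j + t) = -1)) ((1 - δ) / 2) hq hcard
    refine ⟨fun t => ρ.trans (Equiv.addRight t), ?_, ?_⟩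
    · intro i t t' h
      simpa using h
    · intro t
      have h1 := hρ t
      have h2 := sum_pm (fun i : K => M i (ρ i + t)) (fun p => hM _ _)
      have h3 : ∑ i, M i ((ρ.trans (Equiv.addRight t)) i) = ∑ i, M i (ρ i + t) := rfl
      rw [h3, h2]
      refine le_trans ?_ (le_abs_self _)
      push_cast
      nlinarith
  intro M hM hS
  rcases le_abs.1 hS with h | h
  · exact main M hM h
  · apply Fac.neg
    apply main
    · intro i j
      rcases hM i j with h | h <;> simp [h]
    · simpa using h

section twochoice
variable {K : Type} [Fintype K] [DecidableEq K]

lemma greedy (c : K → ℤ) (hc : ∀ a, |c a| ≤ 4) (S : Finset K) :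
    ∃ o : K → Bool, |∑ a ∈ S, (if o a then - c a else c a)| ≤ 4 := by
  induction S using Finset.induction_on with
  | empty => exact ⟨fun _ => true, by simp⟩
  | insert a S ha ih =>
    obtain ⟨o, ho⟩ := ih
    have key : ∀ b : Bool, ∑ x ∈ insert a S, (if (Function.update o a b) x then - c x else c x) =
        (if b then - c a else c a) + ∑ x ∈ S, (if o x then - c x else c x) := by
      intro b
      rw [Finset.sum_insert ha]
      congr 1
      · simp
      · refine Finset.sum_congr rfl (fun x hx => ?_)
        rw [Function.update_of_ne (by rintro rfl; exact ha hx)]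
    have hca := hc a
    rw [abs_le] at ho hca
    by_cases h : 0 ≤ c a * (∑ x ∈ S, (if o x then - c x else c x))
    · refine ⟨Function.update o a true, ?_⟩
      rw [key, abs_le]
      simp only [if_true]
      constructor <;> nlinarith
    · refine ⟨Function.update o a false, ?_⟩
      rw [key, abs_le]
      simp only [Bool.false_eq_true, if_false]
      constructor <;> nlinarith

lemma two_choice (P Q : K → ℤ) (hP : ∀ a, |P a| ≤ 2) (hQ : ∀ a, |Q a| ≤ 2)
    (hPQ : ∀ a, P a ≠ Q a → 2 ≤ |P a - Q a|) (a₀ : K) :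
    ∃ o : K → Bool, ∀ o' : K → Bool, (∀ a, a ≠ a₀ → o' a = o a) →
      ((univ.filter fun a => P a ≠ Q a).card : ℤ) - 10 ≤ 2 * |∑ a, if o' a then Q a else P a| ∧
      ((univ.filter fun a => P a ≠ Q a).card : ℤ) - 10 ≤ 2 * |∑ a, if o' a then P a else Q a| := by
  set w : ℤ := ((univ.filter fun a => P a ≠ Q a).card : ℤ) with hw
  set c : K → ℤ := fun a => P a - Q a with hc
  have hc4 : ∀ a, |c a| ≤ 4 := fun a => (abs_sub _ _).trans (by linarith [hP a, hQ a])
  let x : (K → Bool) → ℤ := fun o => ∑ a, (if o a then - c a else c a)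
  set T : ℤ := ∑ a, (P a + Q a) with hT
  have h1 : ∀ o : K → Bool, 2 * ∑ a, (if o a then Q a else P a) = T + x o := by
    intro o
    simp only [hT, x]
    rw [← Finset.sum_add_distrib, Finset.mul_sum]
    refine Finset.sum_congr rfl (fun a _ => ?_)
    simp only [hc]
    split_ifs <;> ring
  have h2 : ∀ o : K → Bool, 2 * ∑ a, (if o a then P a else Q a) = T - x o := by
    intro o
    simp only [hT, x]
    rw [← Finset.sum_sub_distrib, Finset.mul_sum]
    refine Finset.sum_congr rfl (fun a _ => ?_)
    simp only [hc]
    split_ifs <;> ring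
  have h3 : ∀ o o' : K → Bool, (∀ a, a ≠ a₀ → o' a = o a) → |x o' - x o| ≤ 8 := by
    intro o o' ho
    simp only [x]
    rw [← Finset.sum_sub_distrib, Finset.sum_eq_single a₀]
    · have := abs_le.1 (hc4 a₀)
      rw [abs_le]
      split_ifs <;> constructor <;> linarith
    · intro b _ hb
      rw [ho b hb]; ring
    · intro h; exact absurd (mem_univ _) h
  have h4 : ∀ y : ℤ, 2 * |y| = |2 * y| := by intro y; rw [abs_mul]; rfl
  by_cases hTw : w + 2 ≤ |T|
  · obtain ⟨o, ho⟩ := greedy c hc4 univ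
    refine ⟨o, fun o' ho' => ?_⟩
    have h5 := abs_le.1 (h3 o o' ho')
    have h6 : |x o| ≤ 4 := ho
    rw [h4, h4, h1, h2]
    have h7 : |x o'| ≤ 12 := by rw [abs_le] at h6 ⊢; constructor <;> linarith
    have h8 := abs_sub_abs_le_abs_sub T (x o')
    have h9 := abs_sub_abs_le_abs_sub T (- x o')
    rw [abs_neg, sub_neg_eq_add] at h9
    constructor <;> linarith
  · refine ⟨fun a => decide (c a < 0), fun o' ho' => ?_⟩
    have h5 := abs_le.1 (h3 _ o' ho')
    have h6 : 2 * w ≤ x (fun a => decide (c a < 0)) := by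
      rw [hw, Finset.card_filter]
      push_cast
      rw [Finset.mul_sum]
      refine Finset.sum_le_sum (fun a _ => ?_)
      have h7 : (if (decide (c a < 0)) = true then - c a else c a) = |c a| := by
        by_cases h : c a < 0
        · simp [h, abs_of_neg h]
        · simp [h, abs_of_nonneg (not_lt.1 h)]
      rw [h7]
      split_ifs with h
      · simpa using hPQ a h
      · simp
    push Not at hTw
    rw [h4, h4, h1, h2]
    have h8 := abs_lt.1 hTw
    have := le_abs_self (T + x o')
    have := neg_le_abs (T - x o')
    constructor <;> linarith

end twochoice

/-- the alternating sum of a `2 × 2` submatrix -/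
def curl {X Y : Type} (A : X → Y → ℤ) (i i' : X) (j j' : Y) : ℤ :=
  A i j + A i' j' - A i j' - A i' j

lemma prolong {X : Type} [Fintype X] [DecidableEq X] (M : Option X → Option X → ℤ)
    (hM : ∀ i j, M i j = 1 ∨ M i j = -1) (π : X → Equiv.Perm X)
    (hπ : ∀ i, Function.Injective fun t => π t i) (τ g : Equiv.Perm X)
    (hg : ∀ t, π t (g t) = τ (g t)) (h : ℝ)
    (h1 : ∀ t, h + 3 ≤ |((∑ i, M (some i) (some (π t i)) : ℤ) : ℝ)|)
    (h2 : h + 3 ≤ |((∑ i, M (some i) (some (τ i)) : ℤ) : ℝ)|) : Fac M h := by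
  have habs : ∀ i j, |((M i j : ℤ) : ℝ)| ≤ 1 := by
    intro i j
    rcases hM i j with h | h <;> simp [h]
  have hval : ∀ t r, (Equiv.optionCongr (π t)) ((Equiv.swap none (some (g t))) (some r)) =
      if r = g t then none else some (π t r) := by
    intro t r
    split_ifs with hr
    · subst hr; simp
    · rw [Equiv.swap_apply_of_ne_of_ne (by simp) (by simpa using hr)]; simp
  have hvaln : ∀ t, (Equiv.optionCongr (π t)) ((Equiv.swap none (some (g t))) none) =
      some (τ (g t)) := by
    intro t
    simp [hg t]
  refine ⟨fun t => match t with
    | none => Equiv.optionCongr τ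
    | some t => (Equiv.swap none (some (g t))).trans (Equiv.optionCongr (π t)), ?_, ?_⟩
  · intro i t₁ t₂ ht
    rcases i with _ | r
    · rcases t₁ with _ | t₁ <;> rcases t₂ with _ | t₂
      · rfl
      · simp only [Equiv.trans_apply, hvaln] at ht
        simp at ht
      · simp only [Equiv.trans_apply, hvaln] at ht
        simp at ht
      · simp only [Equiv.trans_apply, hvaln] at ht
        simpa using ht
    · have aux : ∀ t, ¬ (if r = g t then none else some (π t r)) = some (τ r) := by
        intro t ht
        split_ifs at ht with hr
        · have h3 : π t r = τ r := by simpa using ht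
          have h4 : π (g.symm r) r = τ r := by simpa using hg (g.symm r)
          have h5 := hπ r (h3.trans h4.symm)
          apply hr; rw [h5]; simp
      rcases t₁ with _ | t₁ <;> rcases t₂ with _ | t₂
      · rfl
      · simp only [Equiv.trans_apply, hval] at ht
        exact absurd ht.symm (aux t₂)
      · simp only [Equiv.trans_apply, hval] at ht
        exact absurd ht (aux t₁)
      · simp only [Equiv.trans_apply, hval] at ht
        split_ifs at ht with ha hb hb
        · rw [ha] at hb; rw [g.injective hb]
        · have h3 : π t₁ r = π t₂ r := by simpa using ht
          rw [hπ r h3]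
  · intro t
    rcases t with _ | t
    · simp only [Fintype.sum_option, Equiv.optionCongr_apply, Option.map_none, Option.map_some]
      push_cast at h2 ⊢
      have := habs none none
      have h3 := abs_sub_abs_le_abs_sub (∑ i, ((M (some i) (some (τ i)) : ℤ) : ℝ)) (- ((M none none : ℤ) : ℝ))
      rw [abs_neg, sub_neg_eq_add, add_comm] at h3
      linarith
    · simp only [Fintype.sum_option, Equiv.trans_apply, hval, hvaln]
      have h4 : |(∑ r, ((M (some r) (if r = g t then none else some (π t r)) : ℤ) : ℝ)) -
          ∑ r, ((M (some r) (some (π t r)) : ℤ) : ℝ)| ≤ 2 := by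
        rw [← Finset.sum_sub_distrib, Finset.sum_eq_single (g t)]
        · refine (abs_sub _ _).trans ?_
          linarith [habs (some (g t)) (if g t = g t then none else some (π t (g t))),
            habs (some (g t)) (some (π t (g t)))]
        · intro b _ hb
          rw [if_neg hb]; ring
        · intro h; exact absurd (mem_univ _) h
      have h5 := h1 t
      push_cast at h5 ⊢
      have h6 := habs none (some (τ (g t)))
      set p := ∑ r, ((M (some r) (if r = g t then none else some (π t r)) : ℤ) : ℝ)
      set q := ∑ r, ((M (some r) (some (π t r)) : ℤ) : ℝ)
      set z := ((M none (some (τ (g t))) : ℤ) : ℝ)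
      have h7 : |q| ≤ |z + p| + |z| + |p - q| := by
        calc |q| = |(z + p) - z - (p - q)| := by congr 1; ring
          _ ≤ |(z + p) - z| + |p - q| := abs_sub _ _
          _ ≤ _ := by linarith [abs_sub (z + p) z]
      linarith

section blocks
variable {K : Type} [Fintype K] [DecidableEq K] [CommRing K]

/-- the permutations of the doubled cyclic Latin square with orientations `o` -/
def basePerm (o : K → K → Bool) (t : K × Bool) : Equiv.Perm (K × Bool) where
  toFun r := (r.1 + t.1, xor r.2 (xor t.2 (o t.1 r.1)))
  invFun c := (c.1 - t.1, xor c.2 (xor t.2 (o t.1 (c.1 - t.1))))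
  left_inv r := by ext <;> simp
  right_inv c := by ext <;> simp

lemma basePerm_inj (o : K → K → Bool) (r : K × Bool) :
    Function.Injective fun t => basePerm o t r := by
  rintro ⟨s, x⟩ ⟨s', x'⟩ h
  simp only [basePerm, Equiv.coe_fn_mk, Prod.mk.injEq, add_right_inj] at h
  obtain ⟨rfl, h⟩ := h
  simpa using h

lemma pm_parity {a b c d : ℤ} (ha : a = 1 ∨ a = -1) (hb : b = 1 ∨ b = -1) (hc : c = 1 ∨ c = -1)
    (hd : d = 1 ∨ d = -1) : |a + b| ≤ 2 ∧ |c + d| ≤ 2 ∧ (a + b ≠ c + d → 2 ≤ |(a + b) - (c + d)|) := by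
  rcases ha with rfl | rfl <;> rcases hb with rfl | rfl <;> rcases hc with rfl | rfl <;>
    rcases hd with rfl | rfl <;> decide

lemma blocks (A : K × Bool → K × Bool → ℤ) (hA : ∀ i j, A i j = 1 ∨ A i j = -1) (w : ℤ)
    (hw : ∀ s : K, w ≤ ((univ.filter fun a : K =>
      curl A (a, false) (a, true) (a + s, false) (a + s, true) ≠ 0).card : ℤ)) :
    ∃ o : K → K → Bool, ∀ o' : K → K → Bool, (∀ s a, a ≠ s → o' s a = o s a) →
      ∀ t, w - 10 ≤ 2 * |∑ i, A i (basePerm o' t i)| := by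
  let P : K → K → ℤ := fun s a => A (a, false) (a + s, false) + A (a, true) (a + s, true)
  let Q : K → K → ℤ := fun s a => A (a, false) (a + s, true) + A (a, true) (a + s, false)
  have hpm := fun s a => pm_parity (hA (a, false) (a + s, false)) (hA (a, true) (a + s, true))
    (hA (a, false) (a + s, true)) (hA (a, true) (a + s, false))
  have := fun s => two_choice (P s) (Q s) (fun a => (hpm s a).1) (fun a => (hpm s a).2.1)
    (fun a => (hpm s a).2.2) s
  choose o ho using this
  refine ⟨o, fun o' ho' t => ?_⟩
  obtain ⟨s, x⟩ := t
  have h1 := ho s (o' s) (ho' s)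
  have h2 : (univ.filter fun a : K =>
      curl A (a, false) (a, true) (a + s, false) (a + s, true) ≠ 0) =
      (univ.filter fun a => P s a ≠ Q s a) := by
    refine Finset.filter_congr (fun a _ => ?_)
    simp only [curl, P, Q]
    rw [not_iff_not]
    constructor <;> intro h <;> linarith
  have h3 := hw s
  rw [h2] at h3
  rw [Fintype.sum_prod_type]
  simp only [Fintype.sum_bool, basePerm, Equiv.coe_fn_mk]
  cases x
  · refine le_trans (by linarith) (h1.1.trans (le_of_eq ?_))
    congr 2
    refine Finset.sum_congr rfl (fun a _ => ?_)
    cases o' s a <;> simp [P, Q, add_comm]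
  · refine le_trans (by linarith) (h1.2.trans (le_of_eq ?_))
    congr 2
    refine Finset.sum_congr rfl (fun a _ => ?_)
    cases o' s a <;> simp [P, Q, add_comm]

lemma fac_even (A : K × Bool → K × Bool → ℤ) (hA : ∀ i j, A i j = 1 ∨ A i j = -1) (w : ℤ)
    (hw : ∀ s : K, w ≤ ((univ.filter fun a : K =>
      curl A (a, false) (a, true) (a + s, false) (a + s, true) ≠ 0).card : ℤ)) :
    Fac A ((w - 10) / 2) := by
  obtain ⟨o, ho⟩ := blocks A hA w hw
  refine ⟨basePerm o, basePerm_inj o, fun t => ?_⟩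
  have h1 := ho o (fun _ _ _ => rfl) t
  have h2 : ((w - 10 : ℤ) : ℝ) ≤ ((2 * |∑ i, A i (basePerm o t i)| : ℤ) : ℝ) := by exact_mod_cast h1
  push_cast at h2 ⊢
  linarith

/-- zero or one -/
def bit (x : Bool) : K := if x then 1 else 0

lemma fac_odd [Nontrivial K] (M : Option (K × Bool) → Option (K × Bool) → ℤ)
    (hM : ∀ i j, M i j = 1 ∨ M i j = -1) (w : ℤ)
    (hw : ∀ s : K, w ≤ ((univ.filter fun a : K =>
      curl (fun i j => M (some i) (some j)) (a, false) (a, true) (a + s, false) (a + s, true) ≠ 0).card : ℤ))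
    (τ : Equiv.Perm (K × Bool)) (hτ : ∀ a x, (τ (a, x)).1 = a + a + bit x)
    (hs : w - 10 ≤ 2 * |∑ i, M (some i) (some (τ i))|) :
    Fac M ((w - 10) / 2 - 3) := by
  obtain ⟨o, ho⟩ := blocks (fun i j => M (some i) (some j)) (fun i j => hM _ _) w hw
  let hh : K → Bool → Bool := fun a x => (τ (a, x)).2
  let o' : K → K → Bool := fun s a => if a = s then
    xor (hh s false) (xor (hh (s - 1) true) (o s (s - 1))) else o s a
  have ho' := ho o' (fun s a h => if_neg h)
  let col : K × Bool → K × Bool := fun r =>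
    (r.1 + bit r.2, xor r.2 (xor (hh r.1 r.2) (o' (r.1 + bit r.2) r.1)))
  have hcol : ∀ r, basePerm o' (col r) r = τ r := by
    rintro ⟨a, x⟩
    simp only [basePerm, Equiv.coe_fn_mk, col]
    ext
    · simp only [hτ]; ring
    · simp [hh]
  have hne : ∀ s : K, s - 1 ≠ s := by
    intro s h
    simp at h
  have hcolne : ∀ s, col (s, false) ≠ col (s - 1, true) := by
    intro s h
    simp only [col, bit, if_true, Bool.false_eq_true, if_false, add_zero, sub_add_cancel, Prod.mk.injEq, true_and] at h
    simp only [o', if_true, if_neg (hne s)] at h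
    revert h
    generalize hh s false = b1
    generalize hh (s - 1) true = b2
    generalize o s (s - 1) = b3
    revert b1 b2 b3
    decide
  have hinj : Function.Injective col := by
    rintro ⟨a, x⟩ ⟨a', x'⟩ h
    have h1 : a + bit x = a' + bit x' := congrArg Prod.fst h
    cases x <;> cases x'
    · simp only [bit, Bool.false_eq_true, if_false, add_zero] at h1
      rw [h1]
    · simp only [bit, Bool.false_eq_true, if_false, add_zero, if_true] at h1
      have h2 : a' = a - 1 := by rw [h1]; ring
      subst h2
      exact absurd h (hcolne a)
    · simp only [bit, Bool.false_eq_true, if_false, add_zero, if_true] at h1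
      have h2 : a = a' - 1 := by rw [← h1]; ring
      subst h2
      exact absurd h.symm (hcolne a')
    · simp only [bit, if_true, add_left_inj] at h1
      rw [h1]
  let e : Equiv.Perm (K × Bool) := Equiv.ofBijective col (Finite.injective_iff_bijective.1 hinj)
  refine prolong M hM (basePerm o') (basePerm_inj o') τ e.symm ?_ _ ?_ ?_
  · intro t
    have h1 := hcol (e.symm t)
    have h2 : col (e.symm t) = t := e.apply_symm_apply t
    rwa [h2] at h1
  · intro t
    have h2 : ((w - 10 : ℤ) : ℝ) ≤ _ := Int.cast_le.2 (ho' t)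
    push_cast at h2 ⊢
    linarith
  · have h2 : ((w - 10 : ℤ) : ℝ) ≤ _ := Int.cast_le.2 hs
    push_cast at h2 ⊢
    linarith

end blocks

lemma avg_perm {X : Type} [Fintype X] [DecidableEq X] (F : X → X → ℝ) (hF0 : ∀ x, F x x = 0)
    (hF : ∀ x y, 0 ≤ F x y) (p q : X) (hpq : p ≠ q) :
    (Fintype.card (Equiv.Perm X)) * (∑ x, ∑ y, F x y) ≤
      (Fintype.card X : ℝ) ^ 2 * ∑ σ : Equiv.Perm X, F (σ p) (σ q) := by
  have hle : ∀ p' q', ∑ σ : Equiv.Perm X, F (σ p') (σ q') ≤ ∑ σ : Equiv.Perm X, F (σ p) (σ q) := by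
    intro p' q'
    by_cases h : p' = q'
    · subst h
      simp only [hF0, Finset.sum_const_zero]
      exact Finset.sum_nonneg (fun σ _ => hF _ _)
    · let θ : Equiv.Perm X := Equiv.swap (Equiv.swap p p' q) q' * Equiv.swap p p'
      have h1 : θ p = p' := by
        simp only [θ, Equiv.Perm.mul_apply, Equiv.swap_apply_left]
        apply Equiv.swap_apply_of_ne_of_ne _ h
        intro h2
        apply hpq
        apply (Equiv.swap p p').injective
        rw [← h2, Equiv.swap_apply_left]
      have h2 : θ q = q' := by
        simp only [θ, Equiv.Perm.mul_apply, Equiv.swap_apply_left]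
      apply le_of_eq
      have := Equiv.sum_comp (Equiv.mulRight θ) (fun σ : Equiv.Perm X => F (σ p) (σ q))
      rw [← this]
      refine Finset.sum_congr rfl (fun σ _ => ?_)
      simp [h1, h2]
  have h3 : ∑ x, ∑ y, ∑ σ : Equiv.Perm X, F (σ x) (σ y) =
      (Fintype.card (Equiv.Perm X)) * (∑ x, ∑ y, F x y) := by
    have h4 : ∀ σ : Equiv.Perm X, ∑ x, ∑ y, F (σ x) (σ y) = ∑ x, ∑ y, F x y := by
      intro σ
      rw [Equiv.sum_comp σ (fun x => ∑ y, F x (σ y))]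
      exact Finset.sum_congr rfl (fun x _ => Equiv.sum_comp σ (fun y => F x y))
    calc ∑ x, ∑ y, ∑ σ : Equiv.Perm X, F (σ x) (σ y)
        = ∑ x, ∑ σ : Equiv.Perm X, ∑ y, F (σ x) (σ y) :=
          Finset.sum_congr rfl (fun x _ => Finset.sum_comm)
      _ = ∑ σ : Equiv.Perm X, ∑ x, ∑ y, F (σ x) (σ y) := Finset.sum_comm
      _ = _ := by simp [h4]
  rw [← h3]
  calc _ ≤ ∑ x : X, ∑ y : X, ∑ σ : Equiv.Perm X, F (σ p) (σ q) :=
        Finset.sum_le_sum (fun x _ => Finset.sum_le_sum (fun y _ => hle x y))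
    _ = _ := by simp; ring

lemma pair_perm {K : Type} [Fintype K] [DecidableEq K] (F : K × Bool → K × Bool → ℝ)
    (hF0 : ∀ x, F x x = 0) (hF : ∀ x y, 0 ≤ F x y) (g : ℝ)
    (hg : g * (2 * Fintype.card K) ^ 2 ≤ ∑ x, ∑ y, F x y) (hK : 0 < Fintype.card K) :
    ∃ σ : Equiv.Perm (K × Bool), g * Fintype.card K ≤ ∑ a : K, F (σ (a, false)) (σ (a, true)) := by
  have hm : (0 : ℝ) < Fintype.card K := by exact_mod_cast hK
  have h1 : ∀ a : K, g * (Fintype.card (Equiv.Perm (K × Bool))) ≤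
      ∑ σ : Equiv.Perm (K × Bool), F (σ (a, false)) (σ (a, true)) := by
    intro a
    have h2 := avg_perm F hF0 hF (a, false) (a, true) (by simp)
    have h3 : (Fintype.card (K × Bool) : ℝ) = 2 * Fintype.card K := by simp; ring
    rw [h3] at h2
    have h4 : (0 : ℝ) < (2 * (Fintype.card K : ℝ)) ^ 2 := by positivity
    have h5 := mul_le_mul_of_nonneg_left hg (Nat.cast_nonneg (α := ℝ) (Fintype.card (Equiv.Perm (K × Bool))))
    apply le_of_mul_le_mul_left _ h4
    linarith
  have h6 : ∑ σ : Equiv.Perm (K × Bool), g * Fintype.card K ≤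
      ∑ σ : Equiv.Perm (K × Bool), ∑ a : K, F (σ (a, false)) (σ (a, true)) := by
    rw [Finset.sum_comm]
    calc ∑ σ : Equiv.Perm (K × Bool), g * Fintype.card K
        = ∑ a : K, g * (Fintype.card (Equiv.Perm (K × Bool))) := by
          simp only [Finset.sum_const, Finset.card_univ, nsmul_eq_mul]; ring
      _ ≤ _ := Finset.sum_le_sum (fun a _ => h1 a)
  obtain ⟨σ, _, hσ⟩ := Finset.exists_le_of_sum_le ⟨1, mem_univ _⟩ h6
  exact ⟨σ, hσ⟩

/-- indicator of a nonzero alternating sum -/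
def ind {X Y : Type} (A : X → Y → ℤ) (i i' : X) (j j' : Y) : ℝ :=
  if curl A i i' j j' ≠ 0 then 1 else 0

lemma ind_nonneg {X Y : Type} (A : X → Y → ℤ) (i i' : X) (j j' : Y) : 0 ≤ ind A i i' j j' := by
  unfold ind; split_ifs <;> norm_num

lemma ind_row {X Y : Type} (A : X → Y → ℤ) (i : X) (j j' : Y) : ind A i i j j' = 0 := by
  unfold ind curl; rw [if_neg]; push Not; ring

lemma ind_col {X Y : Type} (A : X → Y → ℤ) (i i' : X) (j : Y) : ind A i i' j j = 0 := by
  unfold ind curl; rw [if_neg]; push Not; ring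

lemma ind_tri {X Y : Type} (A : X → Y → ℤ) (i i' : X) (u u' v : Y) :
    ind A i i' u u' ≤ ind A i i' u v + ind A i i' u' v := by
  unfold ind curl
  split_ifs <;> first | (exfalso; omega) | norm_num

lemma ind_swap {X Y : Type} (A : X → Y → ℤ) (i i' : X) (u u' : Y) :
    ind A i i' u u' = ind A i i' u' u := by
  unfold ind curl
  split_ifs <;> first | (exfalso; omega) | norm_num

lemma stage1 {K : Type} [Fintype K] [DecidableEq K] (A : K × Bool → K × Bool → ℤ) (γ : ℝ)
    (hK : 0 < Fintype.card K)
    (hA : γ * (2 * Fintype.card K) ^ 4 ≤ ∑ i, ∑ i', ∑ j, ∑ j', ind A i i' j j') :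
    ∃ σ κ : Equiv.Perm (K × Bool), γ * (Fintype.card K) ^ 2 ≤
      ∑ a : K, ∑ b : K, ind A (σ (a, false)) (σ (a, true)) (κ (b, false)) (κ (b, true)) := by
  obtain ⟨σ, hσ⟩ := pair_perm (fun i i' => ∑ j, ∑ j', ind A i i' j j')
    (fun i => by simp [ind_row])
    (fun i i' => Finset.sum_nonneg (fun j _ => Finset.sum_nonneg (fun j' _ => ind_nonneg _ _ _ _ _)))
    (γ * (2 * Fintype.card K) ^ 2) (by linarith) hK
  obtain ⟨κ, hκ⟩ := pair_perm
    (fun j j' => ∑ a : K, ind A (σ (a, false)) (σ (a, true)) j j')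
    (fun i => by simp [ind_col])
    (fun i i' => Finset.sum_nonneg (fun j _ => ind_nonneg _ _ _ _ _))
    (γ * Fintype.card K) (by
      have h1 : ∑ x, ∑ y, ∑ a : K, ind A (σ (a, false)) (σ (a, true)) x y =
          ∑ a : K, ∑ j, ∑ j', ind A (σ (a, false)) (σ (a, true)) j j' := by
        rw [Finset.sum_comm' (t' := univ) (s' := fun _ => univ) (by simp)]
        rw [Finset.sum_comm]
        calc _ = ∑ x, ∑ a : K, ∑ y, ind A (σ (a, false)) (σ (a, true)) x y :=
              Finset.sum_congr rfl (fun x _ => Finset.sum_comm)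
          _ = _ := Finset.sum_comm
      rw [h1]; linarith) hK
  refine ⟨σ, κ, ?_⟩
  rw [Finset.sum_comm]
  linarith

/-- bflip the second coordinate in the columns selected by `β` -/
def bflip {K : Type} (β : K → Bool) : Equiv.Perm (K × Bool) where
  toFun r := (r.1, xor r.2 (β r.1))
  invFun r := (r.1, xor r.2 (β r.1))
  left_inv r := by ext <;> simp
  right_inv r := by ext <;> simp

lemma ind_flip {K Y : Type} (A : Y → K × Bool → ℤ) (i i' : Y) (β : K → Bool) (b : K) :
    ind A i i' (bflip β (b, false)) (bflip β (b, true)) = ind A i i' (b, false) (b, true) := by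
  simp only [bflip, Equiv.coe_fn_mk]
  cases β b
  · rfl
  · exact ind_swap _ _ _ _ _

lemma flip_avg {K Y : Type} [Fintype K] [DecidableEq K] (A : Y → K × Bool → ℤ) (i i' : Y)
    (u v : K × Bool) (huv : u.1 ≠ v.1) :
    Fintype.card (K → Bool) * ind A i i' (u.1, false) (u.1, true) ≤
      2 * ∑ β : K → Bool, ind A i i' (bflip β u) (bflip β v) := by
  let T : Equiv.Perm (K → Bool) :=
    { toFun := fun β => Function.update β u.1 (!β u.1)
      invFun := fun β => Function.update β u.1 (!β u.1)
      left_inv := fun β => by simp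
      right_inv := fun β => by simp }
  have h1 := Equiv.sum_comp T (fun β : K → Bool => ind A i i' (bflip β u) (bflip β v))
  have h2 : ∀ β : K → Bool, ind A i i' (u.1, false) (u.1, true) ≤
      ind A i i' (bflip β u) (bflip β v) + ind A i i' (bflip (T β) u) (bflip (T β) v) := by
    intro β
    have h3 : bflip (T β) v = bflip β v := by
      simp only [bflip, T, Equiv.coe_fn_mk]
      rw [Function.update_of_ne huv.symm]
    have h4 : bflip (T β) u = (u.1, ! (bflip β u).2) := by
      simp [bflip, T, Equiv.coe_fn_mk]
    rw [h3]
    refine le_trans (le_of_eq ?_) (ind_tri A i i' _ _ _)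
    rw [h4]
    have h5 : bflip β u = (u.1, (bflip β u).2) := rfl
    rw [h5]
    cases (bflip β u).2
    · rfl
    · exact ind_swap _ _ _ _ _
  calc _ = ∑ β : K → Bool, ind A i i' (u.1, false) (u.1, true) := by simp
    _ ≤ _ := Finset.sum_le_sum (fun β _ => h2 β)
    _ = _ := by rw [Finset.sum_add_distrib, h1]; ring

lemma stage15 {K : Type} [Fintype K] [DecidableEq K] [CommRing K] [Nontrivial K]
    (A : K × Bool → K × Bool → ℤ) (τ : Equiv.Perm (K × Bool))
    (hτ : ∀ a x, (τ (a, x)).1 = a + a + bit x) (g : ℝ)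
    (hg : g ≤ ∑ i : K, ∑ b : K, ind A (i, false) (i, true) (b, false) (b, true)) :
    ∃ β : K → Bool, g / 2 ≤ ∑ i : K, ∑ a : K,
      ind A (i, false) (i, true) (bflip β (τ (a, false))) (bflip β (τ (a, true))) := by
  set N : ℝ := ((Fintype.card (K → Bool) : ℕ) : ℝ) with hN
  have hN0 : 0 ≤ N := by positivity
  have hne : ∀ a, (τ (a, false)).1 ≠ (τ (a, true)).1 := by
    intro a
    rw [hτ, hτ]
    simp [bit]
  have h1 : ∀ i a : K, N * ∑ x : Bool, ind A (i, false) (i, true) ((τ (a, x)).1, false) ((τ (a, x)).1, true) ≤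
      4 * ∑ β : K → Bool, ind A (i, false) (i, true) (bflip β (τ (a, false))) (bflip β (τ (a, true))) := by
    intro i a
    have ha := flip_avg A (i, false) (i, true) (τ (a, false)) (τ (a, true)) (hne a)
    have hb := flip_avg A (i, false) (i, true) (τ (a, true)) (τ (a, false)) (hne a).symm
    rw [Finset.sum_congr rfl (fun β _ => ind_swap A (i, false) (i, true) (bflip β (τ (a, true))) (bflip β (τ (a, false))))] at hb
    rw [Fintype.sum_bool]
    linarith
  have h2 : ∀ i : K, ∑ a : K, ∑ x : Bool, ind A (i, false) (i, true) ((τ (a, x)).1, false) ((τ (a, x)).1, true)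
      = 2 * ∑ b : K, ind A (i, false) (i, true) (b, false) (b, true) := by
    intro i
    rw [← Fintype.sum_prod_type' (f := fun a x => ind A (i, false) (i, true) ((τ (a, x)).1, false) ((τ (a, x)).1, true))]
    have := Equiv.sum_comp τ (fun r : K × Bool => ind A (i, false) (i, true) (r.1, false) (r.1, true))
    simp only [Prod.mk.eta]
    rw [this, Fintype.sum_prod_type]
    simp only [Fintype.sum_bool, Finset.mul_sum]
    refine Finset.sum_congr rfl (fun x _ => by ring)
  have h3 : ∑ β : K → Bool, g / 2 ≤ ∑ β : K → Bool, ∑ i : K, ∑ a : K,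
      ind A (i, false) (i, true) (bflip β (τ (a, false))) (bflip β (τ (a, true))) := by
    have h4 : ∑ β : K → Bool, ∑ i : K, ∑ a : K,
      ind A (i, false) (i, true) (bflip β (τ (a, false))) (bflip β (τ (a, true))) =
      ∑ i : K, ∑ a : K, ∑ β : K → Bool,
      ind A (i, false) (i, true) (bflip β (τ (a, false))) (bflip β (τ (a, true))) := by
      rw [Finset.sum_comm]
      exact Finset.sum_congr rfl (fun i _ => Finset.sum_comm)
    rw [h4]
    have h5 : N * (2 * ∑ i : K, ∑ b : K, ind A (i, false) (i, true) (b, false) (b, true)) ≤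
       4 * ∑ i : K, ∑ a : K, ∑ β : K → Bool,
      ind A (i, false) (i, true) (bflip β (τ (a, false))) (bflip β (τ (a, true))) := by
      rw [Finset.mul_sum, Finset.mul_sum, Finset.mul_sum]
      refine Finset.sum_le_sum (fun i _ => ?_)
      rw [← h2, Finset.mul_sum, Finset.mul_sum]
      exact Finset.sum_le_sum (fun a _ => h1 i a)
    have h6 : ∑ β : K → Bool, g / 2 = N * (g / 2) := by simp [hN]
    rw [h6]
    nlinarith
  obtain ⟨β, _, hβ⟩ := Finset.exists_le_of_sum_le ⟨fun _ => true, mem_univ _⟩ h3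
  exact ⟨β, hβ⟩

lemma count_zero {Z : Type} [Fintype Z] (f : Z → ℤ) :
    ((univ.filter fun z => decide (f z = 0) = true).card : ℝ) =
      Fintype.card Z - ∑ z, (if f z ≠ 0 then (1 : ℝ) else 0) := by
  have h1 : ∀ z, (if f z ≠ 0 then (1 : ℝ) else 0) =
      1 - (if decide (f z = 0) = true then (1 : ℝ) else 0) := by
    intro z
    by_cases h : f z = 0 <;> simp [h]
  rw [Finset.sum_congr rfl (fun z _ => h1 z), Finset.sum_sub_distrib, Finset.sum_boole]
  simp

lemma count_nonzero {Z : Type} [Fintype Z] (f : Z → ℤ) :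
    ((univ.filter fun z => f z ≠ 0).card : ℝ) =
      Fintype.card Z - ((univ.filter fun z => decide (f z = 0) = true).card : ℝ) := by
  rw [count_zero, ← Finset.sum_boole]; ring

lemma curl_row_swap {X Y : Type} (A : X → Y → ℤ) (i i' : X) (j j' : Y) :
    curl A i i' j j' = - curl A i' i j j' := by
  unfold curl; ring

lemma pipeline (γ : ℝ) (hγ : 0 < γ) (hγ1 : γ ≤ 1) :
    ∃ m₀ : ℕ, ∀ (K : Type) [Fintype K] [DecidableEq K] [CommRing K] [Nontrivial K],
      m₀ ≤ Fintype.card K → ∀ (τ : Equiv.Perm (K × Bool)),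
      (∀ a x, (τ (a, x)).1 = a + a + bit x) →
      ∀ A : K × Bool → K × Bool → ℤ, (∀ i j, A i j = 1 ∨ A i j = -1) →
      γ * (2 * Fintype.card K) ^ 4 ≤ ∑ i, ∑ i', ∑ j, ∑ j', ind A i i' j j' →
      ∃ (σ κ : Equiv.Perm (K × Bool)) (w : ℤ), γ / 4 * Fintype.card K ≤ w ∧
        (∀ s : K, w ≤ ((univ.filter fun a : K =>
          curl (fun i j => A (σ i) (κ j)) (a, false) (a, true) (a + s, false) (a + s, true) ≠ 0).card : ℤ)) ∧
        w - 10 ≤ 2 * |∑ i, A (σ i) (κ (τ i))| := by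
  obtain ⟨m₀, hm₀⟩ := exists_perm (γ / 4) (by positivity)
  refine ⟨m₀ + 1, ?_⟩
  intro K _ _ _ _ hK τ hτ A hA hQ
  obtain ⟨σ₁, κ₁, h1⟩ := stage1 A γ (by omega) hQ
  set A1 : K × Bool → K × Bool → ℤ := fun i j => A (σ₁ i) (κ₁ j) with hA1
  have h1' : γ * (Fintype.card K) ^ 2 ≤
      ∑ i : K, ∑ b : K, ind A1 (i, false) (i, true) (b, false) (b, true) := h1
  obtain ⟨β, hβ⟩ := stage15 A1 τ hτ _ h1'
  set A2 : K × Bool → K × Bool → ℤ := fun i j => A1 i (bflip β j) with hA2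
  have hb1 : γ * (Fintype.card K) ^ 2 ≤
      ∑ i : K, ∑ b : K, ind A2 (i, false) (i, true) (b, false) (b, true) := by
    refine h1'.trans (le_of_eq ?_)
    refine Finset.sum_congr rfl (fun i _ => Finset.sum_congr rfl (fun b _ => ?_))
    exact (ind_flip A1 (i, false) (i, true) β b).symm
  have hb2 : γ * (Fintype.card K) ^ 2 / 2 ≤ ∑ i : K, ∑ a : K,
      ind A2 (i, false) (i, true) (τ (a, false)) (τ (a, true)) := hβ
  let f : Option K → K → K → ℤ := fun t a i => match t with
    | some s => curl A2 (i, false) (i, true) (a + s, false) (a + s, true)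
    | none => curl A2 (i, false) (i, true) (τ (a, false)) (τ (a, true))
  have hcount : ∀ t, ((univ.filter fun p : K × K => decide (f t p.1 p.2 = 0) = true).card : ℝ) ≤
      (1 - γ / 2) * (Fintype.card K) ^ 2 := by
    intro t
    rw [count_zero (fun p : K × K => f t p.1 p.2), Fintype.sum_prod_type, Finset.sum_comm,
      Fintype.card_prod]
    push_cast
    rcases t with _ | s
    · have : ∑ i : K, ∑ a : K, (if f none a i ≠ 0 then (1 : ℝ) else 0) = ∑ i : K, ∑ a : K,
        ind A2 (i, false) (i, true) (τ (a, false)) (τ (a, true)) := rfl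
      rw [this]
      linarith
    · have : ∑ i : K, ∑ a : K, (if f (some s) a i ≠ 0 then (1 : ℝ) else 0) =
          ∑ i : K, ∑ b : K, ind A2 (i, false) (i, true) (b, false) (b, true) := by
        refine Finset.sum_congr rfl (fun i _ => ?_)
        exact Equiv.sum_comp (Equiv.addRight s)
          (fun b => ind A2 (i, false) (i, true) (b, false) (b, true))
      rw [this]
      have : (0 : ℝ) ≤ γ * (Fintype.card K : ℝ) ^ 2 := by positivity
      linarith
  obtain ⟨ρ, hρ⟩ := hm₀ K (Option K) (by omega) (by simp)
    (fun t a i => decide (f t a i = 0)) (1 - γ / 2) (by linarith) hcount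
  set w : ℤ := ⌈γ / 4 * (Fintype.card K : ℝ)⌉ with hw
  have hcnt : ∀ t, w ≤ ((univ.filter fun a : K => f t a (ρ a) ≠ 0).card : ℤ) := by
    intro t
    rw [hw, Int.ceil_le]
    have h2 := count_nonzero (fun a : K => f t a (ρ a))
    have h3 := hρ t
    push_cast
    rw [h2]
    linarith
  let P : K → ℤ := fun a => A2 (ρ a, false) (τ (a, false)) + A2 (ρ a, true) (τ (a, true))
  let Q : K → ℤ := fun a => A2 (ρ a, true) (τ (a, false)) + A2 (ρ a, false) (τ (a, true))
  have hA2pm : ∀ i j, A2 i j = 1 ∨ A2 i j = -1 := fun i j => hA _ _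
  have hpm := fun a : K => pm_parity (hA2pm (ρ a, false) (τ (a, false))) (hA2pm (ρ a, true) (τ (a, true)))
    (hA2pm (ρ a, true) (τ (a, false))) (hA2pm (ρ a, false) (τ (a, true)))
  obtain ⟨o, ho⟩ := two_choice P Q (fun a => (hpm a).1) (fun a => (hpm a).2.1)
    (fun a => (hpm a).2.2) 0
  have ho1 := (ho o (fun _ _ => rfl)).1
  let R : Equiv.Perm (K × Bool) := (bflip o).trans (Equiv.prodCongr ρ (Equiv.refl Bool))
  have hR : ∀ a x, R (a, x) = (ρ a, xor x (o a)) := fun a x => rfl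
  refine ⟨R.trans σ₁, (bflip β).trans κ₁, w, Int.le_ceil _, ?_, ?_⟩
  · intro s
    refine (hcnt (some s)).trans (le_of_eq ?_)
    congr 2
    refine Finset.filter_congr (fun a _ => ?_)
    have h4 : curl (fun i j => A ((R.trans σ₁) i) (((bflip β).trans κ₁) j)) (a, false) (a, true)
      (a + s, false) (a + s, true) = curl A2 (R (a, false)) (R (a, true)) (a + s, false) (a + s, true) := rfl
    rw [h4, hR, hR]
    simp only [f]
    cases o a
    · simp
    · rw [curl_row_swap]; simp
  · have h5 : ∑ i, A ((R.trans σ₁) i) (((bflip β).trans κ₁) (τ i)) = ∑ i, A2 (R i) (τ i) := rfl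
    have h6 : ∑ i, A2 (R i) (τ i) = ∑ a, if o a then Q a else P a := by
      rw [Fintype.sum_prod_type]
      refine Finset.sum_congr rfl (fun a _ => ?_)
      rw [Fintype.sum_bool, hR, hR]
      cases o a <;> simp [P, Q, add_comm]
    rw [h5, h6]
    refine le_trans ?_ ho1
    have h7 : (univ.filter fun a => P a ≠ Q a) = (univ.filter fun a : K => f none a (ρ a) ≠ 0) := by
      refine Finset.filter_congr (fun a _ => ?_)
      simp only [f, P, Q, curl]
      rw [not_iff_not]
      constructor <;> intro h <;> linarith
    rw [h7]
    linarith [hcnt none]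

lemma exists_tau (m : ℕ) [NeZero m] : ∃ τ : Equiv.Perm (ZMod m × Bool),
    ∀ a x, (τ (a, x)).1 = a + a + bit x := by
  let nn : ZMod m × Bool → ℕ := fun r => 2 * r.1.val + (if r.2 then 1 else 0)
  have hlt : ∀ r, nn r < 2 * m := by
    intro r
    have := ZMod.val_lt r.1
    simp only [nn]
    split_ifs <;> omega
  let T : ZMod m × Bool → ZMod m × Bool := fun r => ((nn r : ZMod m), decide (m ≤ nn r))
  have hinj : Function.Injective T := by
    intro r r' h
    simp only [T, Prod.mk.injEq, decide_eq_decide] at h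
    have h1 := (ZMod.natCast_eq_natCast_iff' _ _ _).1 h.1
    have hr := hlt r
    have hr' := hlt r'
    have h2 : nn r = nn r' := by
      by_cases hm : m ≤ nn r
      · have hm' := h.2.1 hm
        rw [Nat.mod_eq_sub_mod hm, Nat.mod_eq_sub_mod hm', Nat.mod_eq_of_lt (by omega),
          Nat.mod_eq_of_lt (by omega)] at h1
        omega
      · have hm' : ¬ m ≤ nn r' := fun h' => hm (h.2.2 h')
        rw [Nat.mod_eq_of_lt (by omega), Nat.mod_eq_of_lt (by omega)] at h1
        exact h1
    obtain ⟨a, x⟩ := r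
    obtain ⟨a', x'⟩ := r'
    simp only [nn] at h2
    have h3 : a.val = a'.val ∧ x = x' := by
      cases x <;> cases x' <;> simp at h2 ⊢ <;> omega
    rw [ZMod.val_injective m h3.1, h3.2]
  refine ⟨Equiv.ofBijective T (Finite.injective_iff_bijective.1 hinj), fun a x => ?_⟩
  simp only [Equiv.ofBijective_apply, T, nn, bit]
  push_cast
  rw [ZMod.natCast_zmod_val]
  cases x <;> simp <;> ring

/-- `M` differs from a one-sided signing in at most `E` entries. -/
def Close {X : Type} [Fintype X] (M : X → X → ℤ) (E : ℝ) : Prop :=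
  ∃ z : X → ℤ, (∀ i, z i = 1 ∨ z i = -1) ∧
    ((∑ i, ∑ j, (if M i j ≠ z i then (1 : ℝ) else 0)) ≤ E ∨
     (∑ i, ∑ j, (if M i j ≠ z j then (1 : ℝ) else 0)) ≤ E)

lemma Close.transport {X Y : Type} [Fintype X] [Fintype Y] {M : Y → Y → ℤ} {E : ℝ} (e : X ≃ Y)
    (h : Close (fun i j => M (e i) (e j)) E) : Close M E := by
  obtain ⟨z, hz, h⟩ := h
  refine ⟨fun y => z (e.symm y), fun i => hz _, ?_⟩
  have hsum : ∀ f : Y → Y → ℝ, ∑ i, ∑ j, f i j = ∑ i, ∑ j, f (e i) (e j) := by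
    intro f
    rw [← Equiv.sum_comp e]
    exact Finset.sum_congr rfl (fun i _ => (Equiv.sum_comp e _).symm)
  rw [hsum, hsum]
  simpa using h

lemma Close.option {X : Type} [Fintype X] {M : Option X → Option X → ℤ} {E : ℝ}
    (h : Close (fun i j => M (some i) (some j)) E) :
    Close M (E + (2 * Fintype.card X + 1)) := by
  obtain ⟨z, hz, h⟩ := h
  have hite : ∀ (p : Prop) [Decidable p], (if p then (1 : ℝ) else 0) ≤ 1 := by
    intro p _; split_ifs <;> norm_num
  have hsum : ∀ (p : X → Prop) [DecidablePred p], ∑ x, (if p x then (1 : ℝ) else 0) ≤ Fintype.card X := by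
    intro p _
    calc _ ≤ ∑ x : X, (1 : ℝ) := Finset.sum_le_sum (fun x _ => hite _)
      _ = _ := by simp
  refine ⟨fun y => match y with | none => 1 | some x => z x, ?_, ?_⟩
  · rintro (_ | x)
    · left; rfl
    · exact hz x
  · rcases h with h | h
    · left
      simp only [Fintype.sum_option, Finset.sum_add_distrib]
      linarith [hite (M none none ≠ 1), hsum (fun j => M none (some j) ≠ 1),
        hsum (fun i => M (some i) none ≠ z i)]
    · right
      simp only [Fintype.sum_option, Finset.sum_add_distrib]
      linarith [hite (M none none ≠ 1), hsum (fun j => M none (some j) ≠ z j),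
        hsum (fun i => M (some i) none ≠ 1)]

lemma structure_lemma {X : Type} [Fintype X] [DecidableEq X] [Nonempty X] (A : X → X → ℤ)
    (hA : ∀ i j, A i j = 1 ∨ A i j = -1) (θ : ℝ) (hθ : 0 ≤ θ) (hθ1 : θ ≤ 1)
    (hQ : ∑ i, ∑ i', ∑ j, ∑ j', ind A i i' j j' ≤ θ ^ 2 * (Fintype.card X) ^ 4) :
    Close A (2 * θ * (Fintype.card X) ^ 2) := by
  set N : ℝ := (Fintype.card X : ℝ) with hN
  have hN0 : 0 ≤ N := by positivity
  have h1 : ∃ i₀ j₀ : X, ∑ i, ∑ j, ind A i₀ i j₀ j ≤ θ ^ 2 * N ^ 2 := by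
    by_contra hcon
    push Not at hcon
    have h2 : ∑ i₀ : X, ∑ j₀ : X, θ ^ 2 * N ^ 2 < ∑ i₀ : X, ∑ j₀ : X, ∑ i, ∑ j, ind A i₀ i j₀ j := by
      apply Finset.sum_lt_sum_of_nonempty Finset.univ_nonempty
      intro i₀ _
      apply Finset.sum_lt_sum_of_nonempty Finset.univ_nonempty
      intro j₀ _
      exact hcon i₀ j₀
    have h3 : ∑ i₀ : X, ∑ j₀ : X, ∑ i, ∑ j, ind A i₀ i j₀ j = ∑ i, ∑ i', ∑ j, ∑ j', ind A i i' j j' :=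
      Finset.sum_congr rfl (fun i _ => Finset.sum_comm)
    rw [h3] at h2
    simp only [Finset.sum_const, Finset.card_univ, nsmul_eq_mul] at h2
    rw [← hN] at h2
    nlinarith
  obtain ⟨i₀, j₀, hb⟩ := h1
  set p : ℝ := ∑ i, (if A i j₀ ≠ A i₀ j₀ then (1 : ℝ) else 0) with hp
  set q : ℝ := ∑ j, (if A i₀ j ≠ A i₀ j₀ then (1 : ℝ) else 0) with hq
  have hpq : p * q ≤ θ ^ 2 * N ^ 2 := by
    refine le_trans ?_ hb
    rw [hp, hq, Finset.sum_mul_sum]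
    refine Finset.sum_le_sum (fun i _ => Finset.sum_le_sum (fun j _ => ?_))
    unfold ind curl
    have ha := hA i j
    have hb := hA i j₀
    have hc := hA i₀ j
    have hd := hA i₀ j₀
    split_ifs <;> first | (exfalso; omega) | norm_num
  have hor : p ≤ θ * N ∨ q ≤ θ * N := by
    by_contra hcon
    push Not at hcon
    have : 0 ≤ θ * N := by positivity
    nlinarith
  have hθ2 : θ ^ 2 * N ^ 2 ≤ θ * N ^ 2 := by
    have : θ ^ 2 ≤ θ := by nlinarith
    exact mul_le_mul_of_nonneg_right this (by positivity)
  rcases hor with h | h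
  · refine ⟨fun j => A i₀ j, fun j => hA _ _, Or.inr ?_⟩
    calc ∑ i, ∑ j, (if A i j ≠ A i₀ j then (1 : ℝ) else 0)
        ≤ ∑ i, ∑ j, (ind A i₀ i j₀ j + (if A i j₀ ≠ A i₀ j₀ then (1 : ℝ) else 0)) := by
          refine Finset.sum_le_sum (fun i _ => Finset.sum_le_sum (fun j _ => ?_))
          unfold ind curl
          split_ifs <;> first | (exfalso; omega) | norm_num
      _ = ∑ i, ∑ j, ind A i₀ i j₀ j + N * p := by
          simp only [Finset.sum_add_distrib, Finset.sum_const, Finset.card_univ, nsmul_eq_mul]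
          rw [← Finset.mul_sum]
      _ ≤ _ := by nlinarith
  · refine ⟨fun i => A i j₀, fun j => hA _ _, Or.inl ?_⟩
    calc ∑ i, ∑ j, (if A i j ≠ A i j₀ then (1 : ℝ) else 0)
        ≤ ∑ i, ∑ j, (ind A i₀ i j₀ j + (if A i₀ j ≠ A i₀ j₀ then (1 : ℝ) else 0)) := by
          refine Finset.sum_le_sum (fun i _ => Finset.sum_le_sum (fun j _ => ?_))
          unfold ind curl
          split_ifs <;> first | (exfalso; omega) | norm_num
      _ = ∑ i, ∑ j, ind A i₀ i j₀ j + N * q := by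
          simp only [Finset.sum_add_distrib, Finset.sum_const, Finset.card_univ, nsmul_eq_mul]
          rw [hN]
      _ ≤ _ := by nlinarith

lemma balance (n : ℕ) (z : Fin n → ℤ) (hz : ∀ i, z i = 1 ∨ z i = -1) :
    ∃ z' : Fin n → ℤ, IsBalanced n z' ∧
      2 * (∑ i, (if z i ≠ z' i then (1 : ℝ) else 0)) ≤ |((∑ i, z i : ℤ) : ℝ)| + 2 := by
  set P := univ.filter fun i => z i = 1 with hP
  have hPn : P.card ≤ n := by simpa using Finset.card_le_univ P
  have hS : ∑ i, z i = 2 * (P.card : ℤ) - n := by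
    have h1 : ∀ i, z i = 2 * (if z i = 1 then 1 else 0) - 1 := by
      intro i
      rcases hz i with h | h <;> rw [h] <;> norm_num
    rw [Finset.sum_congr rfl (fun i _ => h1 i), Finset.sum_sub_distrib, ← Finset.mul_sum,
      Finset.sum_boole]
    simp [hP]
  have hT : ∃ T : Finset (Fin n), T.card = n / 2 ∧ (T ⊆ P ∨ P ⊆ T) := by
    rcases le_total (n / 2) P.card with h | h
    · obtain ⟨T, h1, h2⟩ := Finset.exists_subset_card_eq h
      exact ⟨T, h2, Or.inl h1⟩
    · obtain ⟨T, h1, _, h2⟩ := Finset.exists_subsuperset_card_eq (Finset.subset_univ P) h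
        (by simp; omega)
      exact ⟨T, h2, Or.inr h1⟩
  obtain ⟨T, hTc, hTP⟩ := hT
  refine ⟨fun i => if i ∈ T then 1 else -1, ⟨?_, ?_⟩, ?_⟩
  · intro i
    by_cases h : i ∈ T <;> simp [h]
  · have h1 : (univ.filter fun i => (if i ∈ T then (1 : ℤ) else -1) = 1) = T := by
      ext i
      by_cases h : i ∈ T <;> simp [h]
    have h2 : (univ.filter fun i => (if i ∈ T then (1 : ℤ) else -1) = -1) = Tᶜ := by
      ext i
      by_cases h : i ∈ T <;> simp [h]
    rw [h1, h2, Finset.card_compl, hTc, Fintype.card_fin, abs_le]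
    constructor <;> omega
  · rw [hS]
    have hd : ∀ U V : Finset (Fin n), U ⊆ V → (∀ i, (z i ≠ (if i ∈ T then 1 else -1)) → i ∈ V \ U) →
        ∑ i, (if z i ≠ (if i ∈ T then 1 else -1) then (1 : ℝ) else 0) ≤ V.card - U.card := by
      intro U V hUV h
      rw [Finset.sum_boole]
      have h1 := Finset.card_le_card (show (univ.filter fun i => z i ≠ (if i ∈ T then 1 else -1)) ⊆ V \ U
        from fun i hi => h i (by simpa using hi))
      have h2 := Finset.card_sdiff_add_card_eq_card hUV
      have h3 : ((univ.filter fun i => z i ≠ (if i ∈ T then 1 else -1)).card : ℝ) ≤ (V \ U).card := by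
        exact_mod_cast h1
      have h4 : ((V \ U).card : ℝ) + U.card = V.card := by exact_mod_cast h2
      linarith
    have hmem : ∀ i, i ∈ P ↔ z i = 1 := fun i => by simp [hP]
    have hk1 : (n : ℝ) ≤ 2 * T.card + 1 := by
      rw [hTc]; have : n ≤ 2 * (n / 2) + 1 := by omega
      exact_mod_cast this
    have hk2 : 2 * (T.card : ℝ) ≤ n := by
      rw [hTc]; have : 2 * (n / 2) ≤ n := by omega
      exact_mod_cast this
    push_cast
    rcases hTP with h | h
    · have := hd T P h (by
        intro i hi
        rw [Finset.mem_sdiff, hmem]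
        by_cases hiT : i ∈ T
        · simp only [hiT, if_true] at hi
          exact absurd ((hmem i).1 (h hiT)) hi
        · simp only [hiT, if_false] at hi
          exact ⟨(hz i).resolve_right hi, hiT⟩)
      have h2 := le_abs_self (2 * (P.card : ℝ) - n)
      linarith
    · have := hd P T h (by
        intro i hi
        rw [Finset.mem_sdiff, hmem]
        by_cases hiT : i ∈ T
        · simp only [hiT, if_true] at hi
          exact ⟨hiT, hi⟩
        · simp only [hiT, if_false] at hi
          exact absurd (h ((hmem i).2 ((hz i).resolve_right hi))) hiT)
      have h2 := neg_le_abs (2 * (P.card : ℝ) - n)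
      linarith

lemma rows_close (n : ℕ) (M : Fin n → Fin n → ℤ) (hM : ∀ i j, M i j = 1 ∨ M i j = -1)
    (z : Fin n → ℤ) (hz : ∀ i, z i = 1 ∨ z i = -1) (E δ : ℝ)
    (hE : ∑ i, ∑ j, (if M i j ≠ z i then (1 : ℝ) else 0) ≤ E)
    (hS : |((∑ i, ∑ j, M i j : ℤ) : ℝ)| ≤ δ * n ^ 2) :
    ∃ z' : Fin n → ℤ, IsBalanced n z' ∧
      ∑ i, ∑ j, (if M i j ≠ z' i then (1 : ℝ) else 0) ≤ 2 * E + δ / 2 * n ^ 2 + n := by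
  obtain ⟨z', hz', hd⟩ := balance n z hz
  refine ⟨z', hz', ?_⟩
  set D := ∑ i, (if z i ≠ z' i then (1 : ℝ) else 0) with hD
  have h1 : ∑ i, ∑ j, (if M i j ≠ z' i then (1 : ℝ) else 0) ≤ E + n * D := by
    calc _ ≤ ∑ i, ∑ j, ((if M i j ≠ z i then (1 : ℝ) else 0) + (if z i ≠ z' i then (1 : ℝ) else 0)) := by
          refine Finset.sum_le_sum (fun i _ => Finset.sum_le_sum (fun j _ => ?_))
          split_ifs <;> first | (exfalso; omega) | norm_num
      _ = ∑ i, ∑ j, (if M i j ≠ z i then (1 : ℝ) else 0) + n * D := by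
          simp only [Finset.sum_add_distrib, Finset.sum_const, Finset.card_univ, nsmul_eq_mul,
            Fintype.card_fin]
          rw [← Finset.mul_sum]
      _ ≤ _ := by linarith
  have h2 : |(n : ℝ) * ((∑ i, z i : ℤ) : ℝ) - ((∑ i, ∑ j, M i j : ℤ) : ℝ)| ≤ 2 * E := by
    have h3 : (n : ℝ) * ((∑ i, z i : ℤ) : ℝ) - ((∑ i, ∑ j, M i j : ℤ) : ℝ) =
        ∑ i, ∑ j, ((z i : ℝ) - (M i j : ℝ)) := by
      push_cast
      simp only [Finset.sum_sub_distrib, Finset.sum_const, Finset.card_univ, nsmul_eq_mul,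
            Fintype.card_fin]
      rw [← Finset.mul_sum]
    rw [h3]
    calc _ ≤ ∑ i, |∑ j, ((z i : ℝ) - (M i j : ℝ))| := Finset.abs_sum_le_sum_abs _ _
      _ ≤ ∑ i, ∑ j, |((z i : ℝ) - (M i j : ℝ))| :=
          Finset.sum_le_sum (fun i _ => Finset.abs_sum_le_sum_abs _ _)
      _ ≤ ∑ i, ∑ j, 2 * (if M i j ≠ z i then (1 : ℝ) else 0) := by
          refine Finset.sum_le_sum (fun i _ => Finset.sum_le_sum (fun j _ => ?_))
          rcases hz i with h | h <;> rcases hM i j with h' | h' <;> rw [h, h'] <;> norm_num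
      _ = 2 * ∑ i, ∑ j, (if M i j ≠ z i then (1 : ℝ) else 0) := by
          simp only [← Finset.mul_sum]
      _ ≤ _ := by linarith
  have h4 : (n : ℝ) * |((∑ i, z i : ℤ) : ℝ)| ≤ 2 * E + δ * n ^ 2 := by
    have h5 := abs_sub_abs_le_abs_sub ((n : ℝ) * ((∑ i, z i : ℤ) : ℝ)) ((∑ i, ∑ j, M i j : ℤ) : ℝ)
    rw [abs_mul, abs_of_nonneg (Nat.cast_nonneg (α := ℝ) n)] at h5
    linarith
  have hn : (0 : ℝ) ≤ n := by positivity
  nlinarith [mul_le_mul_of_nonneg_left hd hn]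

/-- The dichotomy on the even index set. -/
lemma dich_even (γ θ : ℝ) (hθ : 0 < θ) (hθ1 : θ ≤ 1) (hγ : γ = θ ^ 2) :
    ∃ m₀ : ℕ, ∀ m : ℕ, m₀ ≤ m → ∀ [NeZero m], ∀ A : ZMod m × Bool → ZMod m × Bool → ℤ,
      (∀ i j, A i j = 1 ∨ A i j = -1) →
      Fac A (γ / 8 * m - 8) ∨ Close A (2 * θ * (2 * m : ℝ) ^ 2) := by
  have hγ0 : 0 < γ := by rw [hγ]; positivity
  have hγ1 : γ ≤ 1 := by rw [hγ]; nlinarith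
  obtain ⟨m₀, h₀⟩ := pipeline γ hγ0 hγ1
  refine ⟨max m₀ 2, fun m hm _ A hA => ?_⟩
  have : Fact (1 < m) := ⟨lt_of_lt_of_le one_lt_two ((le_max_right _ _).trans hm)⟩
  obtain ⟨τ, hτ⟩ := exists_tau m
  have hcard : (Fintype.card (ZMod m × Bool) : ℝ) = 2 * m := by
    simp [ZMod.card, mul_comm]
  by_cases hQ : γ * (2 * m : ℝ) ^ 4 ≤ ∑ i, ∑ i', ∑ j, ∑ j', ind A i i' j j'
  · left
    obtain ⟨σ, κ, w, hw1, hw2, -⟩ := h₀ (ZMod m)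
      (by rw [ZMod.card]; exact (le_max_left _ _).trans hm) τ hτ A hA
      (by rw [ZMod.card]; exact hQ)
    rw [ZMod.card] at hw1
    refine Fac.transport A _ σ κ ?_
    refine Fac.mono ?_ (fac_even (fun i j => A (σ i) (κ j)) (fun i j => hA _ _) w hw2)
    linarith
  · right
    have := structure_lemma A hA θ hθ.le hθ1 (by rw [hcard, ← hγ]; exact (not_le.1 hQ).le)
    rwa [hcard] at this

/-- The dichotomy on the odd index set. -/
lemma dich_odd (γ θ : ℝ) (hθ : 0 < θ) (hθ1 : θ ≤ 1) (hγ : γ = θ ^ 2) :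
    ∃ m₀ : ℕ, ∀ m : ℕ, m₀ ≤ m → ∀ [NeZero m],
      ∀ A : Option (ZMod m × Bool) → Option (ZMod m × Bool) → ℤ,
      (∀ i j, A i j = 1 ∨ A i j = -1) →
      Fac A (γ / 8 * m - 8) ∨ Close A (2 * θ * (2 * m : ℝ) ^ 2 + (2 * (2 * m) + 1)) := by
  have hγ0 : 0 < γ := by rw [hγ]; positivity
  have hγ1 : γ ≤ 1 := by rw [hγ]; nlinarith
  obtain ⟨m₀, h₀⟩ := pipeline γ hγ0 hγ1
  refine ⟨max m₀ 2, fun m hm _ A hA => ?_⟩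
  have : Fact (1 < m) := ⟨lt_of_lt_of_le one_lt_two ((le_max_right _ _).trans hm)⟩
  obtain ⟨τ, hτ⟩ := exists_tau m
  have hcard : (Fintype.card (ZMod m × Bool) : ℝ) = 2 * m := by
    simp [ZMod.card, mul_comm]
  by_cases hQ : γ * (2 * m : ℝ) ^ 4 ≤
      ∑ i, ∑ i', ∑ j, ∑ j', ind (fun i j => A (some i) (some j)) i i' j j'
  · left
    obtain ⟨σ, κ, w, hw1, hw2, hw3⟩ := h₀ (ZMod m)
      (by rw [ZMod.card]; exact (le_max_left _ _).trans hm) τ hτ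
      (fun i j => A (some i) (some j)) (fun _ _ => hA _ _)
      (by rw [ZMod.card]; exact hQ)
    rw [ZMod.card] at hw1
    refine Fac.transport A _ (Equiv.optionCongr σ) (Equiv.optionCongr κ) ?_
    refine Fac.mono ?_ (fac_odd (fun i j => A (Equiv.optionCongr σ i) (Equiv.optionCongr κ j))
      (fun i j => hA _ _) w (by simpa using hw2) τ hτ (by simpa using hw3))
    linarith
  · right
    have := structure_lemma (fun i j => A (some i) (some j)) (fun _ _ => hA _ _) θ hθ.le hθ1
      (by rw [hcard, ← hγ]; exact (not_le.1 hQ).le)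
    have := Close.option this
    rwa [hcard] at this

lemma Close.mono {X : Type} [Fintype X] {M : X → X → ℤ} {E E' : ℝ} (hE : E ≤ E')
    (h : Close M E) : Close M E' := by
  obtain ⟨z, hz, h | h⟩ := h
  · exact ⟨z, hz, Or.inl (h.trans hE)⟩
  · exact ⟨z, hz, Or.inr (h.trans hE)⟩

lemma dich (γ θ : ℝ) (hθ : 0 < θ) (hθ1 : θ ≤ 1) (hγ : γ = θ ^ 2) :
    ∃ n₀ : ℕ, ∀ n : ℕ, n₀ ≤ n → ∀ M : Fin n → Fin n → ℤ,
      (∀ i j, M i j = 1 ∨ M i j = -1) →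
      Fac M (γ / 6400 * n) ∨ Close M (2 * θ * n ^ 2 + 2 * n) := by
  have hγ0 : 0 < γ := by rw [hγ]; positivity
  obtain ⟨m₁, h₁⟩ := dich_even γ θ hθ hθ1 hγ
  obtain ⟨m₂, h₂⟩ := dich_odd γ θ hθ hθ1 hγ
  obtain ⟨m₃, h₃⟩ := exists_nat_ge (100 / γ)
  refine ⟨2 * (m₁ + m₂ + m₃ + 2), fun n hn M hM => ?_⟩
  obtain ⟨m, hm⟩ := Nat.even_or_odd' n
  have hm0 : m₁ + m₂ + m₃ + 1 ≤ m := by omega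
  have : NeZero m := ⟨by omega⟩
  have hbig : 100 ≤ γ * m := by
    have h4 : (m₃ : ℝ) ≤ m := by exact_mod_cast (by omega : m₃ ≤ m)
    have h5 := (div_le_iff₀ hγ0).1 (h₃.trans h4)
    linarith
  have hm1 : (1 : ℝ) ≤ m := by exact_mod_cast (by omega : 1 ≤ m)
  have hgm : γ ≤ γ * m := by nlinarith
  rcases hm with hm | hm
  · have e : (ZMod m × Bool) ≃ Fin n := Fintype.equivOfCardEq (by simp [ZMod.card]; omega)
    have hn' : (n : ℝ) = 2 * m := by exact_mod_cast hm
    rcases h₁ m (by omega) (fun i j => M (e i) (e j)) (fun _ _ => hM _ _) with h | h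
    · left
      refine Fac.mono ?_ (Fac.transport M _ e e h)
      rw [hn']; nlinarith
    · right
      refine Close.mono ?_ (Close.transport e h)
      rw [hn']; linarith
  · have e : Option (ZMod m × Bool) ≃ Fin n :=
      Fintype.equivOfCardEq (by simp [ZMod.card]; omega)
    have hn' : (n : ℝ) = 2 * m + 1 := by exact_mod_cast hm
    rcases h₂ m (by omega) (fun i j => M (e i) (e j)) (fun _ _ => hM _ _) with h | h
    · left
      refine Fac.mono ?_ (Fac.transport M _ e e h)
      rw [hn']; nlinarith
    · right
      refine Close.mono ?_ (Close.transport e h)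
      rw [hn']; nlinarith

lemma card_eq_sum (n : ℕ) (p : Fin n × Fin n → Prop) [DecidablePred p] :
    (((univ ×ˢ univ).filter p).card : ℝ) = ∑ i, ∑ j, (if p (i, j) then (1 : ℝ) else 0) := by
  rw [← Finset.sum_product', Finset.sum_boole]

theorem bipartite_discrepancy_dichotomy :
    ∀ ε : ℝ, 0 < ε → ε ≤ 1 →
    ∃ c : ℝ, c ≥ ε ^ 4 / 640000 ∧
    ∃ n₀ : ℕ, ∀ n : ℕ, n₀ ≤ n →
    ∀ M : Fin n → Fin n → ℤ, IsSigning n M →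
      (∃ π : Fin n → Equiv.Perm (Fin n), IsOneFactorization n π ∧
        ∀ t : Fin n, |(∑ i, (M i (π t i) : ℝ))| ≥ c * n) ∨
      (∃ z : Fin n → ℤ, IsBalanced n z ∧
        (((univ ×ˢ univ).filter fun p : Fin n × Fin n => M p.1 p.2 ≠ z p.1).card
            ≤ ε * n ^ 2 ∨
         ((univ ×ˢ univ).filter fun p : Fin n × Fin n => M p.1 p.2 ≠ z p.2).card
            ≤ ε * n ^ 2)) := by
  intro ε hε hε1
  have he4 : ε ^ 4 ≤ ε ^ 2 := by
    have : ε ^ 2 ≤ 1 := by nlinarith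
    nlinarith [sq_nonneg ε]
  have he2 : ε ^ 2 ≤ ε := by nlinarith
  refine ⟨ε ^ 4 / 640000, le_refl _, ?_⟩
  obtain ⟨n₁, h₁⟩ := caseA (ε / 2) (by linarith)
  obtain ⟨n₂, h₂⟩ := dich ((ε / 10) ^ 2) (ε / 10) (by linarith) (by linarith) rfl
  obtain ⟨n₃, h₃⟩ := exists_nat_ge (15 / ε)
  have hbase : ∀ n : ℕ, n₃ ≤ n → 15 * (n : ℝ) ≤ ε * n ^ 2 := by
    intro n hn
    have h4 : (n₃ : ℝ) ≤ n := by exact_mod_cast hn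
    have h5 := (div_le_iff₀ hε).1 (h₃.trans h4)
    have h6 : (0 : ℝ) ≤ n := by positivity
    nlinarith
  refine ⟨n₁ + n₂ + n₃ + 1, fun n hn M hM => ?_⟩
  have hn0 : (0 : ℝ) ≤ n := by positivity
  have hbig := hbase n (by omega)
  have : NeZero n := ⟨by omega⟩
  by_cases hS : ε / 2 * (n : ℝ) ^ 2 ≤ |((∑ i, ∑ j, M i j : ℤ) : ℝ)|
  · left
    have h := h₁ (Fin n) (by rw [Fintype.card_fin]; omega) M hM
      (by rw [Fintype.card_fin]; exact hS)
    rw [Fintype.card_fin] at h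
    refine Fac.final (Fac.mono ?_ h)
    exact mul_le_mul_of_nonneg_right (by linarith) hn0
  · have hS' := (not_le.1 hS).le
    rcases h₂ n (by omega) M hM with h | h
    · left
      refine Fac.final (Fac.mono ?_ h)
      exact mul_le_mul_of_nonneg_right (by nlinarith) hn0
    · right
      obtain ⟨z, hz, h | h⟩ := h
      · obtain ⟨z', hz', h'⟩ := rows_close n M hM z hz _ (ε / 2) h hS'
        refine ⟨z', hz', Or.inl ?_⟩
        rw [card_eq_sum]
        refine h'.trans ?_
        nlinarith
      · rw [Finset.sum_comm] at h
        obtain ⟨z', hz', h'⟩ := rows_close n (fun i j => M j i) (fun _ _ => hM _ _) z hz _ (ε / 2)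
          h (by rw [Finset.sum_comm]; exact hS')
        refine ⟨z', hz', Or.inr ?_⟩
        rw [card_eq_sum, Finset.sum_comm]
        refine h'.trans ?_
        nlinarith
end

section
/- There exists n₀ such that for all n ≥ n₀ the following holds: for every signing M of K_{n,n}, if the total discrepancy c = disc(M) satisfies c > 0, then there exists a 1-factorization (π_t)_{t : Fin n} of K_{n,n} such that for every t, | |∑ i, M i (π_t i)| / n − c | ≤ 6·n^(−1/4). -/
open Finset

/-- The total discrepancy of the signing `M`. -/
noncomputable def totalDisc (n : ℕ) (M : Fin n → Fin n → ℤ) : ℝ :=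
  |(∑ i, ∑ j, (M i j : ℝ))| / n ^ 2

/-- Antisymmetrization bounds for an involution moving `y` by at most `4`. -/
lemma exch_pair {G : Type*} [Fintype G] (e : G ≃ G) (he : ∀ x, e (e x) = x)
    (y : G → ℝ) (hy : ∀ x, |y x - y (e x)| ≤ 4) :
    (∑ x, (y x - y (e x)) * y x ≤ 8 * Fintype.card G) ∧
    (∑ x, (y x - y (e x)) * y x ^ 3 ≤ 24 * ∑ x, y x ^ 2) := by
  have hd : ∀ x, (y x - y (e x)) ^ 2 ≤ 16 := by
    intro x
    have := abs_le.mp (hy x)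
    nlinarith [this.1, this.2]
  constructor
  · have h1 : ∑ x, (y (e x) - y x) * y (e x) = ∑ x, (y x - y (e x)) * y x := by
      have := Equiv.sum_comp e (fun x => (y x - y (e x)) * y x)
      simpa [he] using this
    have h2 : ∑ x, ((y x - y (e x)) * y x + (y (e x) - y x) * y (e x)) ≤ ∑ _x : G, (16 : ℝ) := by
      apply Finset.sum_le_sum
      intro x _
      nlinarith [hd x]
    rw [Finset.sum_add_distrib, h1] at h2
    simp at h2
    linarith
  · have h1 : ∑ x, (y (e x) - y x) * y (e x) ^ 3 = ∑ x, (y x - y (e x)) * y x ^ 3 := by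
      have := Equiv.sum_comp e (fun x => (y x - y (e x)) * y x ^ 3)
      simpa [he] using this
    have h3 : ∑ x, y (e x) ^ 2 = ∑ x, y x ^ 2 := Equiv.sum_comp e (fun x => y x ^ 2)
    have h2 : ∑ x, ((y x - y (e x)) * y x ^ 3 + (y (e x) - y x) * y (e x) ^ 3)
        ≤ ∑ x, (24 * y x ^ 2 + 24 * y (e x) ^ 2) := by
      apply Finset.sum_le_sum
      intro x _
      have ha : (y x - y (e x)) * y x ^ 3 + (y (e x) - y x) * y (e x) ^ 3
          = (y x - y (e x)) ^ 2 * (y x ^ 2 + y x * y (e x) + y (e x) ^ 2) := by ring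
      have hb : 0 ≤ y x ^ 2 + y x * y (e x) + y (e x) ^ 2 := by
        nlinarith [sq_nonneg (y x + y (e x)), sq_nonneg (y x), sq_nonneg (y (e x))]
      rw [ha]
      have hc := mul_le_mul_of_nonneg_right (hd x) hb
      nlinarith [sq_nonneg (y x - y (e x))]
    rw [Finset.sum_add_distrib, Finset.sum_add_distrib, h1, ← Finset.mul_sum, ← Finset.mul_sum,
      h3] at h2
    linarith

lemma swap_diff {n : ℕ} (M : Fin n → Fin n → ℝ) (π : Equiv.Perm (Fin n)) (i j : Fin n) :
    ∑ k, M k (π k) - ∑ k, M k ((π * Equiv.swap i j) k)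
      = M i (π i) + M j (π j) - M i (π j) - M j (π i) := by
  by_cases hij : i = j
  · subst hij
    simp
  · rw [← Finset.sum_sub_distrib]
    have hz : ∀ k ∈ (Finset.univ : Finset (Fin n)), k ∉ ({i, j} : Finset (Fin n)) →
        M k (π k) - M k ((π * Equiv.swap i j) k) = 0 := by
      intro k _ hk
      simp only [Finset.mem_insert, Finset.mem_singleton, not_or] at hk
      rw [Equiv.Perm.mul_apply, Equiv.swap_apply_of_ne_of_ne hk.1 hk.2, sub_self]
    rw [← Finset.sum_subset (Finset.subset_univ _) hz, Finset.sum_pair hij]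
    simp
    ring

/-- Fourth moment bound for a random perfect matching. -/
lemma fourth_moment {n : ℕ} (hn : 0 < n) (M : Fin n → Fin n → ℝ) (hM : ∀ i j, |M i j| ≤ 1)
    (y : Equiv.Perm (Fin n) → ℝ)
    (hy : ∀ π, y π = ∑ k, M k (π k) - (∑ i, ∑ j, M i j) / n) :
    ∑ π, y π ^ 4 ≤ 48 * (n : ℝ) ^ 2 * Fintype.card (Equiv.Perm (Fin n)) := by
  have hn' : (0 : ℝ) < n := by exact_mod_cast hn
  have hdiff : ∀ π i j, y π - y (π * Equiv.swap i j)
      = M i (π i) + M j (π j) - M i (π j) - M j (π i) := by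
    intro π i j
    rw [hy, hy, ← swap_diff M π i j]
    ring
  have hsum : ∀ π, ∑ i, ∑ j, (y π - y (π * Equiv.swap i j)) = 2 * n * y π := by
    intro π
    simp only [hdiff, Finset.sum_sub_distrib, Finset.sum_add_distrib]
    have h1 : ∑ i, ∑ j, M i (π j) = ∑ i, ∑ j, M i j :=
      Finset.sum_congr rfl fun i _ => Equiv.sum_comp π (fun j => M i j)
    have h2 : ∑ i, ∑ j, M j (π i) = ∑ i, ∑ j, M i j := by
      rw [Finset.sum_comm]
      exact h1
    rw [h1, h2, hy]
    simp [← Finset.mul_sum]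
    field_simp
    ring
  have hpair := fun i j : Fin n => exch_pair (Equiv.mulRight (Equiv.swap i j))
    (fun x => by simp [mul_assoc]) y (by
      intro π
      simp only [Equiv.coe_mulRight]
      rw [hdiff]
      have a := abs_le.mp (hM i (π i))
      have b := abs_le.mp (hM j (π j))
      have c := abs_le.mp (hM i (π j))
      have d := abs_le.mp (hM j (π i))
      rw [abs_le]
      constructor <;> linarith [a.1, a.2, b.1, b.2, c.1, c.2, d.1, d.2])
  simp only [Equiv.coe_mulRight] at hpair
  have key : ∀ g : Equiv.Perm (Fin n) → ℝ, 2 * n * ∑ π, y π * g π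
      = ∑ i, ∑ j, ∑ π, (y π - y (π * Equiv.swap i j)) * g π := by
    intro g
    have : ∀ i, ∑ j, ∑ π, (y π - y (π * Equiv.swap i j)) * g π
        = ∑ π, ∑ j, (y π - y (π * Equiv.swap i j)) * g π := fun i => Finset.sum_comm
    simp only [this]
    rw [Finset.sum_comm, Finset.mul_sum]
    apply Finset.sum_congr rfl
    intro π _
    simp only [← Finset.sum_mul]
    rw [hsum]
    ring
  have bound : ∀ (F : Fin n → Fin n → ℝ) (C : ℝ), (∀ i j, F i j ≤ C) →
      ∑ i, ∑ j, F i j ≤ n * (n * C) := by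
    intro F C h
    calc ∑ i, ∑ j, F i j ≤ ∑ _i : Fin n, ∑ _j : Fin n, C :=
          Finset.sum_le_sum fun i _ => Finset.sum_le_sum fun j _ => h i j
      _ = n * (n * C) := by simp
  have e2 : ∑ π, y π ^ 2 ≤ 4 * n * Fintype.card (Equiv.Perm (Fin n)) := by
    have h := (key y).le.trans (bound _ _ fun i j => (hpair i j).1)
    have h' : ∑ π, y π * y π = ∑ π, y π ^ 2 := Finset.sum_congr rfl fun π _ => by ring
    rw [h'] at h
    refine le_of_mul_le_mul_left ?_ (by positivity : (0 : ℝ) < 2 * n)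
    linarith
  have h := (key (fun π => y π ^ 3)).le.trans (bound _ _ fun i j => (hpair i j).2)
  have h' : ∑ π, y π * y π ^ 3 = ∑ π, y π ^ 4 := Finset.sum_congr rfl fun π _ => by ring
  rw [h'] at h
  have e4 : ∑ π, y π ^ 4 ≤ 12 * n * ∑ π, y π ^ 2 := by
    refine le_of_mul_le_mul_left ?_ (by positivity : (0 : ℝ) < 2 * n)
    linarith
  have := mul_le_mul_of_nonneg_left e2 (by positivity : (0 : ℝ) ≤ 12 * n)
  linarith

theorem high_discrepancy_case :
    ∃ n₀ : ℕ, ∀ n : ℕ, n₀ ≤ n →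
    ∀ M : Fin n → Fin n → ℤ, IsSigning n M →
    0 < totalDisc n M →
    ∃ π : Fin n → Equiv.Perm (Fin n), IsOneFactorization n π ∧
      ∀ t : Fin n,
        |(|(∑ i, (M i (π t i) : ℝ))| / n - totalDisc n M)| ≤
          6 * (n : ℝ) ^ (-(1 / 4 : ℝ)) := by
  refine ⟨1, fun n hn M hM _ => ?_⟩
  haveI : NeZero n := ⟨by omega⟩
  have hn' : (0 : ℝ) < n := by exact_mod_cast hn
  set T : ℝ := ∑ i, ∑ j, (M i j : ℝ) with hT
  let y : Equiv.Perm (Fin n) → ℝ := fun π => ∑ k, (M k (π k) : ℝ) - T / n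
  have h4 := fourth_moment (by omega : 0 < n) (fun i j => (M i j : ℝ))
    (fun i j => by rcases hM i j with h | h <;> simp [h]) y (fun π => rfl)
  have htot : ∑ τ : Equiv.Perm (Fin n), ∑ t : Fin n, y (τ * Equiv.addRight t) ^ 4
      ≤ ∑ _τ : Equiv.Perm (Fin n), 48 * (n : ℝ) ^ 3 := by
    rw [Finset.sum_comm]
    have : ∀ t : Fin n, ∑ τ : Equiv.Perm (Fin n), y (τ * Equiv.addRight t) ^ 4
        = ∑ τ, y τ ^ 4 := fun t =>
      Equiv.sum_comp (Equiv.mulRight (Equiv.addRight t)) (fun τ => y τ ^ 4)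
    simp only [this, Finset.sum_const, Finset.card_univ, Fintype.card_fin, nsmul_eq_mul]
    have := mul_le_mul_of_nonneg_left h4 hn'.le
    linarith
  obtain ⟨τ, -, hτ⟩ := Finset.exists_le_of_sum_le Finset.univ_nonempty htot
  refine ⟨fun t => τ * Equiv.addRight t, ?_, ?_⟩
  · intro i j
    refine ⟨τ.symm j - i, by simp, ?_⟩
    intro t ht
    simp only [Equiv.Perm.mul_apply, Equiv.coe_addRight] at ht
    rw [← ht]
    simp
  · intro t
    have h1 : y (τ * Equiv.addRight t) ^ 4 ≤ 48 * (n : ℝ) ^ 3 :=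
      (Finset.single_le_sum (f := fun t => y (τ * Equiv.addRight t) ^ 4)
        (fun t _ => by positivity) (Finset.mem_univ t)).trans hτ
    set r : ℝ := (n : ℝ) ^ (-(1 / 4 : ℝ)) with hr
    have hr0 : 0 < r := Real.rpow_pos_of_pos hn' _
    have hr4 : r ^ 4 * n = 1 := by
      rw [hr, ← Real.rpow_natCast, ← Real.rpow_mul hn'.le]
      norm_num
      rw [Real.rpow_neg_one]
      field_simp
    have h2 : |y (τ * Equiv.addRight t)| ≤ 6 * r * n := by
      refine le_of_pow_le_pow_left₀ (n := 4) (by norm_num) (by positivity) ?_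
      rw [Even.pow_abs (by decide)]
      have : (6 * r * n) ^ 4 = 1296 * (n : ℝ) ^ 3 * (r ^ 4 * n) := by ring
      rw [this, hr4]
      nlinarith [pow_pos hn' 3]
    have h3 : totalDisc n M = |T / n| / n := by
      rw [totalDisc, ← hT, abs_div, abs_of_pos hn']
      field_simp
    rw [h3, ← sub_div, abs_div, abs_of_pos hn', div_le_iff₀ hn']
    exact (abs_abs_sub_abs_le_abs_sub _ _).trans h2
end

section
/- For every real η > 0 there exists n₀ such that for all n ≥ n₀ the following holds: for every signing M of K_{n,n}, if s(M) ≥ η·n⁴ then there exists a 1-factorization (π_t)_{t : Fin n} of K_{n,n} such that for every t, |∑ i, M i (π_t i)| ≥ (η/8 − 3/n)·n. -/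
open Finset

/-- `s(M)`: the number of switchers of `M`, i.e. quadruples `(a, c, b, d)`
with `a < c`, `b < d` and `M a b + M c d ≠ M a d + M c b`. -/
def switcherCount (n : ℕ) (M : Fin n → Fin n → ℤ) : ℕ :=
  (univ.filter fun p : Fin n × Fin n × Fin n × Fin n =>
    p.1 < p.2.1 ∧ p.2.2.1 < p.2.2.2 ∧
      M p.1 p.2.2.1 + M p.2.1 p.2.2.2 ≠ M p.1 p.2.2.2 + M p.2.1 p.2.2.1).card


lemma regular_decomp_fin {A B : Type*} [Fintype A] [Fintype B] [DecidableEq A] [DecidableEq B]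
    (hAB : Fintype.card A = Fintype.card B) (q : ℕ) :
    ∀ (N : A → B → ℕ), (∀ a, ∑ b, N a b = q) → (∀ b, ∑ a, N a b = q) →
    ∃ σ : Fin q → (A ≃ B), ∀ a b, N a b = ∑ k, if σ k a = b then 1 else 0 := by
  induction q with
  | zero =>
    intro N h1 h2
    refine ⟨fun k => k.elim0, fun a b => ?_⟩
    have := h1 a
    rw [Finset.sum_eq_zero_iff] at this
    simpa using this b (mem_univ _)
  | succ q ih =>
    intro N h1 h2
    have hall : ∃ f : A → B, Function.Injective f ∧ ∀ a, f a ∈ (univ.filter fun b => N a b ≠ 0) := by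
      apply (Finset.all_card_le_biUnion_card_iff_exists_injective _).1
      intro s
      have e1 : (q+1) * s.card = ∑ a ∈ s, ∑ b, N a b := by
        rw [Finset.sum_congr rfl (fun a _ => h1 a)]; simp [mul_comm]
      have e2 : ∑ a ∈ s, ∑ b, N a b
          = ∑ a ∈ s, ∑ b ∈ s.biUnion (fun a => univ.filter fun b => N a b ≠ 0), N a b := by
        apply Finset.sum_congr rfl
        intro a ha
        symm
        apply Finset.sum_subset (subset_univ _)
        intro b _ hb
        by_contra hne
        exact hb (by simp only [mem_biUnion, mem_filter, mem_univ, true_and]; exact ⟨a, ha, hne⟩)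
      have e3 : ∑ a ∈ s, ∑ b ∈ s.biUnion (fun a => univ.filter fun b => N a b ≠ 0), N a b
          ≤ (q+1) * (s.biUnion (fun a => univ.filter fun b => N a b ≠ 0)).card := by
        rw [Finset.sum_comm]
        calc _ ≤ ∑ b ∈ s.biUnion (fun a => univ.filter fun b => N a b ≠ 0), (q+1) := by
              apply Finset.sum_le_sum
              intro b _
              rw [← h2 b]
              exact Finset.sum_le_sum_of_subset (subset_univ _)
          _ = _ := by simp [mul_comm]
      have : (q+1) * s.card ≤ (q+1) * (s.biUnion (fun a => univ.filter fun b => N a b ≠ 0)).card := by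
        omega
      exact Nat.le_of_mul_le_mul_left this (Nat.succ_pos q)
    obtain ⟨f, hf, hN⟩ := hall
    have hb : Function.Bijective f := (Fintype.bijective_iff_injective_and_card f).2 ⟨hf, hAB⟩
    let e : A ≃ B := Equiv.ofBijective f hb
    have hpos : ∀ a b, (if e a = b then 1 else 0) ≤ N a b := by
      intro a b
      split_ifs with h
      · have := hN a
        simp only [mem_filter, mem_univ, true_and] at this
        have : N a (e a) ≠ 0 := this
        rw [h] at this; omega
      · omega
    obtain ⟨σ, hσ⟩ := ih (fun a b => N a b - if e a = b then 1 else 0)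
      (by
        intro a
        have : ∑ b, (N a b - if e a = b then 1 else 0) + ∑ b, (if e a = b then 1 else 0) = q + 1 := by
          rw [← Finset.sum_add_distrib, ← h1 a]
          exact Finset.sum_congr rfl fun b _ => Nat.sub_add_cancel (hpos a b)
        simp at this ⊢; omega)
      (by
        intro b
        have : ∑ a, (N a b - if e a = b then 1 else 0) + ∑ a, (if e a = b then 1 else 0) = q + 1 := by
          rw [← Finset.sum_add_distrib, ← h2 b]
          exact Finset.sum_congr rfl fun a _ => Nat.sub_add_cancel (hpos a b)
        have h3 : ∑ a, (if e a = b then 1 else 0) = 1 := by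
          simp_rw [← Equiv.eq_symm_apply]; simp
        omega)
    refine ⟨Fin.cons e σ, fun a b => ?_⟩
    rw [Fin.sum_univ_succ]
    simp only [Fin.cons_zero, Fin.cons_succ]
    rw [← hσ a b]
    have := hpos a b
    omega

lemma regular_decomp {A B K : Type*} [Fintype A] [Fintype B] [Fintype K] [DecidableEq A] [DecidableEq B]
    (hAB : Fintype.card A = Fintype.card B)
    (N : A → B → ℕ) (h1 : ∀ a, ∑ b, N a b = Fintype.card K) (h2 : ∀ b, ∑ a, N a b = Fintype.card K) :
    ∃ σ : K → (A ≃ B), ∀ a b, N a b = ∑ k, if σ k a = b then 1 else 0 := by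
  obtain ⟨σ, hσ⟩ := regular_decomp_fin hAB _ N h1 h2
  refine ⟨fun k => σ (Fintype.equivFin K k), fun a b => ?_⟩
  rw [hσ]
  exact (Equiv.sum_comp (Fintype.equivFin K) (fun k => if σ k a = b then 1 else 0)).symm

lemma margins {A T : Type*} [Fintype A] [Fintype T] [DecidableEq A] [DecidableEq T] (D : ℕ) (w : T → ℕ)
    (h : ∑ t, w t = Fintype.card A * D) :
    ∃ N : A → T → ℕ, (∀ a, ∑ t, N a t = D) ∧ ∀ t, ∑ a, N a t = w t := by
  have hc : Fintype.card (A × Fin D) = Fintype.card (Σ t, Fin (w t)) := by simp [h]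
  let e := Fintype.equivOfCardEq hc
  refine ⟨fun a t => ∑ k : Fin D, if (e (a, k)).1 = t then 1 else 0, fun a => ?_, fun t => ?_⟩
  · rw [Finset.sum_comm]; simp
  · rw [← Fintype.sum_prod_type' (f := fun a k => if (e (a, k)).1 = t then 1 else 0)]
    rw [Equiv.sum_comp e (fun s => if s.1 = t then 1 else 0), Fintype.sum_sigma]
    have : ∀ t', ∑ _k : Fin (w t'), (if t' = t then 1 else 0) = if t' = t then w t' else 0 := by
      intro t'; split_ifs <;> simp
    simp only [this]
    simp

lemma complete_latin {R C A' B' T : Type*} [Fintype R] [Fintype C] [Fintype A'] [Fintype B'] [Fintype T]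
    [DecidableEq R] [DecidableEq C] [DecidableEq A'] [DecidableEq B'] [DecidableEq T]
    (f : R → C → T) (hr : ∀ r, Function.Injective (f r))
    (hc : ∀ c, Function.Injective (fun r => f r c))
    (hA : Fintype.card R + Fintype.card A' = Fintype.card T)
    (hB : Fintype.card C + Fintype.card B' = Fintype.card T)
    (hRC : Fintype.card R + Fintype.card C ≤ Fintype.card T) :
    ∃ L : R ⊕ A' → C ⊕ B' → T, (∀ a, Function.Bijective (L a)) ∧
      (∀ b, Function.Bijective (fun a => L a b)) ∧ ∀ r c, L (Sum.inl r) (Sum.inl c) = f r c := by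
  classical
  -- step 1
  have hrow : ∀ r, ∑ t, (if ∃ c, f r c = t then 0 else 1) = Fintype.card B' := by
    intro r
    have h1 : ∑ t, (if ∃ c, f r c = t then 0 else 1) + ∑ t, (if ∃ c, f r c = t then 1 else 0)
        = Fintype.card T := by
      rw [← Finset.sum_add_distrib, Fintype.card, Finset.card_eq_sum_ones]
      exact Finset.sum_congr rfl fun t _ => by split_ifs <;> rfl
    have h2 : ∑ t, (if ∃ c, f r c = t then 1 else 0) = Fintype.card C := by
      rw [← Finset.sum_filter, ← Finset.card_eq_sum_ones, ← Finset.card_univ,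
        ← Finset.card_image_of_injective univ (hr r)]
      congr 1; ext t; simp
    omega
  have hcol : ∀ t, ∑ r, (if ∃ c, f r c = t then 0 else 1) ≤ Fintype.card B' := by
    intro t
    calc _ ≤ ∑ r : R, 1 := Finset.sum_le_sum fun r _ => by split_ifs <;> omega
      _ ≤ _ := by simp; omega
  obtain ⟨N', hN1, hN2⟩ := margins (A := A') (T := T) (Fintype.card B')
    (fun t => Fintype.card B' - ∑ r, (if ∃ c, f r c = t then 0 else 1)) (by
      have h1 : ∑ t, (Fintype.card B' - ∑ r, (if ∃ c, f r c = t then 0 else 1))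
          + ∑ t, ∑ r, (if ∃ c, f r c = t then 0 else 1) = Fintype.card T * Fintype.card B' := by
        rw [← Finset.sum_add_distrib, Finset.sum_congr rfl fun t _ => Nat.sub_add_cancel (hcol t)]
        simp
      rw [Finset.sum_comm (s := univ (α := T)) (t := univ (α := R)),
        Finset.sum_congr rfl fun r _ => hrow r, ← hA, add_mul] at h1
      simp only [sum_const, card_univ, smul_eq_mul] at h1
      omega)
  obtain ⟨σ, hσ⟩ := regular_decomp (A := R ⊕ A') (B := T) (K := B') (by simp [hA])
    (fun a t => Sum.elim (fun r => if ∃ c, f r c = t then 0 else 1) (fun a => N' a t) a)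
    (by rintro (r | a)
        · exact hrow r
        · exact hN1 a)
    (by intro t
        rw [Fintype.sum_sum_type]
        simp only [Sum.elim_inl, Sum.elim_inr]
        rw [hN2]
        have := hcol t
        omega)
  let g : R → C ⊕ B' → T := fun r => Sum.elim (f r) (fun b => σ b (Sum.inl r))
  have hg1 : ∀ r, Function.Injective (g r) := by
    intro r
    have key : ∀ b c, f r c ≠ σ b (Sum.inl r) := by
      intro b c h
      have := hσ (Sum.inl r) (f r c)
      simp only [Sum.elim_inl] at this
      rw [if_pos ⟨c, rfl⟩] at this
      have := (Finset.sum_eq_zero_iff.1 this.symm) b (mem_univ _)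
      simp [h] at this
    rintro (c | b) (c' | b') h
    · exact congrArg _ (hr r h)
    · exact absurd h (key _ _)
    · exact absurd h.symm (key _ _)
    · by_contra hne
      have hne : b ≠ b' := fun h => hne (by rw [h])
      have h : σ b (Sum.inl r) = σ b' (Sum.inl r) := h
      have h1 := hσ (Sum.inl r) (σ b (Sum.inl r))
      have h2 : (if ∃ c, f r c = σ b (Sum.inl r) then 0 else 1) ≤ 1 := by split_ifs <;> omega
      simp only [Sum.elim_inl] at h1
      have h3 : ∑ k ∈ ({b, b'} : Finset B'), (if σ k (Sum.inl r) = σ b (Sum.inl r) then 1 else 0)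
          ≤ ∑ k, (if σ k (Sum.inl r) = σ b (Sum.inl r) then 1 else 0) :=
        Finset.sum_le_sum_of_subset (subset_univ _)
      rw [Finset.sum_pair hne, if_pos rfl, if_pos h.symm] at h3
      omega
  have hg2 : ∀ b, Function.Injective (fun r => g r b) := by
    rintro (c | b)
    · exact hc c
    · intro r r' h
      exact Sum.inl_injective ((σ b).injective h)
  have hg1b : ∀ r, Function.Bijective (g r) := fun r =>
    (Fintype.bijective_iff_injective_and_card _).2 ⟨hg1 r, by simp [hB]⟩
  -- step 2
  obtain ⟨τ, hτ⟩ := regular_decomp (A := C ⊕ B') (B := T) (K := A') (by simp [hB])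
    (fun b t => if ∃ r, g r b = t then 0 else 1)
    (by
      intro b
      have h1 : ∑ t, (if ∃ r, g r b = t then 0 else 1) + ∑ t, (if ∃ r, g r b = t then 1 else 0)
          = Fintype.card T := by
        rw [← Finset.sum_add_distrib, Fintype.card, Finset.card_eq_sum_ones]
        exact Finset.sum_congr rfl fun t _ => by split_ifs <;> rfl
      have h2 : ∑ t, (if ∃ r, g r b = t then 1 else 0) = Fintype.card R := by
        rw [← Finset.sum_filter, ← Finset.card_eq_sum_ones, ← Finset.card_univ,
          ← Finset.card_image_of_injective univ (hg2 b)]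
        congr 1; ext t; simp
      omega)
    (by
      intro t
      have h1 : ∑ b, (if ∃ r, g r b = t then 0 else 1) + ∑ b, (if ∃ r, g r b = t then 1 else 0)
          = Fintype.card (C ⊕ B') := by
        rw [← Finset.sum_add_distrib, Fintype.card, Finset.card_eq_sum_ones]
        exact Finset.sum_congr rfl fun t _ => by split_ifs <;> rfl
      have h2 : ∑ b, (if ∃ r, g r b = t then 1 else 0) = Fintype.card R := by
        let ψ : R → C ⊕ B' := fun r => (Equiv.ofBijective _ (hg1b r)).symm t
        have hψ : ∀ r b, ψ r = b ↔ g r b = t := by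
          intro r b
          simp only [ψ, Equiv.symm_apply_eq, Equiv.ofBijective_apply]
          exact eq_comm
        have hψi : Function.Injective ψ := by
          intro r r' h
          have h1 := (hψ r _).1 rfl
          have h2 := (hψ r' _).1 rfl
          rw [← h] at h2
          exact hg2 _ (h1.trans h2.symm)
        rw [← Finset.sum_filter, ← Finset.card_eq_sum_ones, ← Finset.card_univ,
          ← Finset.card_image_of_injective univ hψi]
        congr 1; ext b; simp [hψ]
      rw [Fintype.card_sum] at h1
      omega)
  have key : ∀ a r b, g r b ≠ τ a b := by
    intro a r b h
    have := hτ b (g r b)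
    rw [if_pos ⟨r, rfl⟩] at this
    have := (Finset.sum_eq_zero_iff.1 this.symm) a (mem_univ _)
    simp [h] at this
  refine ⟨Sum.elim g (fun a b => τ a b), ?_, ?_, fun r c => rfl⟩
  · rintro (r | a)
    · exact hg1b r
    · exact (τ a).bijective
  · intro b
    refine (Fintype.bijective_iff_injective_and_card _).2 ⟨?_, by simp [hA]⟩
    rintro (r | a) (r' | a') h
    · exact congrArg _ (hg2 b h)
    · exact absurd h (key _ _ _)
    · exact absurd h.symm (key _ _ _)
    · by_contra hne
      have hne : a ≠ a' := fun h => hne (by rw [h])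
      have h : τ a b = τ a' b := h
      have h1 := hτ b (τ a b)
      have h2 : (if ∃ r, g r b = τ a b then 0 else 1) ≤ 1 := by split_ifs <;> omega
      have h3 : ∑ k ∈ ({a, a'} : Finset A'), (if τ k b = τ a b then 1 else 0)
          ≤ ∑ k, (if τ k b = τ a b then 1 else 0) :=
        Finset.sum_le_sum_of_subset (subset_univ _)
      rw [Finset.sum_pair hne, if_pos rfl, if_pos h.symm] at h3
      omega

lemma conflict_card {U V : Type*} [Fintype U] [Fintype V] [DecidableEq U] [DecidableEq V] (e : U × V) :
    (univ.filter fun x : U × V => x.1 = e.1 ∨ x.2 = e.2).card ≤ Fintype.card U + Fintype.card V := by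
  have : (univ.filter fun x : U × V => x.1 = e.1 ∨ x.2 = e.2)
      ⊆ (univ.image fun u : U => (u, e.2)) ∪ (univ.image fun v : V => (e.1, v)) := by
    rintro ⟨a, b⟩ h
    simp only [mem_filter, mem_univ, true_and] at h
    simp only [mem_union, mem_image, mem_univ, true_and, Prod.mk.injEq]
    rcases h with h | h
    · right; exact ⟨b, h.symm, rfl⟩
    · left; exact ⟨a, rfl, h.symm⟩
  refine (card_le_card this).trans ((card_union_le _ _).trans ?_)
  exact add_le_add (card_image_le.trans (by simp)) (card_image_le.trans (by simp))

lemma matching_exists {U V : Type*} [Fintype U] [Fintype V] [DecidableEq U] [DecidableEq V] (m : ℕ)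
    (hm : Fintype.card U + Fintype.card V ≤ m) (hm0 : 0 < m) (k : ℕ) :
    ∀ G : Finset (U × V), k * m ≤ G.card → ∃ X ⊆ G, X.card = k ∧
      ∀ x ∈ X, ∀ y ∈ X, (x.1 = y.1 ∨ x.2 = y.2) → x = y := by
  induction k with
  | zero => intro G _; exact ⟨∅, by simp, by simp, by simp⟩
  | succ k ih =>
    intro G hG
    have hpos : 0 < G.card := lt_of_lt_of_le (by positivity) hG
    obtain ⟨e, he⟩ := card_pos.1 hpos
    have hc := conflict_card e
    obtain ⟨X, hX, hXc, hXm⟩ := ih (G \ (univ.filter fun x : U × V => x.1 = e.1 ∨ x.2 = e.2)) (by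
      have := le_card_sdiff (univ.filter fun x : U × V => x.1 = e.1 ∨ x.2 = e.2) G
      rw [add_mul, one_mul] at hG
      omega)
    have hX' : ∀ x ∈ X, x ∈ G ∧ ¬ (x.1 = e.1 ∨ x.2 = e.2) := by
      intro x hx
      have := hX hx
      simpa using this
    refine ⟨insert e X, ?_, ?_, ?_⟩
    · intro x hx
      rcases mem_insert.1 hx with rfl | hx
      · exact he
      · exact (hX' x hx).1
    · rw [card_insert_of_notMem, hXc]
      intro h
      exact (hX' e h).2 (Or.inl rfl)
    · intro x hx y hy hxy
      rcases mem_insert.1 hx with hxe | hx1 <;> rcases mem_insert.1 hy with hye | hy1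
      · rw [hxe, hye]
      · rw [hxe] at hxy
        exact absurd (hxy.imp Eq.symm Eq.symm) (hX' y hy1).2
      · rw [hye] at hxy
        exact absurd hxy (hX' x hx1).2
      · exact hXm x hx1 y hy1 hxy

lemma classes_exist {U V : Type*} [Fintype U] [Fintype V] [DecidableEq U] [DecidableEq V] (m : ℕ)
    (hm : Fintype.card U + Fintype.card V ≤ m) (hm0 : 0 < m) (G : Finset (U × V)) (k : ℕ → ℕ) (q : ℕ)
    (h : ∀ i < q, ∑ j ∈ range i, k j + k i * m ≤ G.card) :
    ∃ X : ℕ → Finset (U × V), (∀ i < q, X i ⊆ G ∧ (X i).card = k i ∧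
      ∀ x ∈ X i, ∀ y ∈ X i, (x.1 = y.1 ∨ x.2 = y.2) → x = y) ∧
      ∀ i < q, ∀ j < q, ∀ x, x ∈ X i → x ∈ X j → i = j := by
  induction q with
  | zero => exact ⟨fun _ => ∅, by simp, by simp⟩
  | succ q ih =>
    obtain ⟨X, hX, hd⟩ := ih (fun i hi => h i (by omega))
    obtain ⟨Y, hY, hYc, hYm⟩ := matching_exists m hm hm0 (k q) (G \ (range q).biUnion X) (by
      have h1 := le_card_sdiff ((range q).biUnion X) G
      have h2 : ((range q).biUnion X).card ≤ ∑ j ∈ range q, k j := by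
        refine card_biUnion_le.trans (Finset.sum_le_sum fun i hi => ?_)
        exact (hX i (mem_range.1 hi)).2.1.le
      have := h q (by omega)
      omega)
    have hY' : ∀ x ∈ Y, x ∈ G ∧ ∀ i < q, x ∉ X i := by
      intro x hx
      have := hY hx
      simpa using this
    refine ⟨fun i => if i = q then Y else X i, ?_, ?_⟩
    · intro i hi
      by_cases hiq : i = q
      · subst hiq
        simp only [if_true]
        exact ⟨fun x hx => (hY' x hx).1, hYc, hYm⟩
      · simp only [if_neg hiq]
        exact hX i (by omega)
    · intro i hi j hj x hxi hxj
      by_cases hiq : i = q <;> by_cases hjq : j = q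
      · omega
      · simp only [if_pos hiq, if_neg hjq] at hxi hxj
        exact absurd hxj ((hY' x hxi).2 j (by omega))
      · simp only [if_neg hiq, if_pos hjq] at hxi hxj
        exact absurd hxi ((hY' x hxj).2 i (by omega))
      · simp only [if_neg hiq, if_neg hjq] at hxi hxj
        exact hd i (by omega) j (by omega) x hxi hxj

lemma greedy_s2 {U V I : Type*} [Fintype U] [Fintype V] [Fintype I] [DecidableEq U] [DecidableEq V]
    [DecidableEq I] (hm : Fintype.card U + Fintype.card V ≤ Fintype.card I)
    (S₀ : Finset (U × V)) (c₀ : U × V → I)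
    (h₀ : ∀ x ∈ S₀, ∀ y ∈ S₀, (x.1 = y.1 ∨ x.2 = y.2) → c₀ x = c₀ y → x = y) (S : Finset (U × V)) :
    ∃ c : U × V → I, (∀ x ∈ S₀, c x = c₀ x) ∧
      ∀ x ∈ S₀ ∪ S, ∀ y ∈ S₀ ∪ S, (x.1 = y.1 ∨ x.2 = y.2) → c x = c y → x = y := by
  induction S using Finset.induction_on with
  | empty => exact ⟨c₀, fun _ _ => rfl, by simpa using h₀⟩
  | insert e S he ih =>
    obtain ⟨c, hc, hp⟩ := ih
    by_cases heS : e ∈ S₀ ∪ S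
    · refine ⟨c, hc, ?_⟩
      rw [union_insert, insert_eq_of_mem heS]
      exact hp
    · have hcard : (((univ.filter fun x : U × V => x.1 = e.1 ∨ x.2 = e.2).erase e).image c).card
          < Fintype.card I := by
        refine card_image_le.trans_lt ?_
        have h1 : e ∈ (univ.filter fun x : U × V => x.1 = e.1 ∨ x.2 = e.2) := by simp
        exact (card_erase_lt_of_mem h1).trans_le ((conflict_card e).trans hm)
      obtain ⟨i, hi⟩ : ∃ i, i ∉ ((univ.filter fun x : U × V => x.1 = e.1 ∨ x.2 = e.2).erase e).image c := by
        by_contra hcon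
        push Not at hcon
        rw [Finset.eq_univ_iff_forall.2 hcon, card_univ] at hcard
        exact lt_irrefl _ hcard
      have hi' : ∀ x, x ≠ e → (x.1 = e.1 ∨ x.2 = e.2) → c x ≠ i := by
        intro x hx hxe h
        apply hi
        simp only [mem_image, mem_erase, mem_filter, mem_univ, true_and]
        exact ⟨x, ⟨hx, hxe⟩, h⟩
      refine ⟨Function.update c e i, ?_, ?_⟩
      · intro x hx
        have : x ≠ e := by rintro rfl; exact heS (mem_union_left _ hx)
        rw [Function.update_of_ne this, hc x hx]
      · rw [union_insert]
        intro x hx y hy hxy hcc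
        by_cases hxe : x = e <;> by_cases hye : y = e
        · rw [hxe, hye]
        · subst hxe
          rw [Function.update_self, Function.update_of_ne hye] at hcc
          exact absurd hcc.symm (hi' y hye (hxy.imp Eq.symm Eq.symm))
        · subst hye
          rw [Function.update_self, Function.update_of_ne hxe] at hcc
          exact absurd hcc (hi' x hxe hxy)
        · rw [Function.update_of_ne hxe, Function.update_of_ne hye] at hcc
          exact hp x ((mem_insert.1 hx).resolve_left hxe) y ((mem_insert.1 hy).resolve_left hye) hxy hcc

/-- Full proper coloring of the blocks with prescribed demands in `G`. -/
lemma block_coloring {U V : Type*} [Fintype U] [Fintype V] [DecidableEq U] [DecidableEq V] (m q : ℕ)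
    (hm : Fintype.card U + Fintype.card V ≤ m) (hm0 : 0 < m) (hmq : m ≤ q) (G : Finset (U × V))
    (k : ℕ → ℕ) (h : ∀ i < q, ∑ j ∈ range i, k j + k i * m ≤ G.card) :
    ∃ c : U × V → Fin q, (∀ x y, (x.1 = y.1 ∨ x.2 = y.2) → c x = c y → x = y) ∧
      ∃ X : Fin q → Finset (U × V), ∀ i, X i ⊆ G ∧ (X i).card = k i ∧ ∀ x ∈ X i, c x = i := by
  classical
  obtain ⟨X, hX, hd⟩ := classes_exist m hm hm0 G k q h
  have hq : 0 < q := by omega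
  let c₀ : U × V → Fin q := fun x => if hx : ∃ i : Fin q, x ∈ X i then hx.choose else ⟨0, hq⟩
  have hc₀ : ∀ x (i : Fin q), x ∈ X i → c₀ x = i := by
    intro x i hx
    have hex : ∃ i : Fin q, x ∈ X i := ⟨i, hx⟩
    simp only [c₀, dif_pos hex]
    exact Fin.ext (hd _ (Fin.is_lt _) _ (Fin.is_lt _) x hex.choose_spec hx)
  obtain ⟨c, hc, hp⟩ := greedy_s2 (I := Fin q) (by simp; omega)
    ((univ : Finset (Fin q)).biUnion fun i => X i) c₀ (by
      intro x hx y hy hxy hcc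
      simp only [mem_biUnion, mem_univ, true_and] at hx hy
      obtain ⟨i, hi⟩ := hx
      obtain ⟨j, hj⟩ := hy
      rw [hc₀ x i hi, hc₀ y j hj] at hcc
      subst hcc
      exact (hX i i.2).2.2 x hi y hj hxy) univ
  refine ⟨c, fun x y => hp x (by simp) y (by simp), fun i => X i, fun i => ?_⟩
  refine ⟨(hX i i.2).1, (hX i i.2).2.1, fun x hx => ?_⟩
  rw [hc x (by simp only [mem_biUnion, mem_univ, true_and]; exact ⟨i, hx⟩), hc₀ x i hx]

lemma discrete_ivt {Ω : Type*} [DecidableEq Ω] (W : Finset Ω) (g : Ω → ℝ) (hg : ∀ ω, g ω ≤ 4) (lo c : ℝ)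
    (h1 : lo < c) (h2 : c ≤ lo + ∑ ω ∈ W, g ω) :
    ∃ X ⊆ W, c ≤ lo + ∑ ω ∈ X, g ω ∧ lo + ∑ ω ∈ X, g ω < c + 4 := by
  induction W using Finset.induction_on with
  | empty => simp at h2; linarith
  | insert e W he ih =>
    by_cases h : c ≤ lo + ∑ ω ∈ W, g ω
    · obtain ⟨X, hX, h3⟩ := ih h
      exact ⟨X, hX.trans (subset_insert _ _), h3⟩
    · refine ⟨_, Subset.rfl, h2, ?_⟩
      rw [sum_insert he]
      have := hg e
      push Not at h
      linarith

lemma sel_aux {Ω : Type*} [DecidableEq Ω] (W : Finset Ω) (d : Ω → Bool → ℝ) :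
    ∃ (E : Finset Ω → Ω → Bool) (lo : ℝ), ∀ X ⊆ W,
      ∑ ω ∈ W, d ω (E X ω) = lo + ∑ ω ∈ X, |d ω true - d ω false| := by
  refine ⟨fun X ω => if ω ∈ X then decide (d ω false ≤ d ω true) else !decide (d ω false ≤ d ω true),
    ∑ ω ∈ W, d ω (!decide (d ω false ≤ d ω true)), fun X hX => ?_⟩
  have : ∑ ω ∈ X, |d ω true - d ω false| = ∑ ω ∈ W, if ω ∈ X then |d ω true - d ω false| else 0 := by
    rw [Finset.sum_ite_mem, inter_eq_right.2 hX]
  rw [this, ← Finset.sum_add_distrib]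
  refine Finset.sum_congr rfl fun ω _ => ?_
  by_cases hx : ω ∈ X
  · simp only [if_pos hx]
    by_cases hd : d ω false ≤ d ω true
    · simp [hd, abs_of_nonneg]
    · push Not at hd
      have : |d ω true - d ω false| = d ω false - d ω true := by
        rw [abs_of_neg (by linarith)]; ring
      simp [not_le.2 hd, this]
  · simp [hx]

lemma sum_gain {Ω : Type*} [DecidableEq Ω] (W G : Finset Ω) (hGW : G ⊆ W) (d : Ω → Bool → ℝ)
    (hG : ∀ ω ∈ G, 2 ≤ |d ω true - d ω false|) :
    2 * (G.card : ℝ) ≤ ∑ ω ∈ W, |d ω true - d ω false| := by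
  calc 2 * (G.card : ℝ) = ∑ ω ∈ G, (2 : ℝ) := by simp [mul_comm]
    _ ≤ ∑ ω ∈ G, |d ω true - d ω false| := Finset.sum_le_sum hG
    _ ≤ _ := Finset.sum_le_sum_of_subset_of_nonneg hGW fun _ _ _ => abs_nonneg _

lemma selA {Ω : Type*} [DecidableEq Ω] (W G : Finset Ω) (hGW : G ⊆ W) (d : Ω → Bool → ℝ)
    (hd : ∀ ω, |d ω true - d ω false| ≤ 4)
    (hG : ∀ ω ∈ G, 2 ≤ |d ω true - d ω false|) (R R' c : ℝ) (hc : 4 * c + 4 ≤ 2 * G.card) :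
    ∃ ε : Ω → Bool, c ≤ |R + ∑ ω ∈ W, d ω (ε ω)| ∧ c ≤ |R' + ∑ ω ∈ W, d ω (!ε ω)| := by
  obtain ⟨E, lo, hE⟩ := sel_aux W d
  have hneg : ∀ ε : Ω → Bool, ∑ ω ∈ W, d ω (!ε ω)
      = ∑ ω ∈ W, (d ω true + d ω false) - ∑ ω ∈ W, d ω (ε ω) := by
    intro ε
    rw [← Finset.sum_sub_distrib]
    refine Finset.sum_congr rfl fun ω _ => ?_
    cases ε ω <;> simp
  have hgain := sum_gain W G hGW d hG
  by_contra hcon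
  push Not at hcon
  set T := R + R' + ∑ ω ∈ W, (d ω true + d ω false) with hT
  have hbad : ∀ X ⊆ W, |R + lo + ∑ ω ∈ X, (|d ω true - d ω false|)| < c ∨
      |T - (R + lo + ∑ ω ∈ X, (|d ω true - d ω false|))| < c := by
    intro X hX
    by_contra hno
    push Not at hno
    have h1 := hcon (E X) (by rw [hE X hX, ← add_assoc]; exact hno.1)
    rw [hneg, hE X hX] at h1
    have h2 := hno.2
    rw [hT] at h2
    have e : R + R' + ∑ ω ∈ W, (d ω true + d ω false) - (R + lo + ∑ ω ∈ X, |d ω true - d ω false|)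
      = R' + (∑ ω ∈ W, (d ω true + d ω false) - (lo + ∑ ω ∈ X, |d ω true - d ω false|)) := by ring
    rw [e] at h2
    linarith
  have h0 := hbad ∅ (empty_subset _)
  have h1 := hbad W Subset.rfl
  simp only [sum_empty, add_zero] at h0
  rcases h0 with h0 | h0 <;> rcases h1 with h1 | h1 <;> rw [abs_lt] at h0 h1
  · linarith
  · obtain ⟨X, hX, h2, h3⟩ := discrete_ivt W _ hd (R + lo) c (by linarith) (by linarith)
    rcases hbad X hX with h4 | h4 <;> rw [abs_lt] at h4 <;> linarith
  · obtain ⟨X, hX, h2, h3⟩ := discrete_ivt W _ hd (R + lo) (T + c) (by linarith) (by linarith)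
    rcases hbad X hX with h4 | h4 <;> rw [abs_lt] at h4 <;> linarith
  · linarith

lemma selB {Ω : Type*} [DecidableEq Ω] (Z : Finset Ω) (d : Ω → Bool → ℝ)
    (hG : ∀ ω ∈ Z, 2 ≤ |d ω true - d ω false|) (R c : ℝ) (hc : c ≤ Z.card) :
    ∃ ε : Ω → Bool, c ≤ |R + ∑ ω ∈ Z, d ω (ε ω)| := by
  obtain ⟨E, lo, hE⟩ := sel_aux Z d
  have hgain := sum_gain Z Z Subset.rfl d hG
  by_contra hcon
  push Not at hcon
  have h0 := hcon (E ∅)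
  have h1 := hcon (E Z)
  rw [hE _ (empty_subset _), sum_empty, abs_lt] at h0
  rw [hE _ Subset.rfl, abs_lt] at h1
  linarith

lemma selAll {Ω : Type*} [DecidableEq Ω] {q : ℕ} (W : Finset Ω) (cl : Ω → Fin q) (d : Ω → Bool → ℝ)
    (hd : ∀ ω, |d ω true - d ω false| ≤ 4) (c : ℝ)
    (G : Fin q → Finset Ω) (hGW : ∀ i, G i ⊆ W) (hGc : ∀ i, ∀ ω ∈ G i, cl ω = i)
    (hG : ∀ i, ∀ ω ∈ G i, 2 ≤ |d ω true - d ω false|)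
    (hc : ∀ i, 4 * c + 4 ≤ 2 * (G i).card) (R : Fin q → Bool → ℝ) :
    ∃ ε : Ω → Bool, ∀ i,
      c ≤ |R i false + ∑ ω ∈ W, (if cl ω = i then d ω (ε ω) else 0)| ∧
      c ≤ |R i true + ∑ ω ∈ W, (if cl ω = i then d ω (!ε ω) else 0)| := by
  have := fun i => selA (W.filter fun ω => cl ω = i) (G i)
    (fun ω h => mem_filter.2 ⟨hGW i h, hGc i ω h⟩) d hd (hG i) (R i false) (R i true) c (hc i)
  choose ε hε using this
  refine ⟨fun ω => ε (cl ω) ω, fun i => ?_⟩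
  have h1 : ∀ f : Ω → Bool → Bool, ∑ ω ∈ W, (if cl ω = i then d ω (f ω (ε (cl ω) ω)) else 0)
      = ∑ ω ∈ W.filter (fun ω => cl ω = i), d ω (f ω (ε i ω)) := by
    intro f
    rw [Finset.sum_filter]
    refine Finset.sum_congr rfl fun ω _ => ?_
    split_ifs with h
    · rw [h]
    · rfl
  rw [h1 (fun _ b => b), h1 (fun _ b => !b)]
  exact hε i

/-- sum of the diagonal of orientation `e` of the block `x` -/
def blockDiag {U V A' B' : Type*} (M : (U × Bool) ⊕ A' → (V × Bool) ⊕ B' → ℝ) (x : U × V) (e : Bool) : ℝ :=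
  M (Sum.inl (x.1, false)) (Sum.inl (x.2, e)) + M (Sum.inl (x.1, true)) (Sum.inl (x.2, !e))

lemma core {U V A' B' T I : Type*} [Fintype U] [Fintype V] [Fintype A'] [Fintype B'] [Fintype T]
    [DecidableEq U] [DecidableEq V] [DecidableEq A'] [DecidableEq B'] [DecidableEq T]
    (M : (U × Bool) ⊕ A' → (V × Bool) ⊕ B' → ℝ) (p s : U × V → T) (hps : ∀ x, p x ≠ s x)
    (own : T → I) (c : U × V → I) (hp : ∀ x, own (p x) = c x) (hs : ∀ x, own (s x) = c x)
    (hc : ∀ x y, (x.1 = y.1 ∨ x.2 = y.2) → c x = c y → x = y)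
    (hA : Fintype.card (U × Bool) + Fintype.card A' = Fintype.card T)
    (hB : Fintype.card (V × Bool) + Fintype.card B' = Fintype.card T)
    (hRC : Fintype.card (U × Bool) + Fintype.card (V × Bool) ≤ Fintype.card T) :
    ∃ Rr : T → ℝ, ∀ ε : U × V → Bool, ∃ L : (U × Bool) ⊕ A' → (V × Bool) ⊕ B' → T,
      (∀ a, Function.Bijective (L a)) ∧ (∀ b, Function.Bijective (fun a => L a b)) ∧
      ∀ t, ∑ a, ∑ b, (if L a b = t then M a b else 0) = Rr t +
        ∑ x, ((if p x = t then blockDiag M x (ε x) else 0) +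
          (if s x = t then blockDiag M x (!ε x) else 0)) := by
  let f : U × Bool → V × Bool → T := fun x y => if xor x.2 y.2 then s (x.1, y.1) else p (x.1, y.1)
  have hown : ∀ x y, own (f x y) = c (x.1, y.1) := by
    intro x y
    simp only [f]
    split_ifs
    · exact hs _
    · exact hp _
  obtain ⟨L₀, hL1, hL2, hL3⟩ := complete_latin (A' := A') (B' := B') f
    (by
      rintro ⟨x, a⟩ ⟨y, b⟩ ⟨y', b'⟩ h
      have h1 := congrArg own h
      rw [hown, hown] at h1
      have h2 := hc (x, y) (x, y') (Or.inl rfl) h1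
      simp only [Prod.mk.injEq, true_and] at h2
      subst h2
      have h3 := hps (x, y)
      have h4 := h3.symm
      simp only [f] at h
      revert h
      cases a <;> cases b <;> cases b' <;> simp [h3, h4])
    (by
      rintro ⟨y, b⟩ ⟨x, a⟩ ⟨x', a'⟩ h
      have h1 := congrArg own h
      simp only [hown] at h1
      have h2 := hc (x, y) (x', y) (Or.inr rfl) h1
      simp only [Prod.mk.injEq, and_true] at h2
      subst h2
      have h3 := hps (x, y)
      have h4 := h3.symm
      simp only [f] at h
      revert h
      cases a <;> cases b <;> cases a' <;> simp [h3, h4]) hA hB hRC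
  refine ⟨fun t => ∑ r, ∑ b', (if L₀ (Sum.inl r) (Sum.inr b') = t then M (Sum.inl r) (Sum.inr b') else 0)
    + ∑ a', ∑ b, (if L₀ (Sum.inr a') b = t then M (Sum.inr a') b else 0), fun ε => ?_⟩
  let φ : U → (V × Bool) ⊕ B' → (V × Bool) ⊕ B' :=
    fun x => Sum.map (fun y => (y.1, xor y.2 (ε (x, y.1)))) id
  let ψ : V → (U × Bool) ⊕ A' → (U × Bool) ⊕ A' :=
    fun y => Sum.map (fun x => (x.1, xor x.2 (ε (x.1, y)))) id
  have hφ : ∀ x, Function.Involutive (φ x) := by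
    rintro x (⟨y, b⟩ | b) <;> simp [φ]
  have hψ : ∀ y, Function.Involutive (ψ y) := by
    rintro y (⟨x, a⟩ | a) <;> simp [ψ]
  let L : (U × Bool) ⊕ A' → (V × Bool) ⊕ B' → T :=
    Sum.elim (fun x b => L₀ (Sum.inl x) (φ x.1 b)) (fun a b => L₀ (Sum.inr a) b)
  have hLcol : ∀ y a, L a (Sum.inl y) = L₀ (ψ y.1 a) (Sum.inl y) := by
    rintro ⟨y, b⟩ (⟨x, a⟩ | a)
    · simp only [L, φ, ψ, Sum.elim_inl, Sum.map_inl, hL3, f]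
      congr 2
      cases a <;> cases b <;> cases ε (x, y) <;> rfl
    · simp [L, ψ]
  refine ⟨L, ?_, ?_, ?_⟩
  · rintro (x | a)
    · exact (hL1 (Sum.inl x)).comp (hφ x.1).bijective
    · exact hL1 _
  · rintro (y | b)
    · simp only [hLcol]
      exact (hL2 (Sum.inl y)).comp (hψ y.1).bijective
    · have : (fun a => L a (Sum.inr b)) = fun a => L₀ a (Sum.inr b) := by
        funext a
        rcases a with x | a <;> simp [L, φ]
      rw [this]; exact hL2 _
  · intro t
    rw [Fintype.sum_sum_type]
    simp only [Fintype.sum_sum_type (α₁ := V × Bool) (α₂ := B')]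
    rw [Finset.sum_add_distrib]
    have h1 : ∑ r : U × Bool, ∑ y : V × Bool,
        (if L (Sum.inl r) (Sum.inl y) = t then M (Sum.inl r) (Sum.inl y) else 0)
        = ∑ x, ((if p x = t then blockDiag M x (ε x) else 0) +
          (if s x = t then blockDiag M x (!ε x) else 0)) := by
      rw [Fintype.sum_prod_type, Fintype.sum_prod_type]
      refine Finset.sum_congr rfl fun x _ => ?_
      rw [Finset.sum_comm]
      rw [Fintype.sum_prod_type]
      refine Finset.sum_congr rfl fun y _ => ?_
      simp only [Fintype.sum_bool, L, φ, Sum.elim_inl, Sum.map_inl, hL3, f, blockDiag]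
      have h3 := hps (x, y)
      by_cases e1 : p (x, y) = t
      · have e2 : s (x, y) ≠ t := fun h => h3 (e1.trans h.symm)
        cases ε (x, y) <;> simp [e1, e2] <;> ring
      · by_cases e2 : s (x, y) = t
        · cases ε (x, y) <;> simp [e1, e2] <;> ring
        · cases ε (x, y) <;> simp [e1, e2]
    rw [h1]
    have h2 : ∀ (r : U × Bool) b', L (Sum.inl r) (Sum.inr b') = L₀ (Sum.inl r) (Sum.inr b') := by
      intro r b'; simp [L, φ]
    have h3 : ∀ (a : A') b, L (Sum.inr a) b = L₀ (Sum.inr a) b := by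
      intro r b'; simp [L]
    simp only [h2, h3]
    ring

lemma assemble_even {U V A' B' : Type*} [Fintype U] [Fintype V] [Fintype A'] [Fintype B']
    [DecidableEq U] [DecidableEq V] [DecidableEq A'] [DecidableEq B'] {q : ℕ}
    (M : (U × Bool) ⊕ A' → (V × Bool) ⊕ B' → ℝ) (c : U × V → Fin q)
    (hc : ∀ x y, (x.1 = y.1 ∨ x.2 = y.2) → c x = c y → x = y)
    (hA : Fintype.card (U × Bool) + Fintype.card A' = Fintype.card (Fin q × Bool))
    (hB : Fintype.card (V × Bool) + Fintype.card B' = Fintype.card (Fin q × Bool))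
    (hRC : Fintype.card (U × Bool) + Fintype.card (V × Bool) ≤ Fintype.card (Fin q × Bool))
    (hd : ∀ x, |blockDiag M x true - blockDiag M x false| ≤ 4)
    (X : Fin q → Finset (U × V)) (hX : ∀ i, ∀ x ∈ X i, c x = i)
    (hX2 : ∀ i, ∀ x ∈ X i, 2 ≤ |blockDiag M x true - blockDiag M x false|) (b : ℝ)
    (hb : ∀ i, 4 * b + 4 ≤ 2 * (X i).card) :
    ∃ L : (U × Bool) ⊕ A' → (V × Bool) ⊕ B' → Fin q × Bool,
      (∀ a, Function.Bijective (L a)) ∧ (∀ b, Function.Bijective (fun a => L a b)) ∧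
      ∀ t, b ≤ |∑ x, ∑ y, (if L x y = t then M x y else 0)| := by
  obtain ⟨Rr, hR⟩ := core M (fun x => (c x, false)) (fun x => (c x, true)) (by simp) Prod.fst c
    (fun _ => rfl) (fun _ => rfl) hc hA hB hRC
  obtain ⟨ε, hε⟩ := selAll univ c (blockDiag M) hd b X (fun _ => subset_univ _) hX hX2 hb
    (fun i e => Rr (i, e))
  obtain ⟨L, h1, h2, h3⟩ := hR ε
  refine ⟨L, h1, h2, ?_⟩
  rintro ⟨i, e⟩
  rw [h3]
  cases e
  · simpa using (hε i).1
  · simpa using (hε i).2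

lemma assemble_odd {U V A' B' : Type*} [Fintype U] [Fintype V] [Fintype A'] [Fintype B']
    [DecidableEq U] [DecidableEq V] [DecidableEq A'] [DecidableEq B'] {q : ℕ}
    (M : (U × Bool) ⊕ A' → (V × Bool) ⊕ B' → ℝ) (c : U × V → Fin q)
    (hc : ∀ x y, (x.1 = y.1 ∨ x.2 = y.2) → c x = c y → x = y)
    (hA : Fintype.card (U × Bool) + Fintype.card A' = Fintype.card (Option (Fin q × Bool)))
    (hB : Fintype.card (V × Bool) + Fintype.card B' = Fintype.card (Option (Fin q × Bool)))
    (hRC : Fintype.card (U × Bool) + Fintype.card (V × Bool) ≤ Fintype.card (Option (Fin q × Bool)))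
    (hd : ∀ x, |blockDiag M x true - blockDiag M x false| ≤ 4)
    (X : Fin q → Finset (U × V)) (hX : ∀ i, ∀ x ∈ X i, c x = i)
    (hX2 : ∀ i, ∀ x ∈ X i, 2 ≤ |blockDiag M x true - blockDiag M x false|) (b : ℝ)
    (hb : ∀ i, 4 * b + 4 ≤ 2 * (X i).card) (i₀ : Fin q) (Z : Finset (U × V))
    (hZ : ∀ x ∈ Z, c x = i₀) (hZX : ∀ i, Disjoint (X i) Z)
    (hZ2 : ∀ x ∈ Z, 2 ≤ |blockDiag M x true - blockDiag M x false|) (hbZ : b ≤ Z.card) :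
    ∃ L : (U × Bool) ⊕ A' → (V × Bool) ⊕ B' → Option (Fin q × Bool),
      (∀ a, Function.Bijective (L a)) ∧ (∀ b, Function.Bijective (fun a => L a b)) ∧
      ∀ t, b ≤ |∑ x, ∑ y, (if L x y = t then M x y else 0)| := by
  obtain ⟨Rr, hR⟩ := core M (fun x => if x ∈ Z then none else some (c x, false))
    (fun x => if x ∈ Z then some (i₀, false) else some (c x, true))
    (by intro x; by_cases h : x ∈ Z <;> simp [h]) (fun t => t.elim i₀ Prod.fst) c
    (by intro x; by_cases h : x ∈ Z <;> simp [h, hZ]) (by intro x; by_cases h : x ∈ Z <;> simp [h, hZ])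
    hc hA hB hRC
  obtain ⟨ε₁, hε₁⟩ := selB Z (blockDiag M) hZ2 (Rr none) b hbZ
  obtain ⟨ε, hε⟩ := selAll (univ \ Z) c (blockDiag M) hd b X
    (fun i x hx => mem_sdiff.2 ⟨mem_univ _, fun h => disjoint_left.1 (hZX i) hx h⟩) hX hX2 hb
    (fun i e => Rr (some (i, e)) + ∑ x ∈ Z, if i₀ = i ∧ e = false then blockDiag M x (!ε₁ x) else 0)
  obtain ⟨L, h1, h2, h3⟩ := hR (fun x => if x ∈ Z then ε₁ x else ε x)
  refine ⟨L, h1, h2, ?_⟩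
  have hsplit : ∀ F : U × V → ℝ, ∑ x, F x = ∑ x ∈ Z, F x + ∑ x ∈ univ \ Z, F x := by
    intro F
    rw [add_comm, Finset.sum_sdiff (subset_univ Z)]
  have hin : ∀ F F' : U × V → ℝ, (∀ x ∈ Z, F x = F' x) → ∑ x ∈ Z, F x = ∑ x ∈ Z, F' x :=
    fun F F' h => Finset.sum_congr rfl h
  have hout : ∀ F F' : U × V → ℝ, (∀ x, x ∉ Z → F x = F' x) →
      ∑ x ∈ univ \ Z, F x = ∑ x ∈ univ \ Z, F' x :=
    fun F F' h => Finset.sum_congr rfl fun x hx => h x (mem_sdiff.1 hx).2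
  intro t
  rw [h3, hsplit]
  rcases t with _ | ⟨i, e⟩
  · rw [hin _ (fun x => blockDiag M x (ε₁ x)) (by intro x hx; simp [hx]),
      hout _ (fun x => 0) (by intro x hx; simp [hx])]
    simpa using hε₁
  · rw [← add_assoc]
    cases e
    · rw [hin _ (fun x => if i₀ = i ∧ false = false then blockDiag M x (!ε₁ x) else 0)
        (by intro x hx; simp [hx]),
        hout _ (fun x => if c x = i then blockDiag M x (ε x) else 0) (by intro x hx; simp [hx])]
      exact (hε i).1
    · rw [hin _ (fun x => if i₀ = i ∧ true = false then blockDiag M x (!ε₁ x) else 0)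
        (by intro x hx; simp [hx]),
        hout _ (fun x => if c x = i then blockDiag M x (!ε x) else 0) (by intro x hx; simp [hx])]
      exact (hε i).2

lemma top_subset {α : Type*} [DecidableEq α] (w : α → ℕ) (h N : ℕ) (hN : h ≤ N) (P : Finset α)
    (hP : P.card ≤ N) : ∃ U ⊆ P, U.card ≤ h ∧ h * ∑ x ∈ P, w x ≤ N * ∑ x ∈ U, w x := by
  suffices H : ∀ k, ∀ P : Finset α, P.card = h + k →
      ∃ U ⊆ P, U.card ≤ h ∧ h * ∑ x ∈ P, w x ≤ (h + k) * ∑ x ∈ U, w x by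
    by_cases hle : P.card ≤ h
    · exact ⟨P, Subset.rfl, hle, Nat.mul_le_mul_right _ hN⟩
    · obtain ⟨U, h1, h2, h3⟩ := H (P.card - h) P (by omega)
      exact ⟨U, h1, h2, h3.trans (Nat.mul_le_mul_right _ (by omega))⟩
  intro k
  induction k with
  | zero => intro P hP; exact ⟨P, Subset.rfl, by omega, by simp⟩
  | succ k ih =>
    intro P hP
    rcases Nat.eq_zero_or_pos h with rfl | hpos
    · exact ⟨∅, by simp, by simp, by simp⟩
    have hne : P.Nonempty := card_pos.1 (by omega)
    obtain ⟨e, he, hmin⟩ := exists_min_image P w hne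
    obtain ⟨U, h1, h2, h3⟩ := ih (P.erase e) (by rw [card_erase_of_mem he]; omega)
    refine ⟨U, h1.trans (erase_subset _ _), h2, ?_⟩
    have hs : ∑ x ∈ P.erase e, w x + w e = ∑ x ∈ P, w x := sum_erase_add _ _ he
    have hle : (h + k) * w e ≤ ∑ x ∈ P.erase e, w x := by
      have := card_nsmul_le_sum (P.erase e) w (w e) (fun x hx => hmin x (mem_of_mem_erase hx))
      rw [card_erase_of_mem he, hP, smul_eq_mul] at this
      exact this
    have hpos' : 0 < h + k := by omega
    refine Nat.le_of_mul_le_mul_left ?_ hpos'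
    rw [← hs]
    generalize ∑ x ∈ P.erase e, w x = S at *
    generalize ∑ x ∈ U, w x = S' at *
    nlinarith [Nat.mul_le_mul_left h hle, Nat.mul_le_mul_left (h + (k + 1)) h3]

def sumPairs (n z : ℕ) : Finset (Fin n × Fin n) :=
  univ.filter fun p => p.1 < p.2 ∧ ((p.1 : ℕ) + (p.2 : ℕ)) % n = z

def pairMap {n : ℕ} (P : Finset (Fin n × Fin n)) (x : P × Bool) : Fin n :=
  if x.2 then x.1.1.2 else x.1.1.1

lemma pairMap_injective {n z : ℕ} (P : Finset (Fin n × Fin n)) (hP : P ⊆ sumPairs n z) :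
    Function.Injective (pairMap P) := by
  have key : ∀ a b b' : Fin n, ((a : ℕ) + (b : ℕ)) % n = ((a : ℕ) + (b' : ℕ)) % n → b = b' := by
    intro a b b' h
    have h1 : (b : ℕ) ≡ b' [MOD n] := Nat.ModEq.add_left_cancel' (a : ℕ) h
    exact Fin.ext (h1.eq_of_lt_of_lt b.2 b'.2)
  rintro ⟨⟨⟨a, b⟩, hp⟩, e⟩ ⟨⟨⟨a', b'⟩, hp'⟩, e'⟩ h
  have h1 := hP hp
  have h2 := hP hp'
  simp only [sumPairs, mem_filter, mem_univ, true_and] at h1 h2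
  cases e <;> cases e' <;> simp only [pairMap, if_true, Bool.false_eq_true, if_false] at h
  · subst h
    have := key a b b' (h1.2.trans h2.2.symm)
    subst this
    rfl
  · subst h
    have := key a b a' (h1.2.trans (by rw [add_comm]; exact h2.2.symm))
    subst this
    exact absurd h1.1 (not_lt.2 h2.1.le)
  · subst h
    have := key b a b' (by rw [add_comm]; exact h1.2.trans h2.2.symm)
    subst this
    exact absurd h1.1 (not_lt.2 h2.1.le)
  · subst h
    have := key b a a' (by rw [add_comm, h1.2, add_comm]; exact h2.2.symm)
    subst this
    rfl

lemma sumPairs_card (n z : ℕ) : (sumPairs n z).card ≤ n / 2 := by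
  have := Fintype.card_le_of_injective _ (pairMap_injective (sumPairs n z) Subset.rfl)
  simp at this
  omega

def IsSw {n : ℕ} (M : Fin n → Fin n → ℤ) (p x : Fin n × Fin n) : Prop :=
  M p.1 x.1 + M p.2 x.2 ≠ M p.1 x.2 + M p.2 x.1

instance {n : ℕ} (M : Fin n → Fin n → ℤ) (p x : Fin n × Fin n) : Decidable (IsSw M p x) :=
  inferInstanceAs (Decidable (_ ≠ _))

lemma find_blocks (n : ℕ) (hn : 4 ≤ n) (M : Fin n → Fin n → ℤ) (η : ℝ)
    (hs : (switcherCount n M : ℝ) ≥ η * n ^ 4) :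
    ∃ z w : ℕ, ∃ P ⊆ sumPairs n z, ∃ Q ⊆ sumPairs n w, P.card ≤ n / 4 ∧ Q.card ≤ n / 4 ∧
      4 * ((n / 4 : ℕ) : ℝ) ^ 2 * η ≤ ((univ.filter fun x : P × Q => IsSw M x.1.1 x.2.1).card : ℝ) := by
  unfold switcherCount at hs
  set S := (univ.filter fun p : Fin n × Fin n × Fin n × Fin n =>
    p.1 < p.2.1 ∧ p.2.2.1 < p.2.2.2 ∧
      M p.1 p.2.2.1 + M p.2.1 p.2.2.2 ≠ M p.1 p.2.2.2 + M p.2.1 p.2.2.1) with hS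
  have hn0 : (0 : ℝ) < n := by exact_mod_cast (by omega : 0 < n)
  obtain ⟨⟨z, w⟩, hzw, hfib⟩ := exists_le_card_fiber_of_nsmul_le_card_of_maps_to
    (s := S) (t := range n ×ˢ range n)
    (f := fun p => (((p.1 : ℕ) + (p.2.1 : ℕ)) % n, ((p.2.2.1 : ℕ) + (p.2.2.2 : ℕ)) % n))
    (b := η * (n : ℝ) ^ 2)
    (by
      intro p _
      simp only [mem_product, mem_range]
      exact ⟨Nat.mod_lt _ (by omega), Nat.mod_lt _ (by omega)⟩)
    ⟨(0, 0), by simp only [mem_product, mem_range]; omega⟩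
    (by
      simp only [card_product, card_range, nsmul_eq_mul]
      push_cast
      refine le_trans (le_of_eq ?_) hs
      ring)
  have h1 : (S.filter fun p => (((p.1 : ℕ) + (p.2.1 : ℕ)) % n, ((p.2.2.1 : ℕ) + (p.2.2.2 : ℕ)) % n) = (z, w)).card
      ≤ ∑ p ∈ sumPairs n z, ((sumPairs n w).filter fun x => IsSw M p x).card := by
    have e : ∑ p ∈ sumPairs n z, ((sumPairs n w).filter fun x => IsSw M p x).card
        = ((sumPairs n z ×ˢ sumPairs n w).filter fun y => IsSw M y.1 y.2).card := by
      rw [card_filter, sum_product]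
      exact Finset.sum_congr rfl fun p _ => by rw [card_filter]
    rw [e]
    apply card_le_card_of_injOn (fun p => ((p.1, p.2.1), (p.2.2.1, p.2.2.2)))
    · rintro ⟨a, c, b, d⟩ h
      simp only [hS, mem_coe, mem_filter, mem_univ, true_and, Prod.mk.injEq] at h
      rw [mem_coe]
      exact mem_filter.2 ⟨mem_product.2 ⟨mem_filter.2 ⟨mem_univ _, h.1.1, h.2.1⟩,
        mem_filter.2 ⟨mem_univ _, h.1.2.1, h.2.2⟩⟩, h.1.2.2⟩
    · rintro ⟨a, c, b, d⟩ _ ⟨a', c', b', d'⟩ _ h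
      simp only [Prod.mk.injEq] at h
      obtain ⟨⟨rfl, rfl⟩, rfl, rfl⟩ := h
      rfl
  obtain ⟨P, hP, hPc, hPs⟩ := top_subset (fun p => ((sumPairs n w).filter fun x => IsSw M p x).card)
    (n / 4) (n / 2) (by omega) (sumPairs n z) (sumPairs_card n z)
  have e2 : ∑ p ∈ P, ((sumPairs n w).filter fun x => IsSw M p x).card
      = ∑ x ∈ sumPairs n w, (P.filter fun p => IsSw M p x).card := by
    simp only [card_filter]
    rw [Finset.sum_comm]
  obtain ⟨Q, hQ, hQc, hQs⟩ := top_subset (fun x => (P.filter fun p => IsSw M p x).card)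
    (n / 4) (n / 2) (by omega) (sumPairs n w) (sumPairs_card n w)
  refine ⟨z, w, P, hP, Q, hQ, hPc, hQc, ?_⟩
  have e3 : (univ.filter fun x : P × Q => IsSw M x.1.1 x.2.1).card
      = ∑ x ∈ Q, (P.filter fun p => IsSw M p x).card := by
    simp only [card_filter]
    rw [Fintype.sum_prod_type, Finset.sum_comm]
    rw [← Finset.sum_coe_sort Q]
    refine Finset.sum_congr rfl fun x _ => ?_
    rw [← Finset.sum_coe_sort P]
  rw [e3]
  rw [e2] at hPs
  generalize ∑ x ∈ Q, (P.filter fun p => IsSw M p x).card = s3 at *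
  generalize ∑ x ∈ sumPairs n w, (P.filter fun p => IsSw M p x).card = s2 at *
  generalize ∑ p ∈ sumPairs n z, ((sumPairs n w).filter fun x => IsSw M p x).card = s1 at *
  have h2 : η * (n : ℝ) ^ 2 ≤ s1 := hfib.trans (by exact_mod_cast h1)
  have hq : 2 * ((n / 2 : ℕ) : ℝ) ≤ n := by
    have : 2 * (n / 2) ≤ n := by omega
    exact_mod_cast this
  have hq0 : (0 : ℝ) < ((n / 2 : ℕ) : ℝ) := by
    have : 0 < n / 2 := by omega
    exact_mod_cast this
  have hP' : ((n / 4 : ℕ) : ℝ) * s1 ≤ ((n / 2 : ℕ) : ℝ) * s2 := by exact_mod_cast hPs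
  have hQ' : ((n / 4 : ℕ) : ℝ) * s2 ≤ ((n / 2 : ℕ) : ℝ) * s3 := by exact_mod_cast hQs
  have hh : (0 : ℝ) ≤ ((n / 4 : ℕ) : ℝ) := Nat.cast_nonneg _
  generalize ((n / 4 : ℕ) : ℝ) = H at *
  generalize ((n / 2 : ℕ) : ℝ) = q at *
  by_cases hη : η ≤ 0
  · have : (0 : ℝ) ≤ s3 := Nat.cast_nonneg _
    nlinarith [sq_nonneg H]
  push Not at hη
  have h3 : η * (4 * q ^ 2) ≤ s1 := by
    refine le_trans ?_ h2
    apply mul_le_mul_of_nonneg_left _ hη.le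
    nlinarith
  have h4 : q ^ 2 * (4 * H ^ 2 * η) ≤ q ^ 2 * s3 := by
    calc q ^ 2 * (4 * H ^ 2 * η) = H * (H * (η * (4 * q ^ 2))) := by ring
      _ ≤ H * (H * s1) := by gcongr
      _ ≤ H * (q * s2) := by gcongr
      _ = q * (H * s2) := by ring
      _ ≤ q * (q * s3) := by gcongr
      _ = _ := by ring
  exact le_of_mul_le_mul_left h4 (by positivity)

lemma to_factorization {n : ℕ} {A B T : Type*} [Fintype A] [Fintype B] [Fintype T] [DecidableEq T]
    [DecidableEq B] (eA : A ≃ Fin n) (eB : B ≃ Fin n) (eT : Fin n ≃ T) (M : Fin n → Fin n → ℤ) (L : A → B → T)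
    (h1 : ∀ a, Function.Bijective (L a)) (h2 : ∀ b, Function.Bijective (fun a => L a b)) :
    ∃ π : Fin n → Equiv.Perm (Fin n), IsOneFactorization n π ∧
      ∀ t, ∑ i, (M i (π t i) : ℝ) = ∑ a, ∑ b, if L a b = eT t then (M (eA a) (eB b) : ℝ) else 0 := by
  let g : Fin n → Fin n → Fin n := fun t i =>
    eB ((Equiv.ofBijective _ (h1 (eA.symm i))).symm (eT t))
  have hg : ∀ t i j, g t i = j ↔ L (eA.symm i) (eB.symm j) = eT t := by
    intro t i j
    simp only [g]
    rw [← Equiv.eq_symm_apply, Equiv.symm_apply_eq, Equiv.ofBijective_apply]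
    exact eq_comm
  have hinj : ∀ t, Function.Injective (g t) := by
    intro t i i' h
    have e1 := (hg t i _).1 rfl
    have e2 := (hg t i' _).1 rfl
    rw [← h] at e2
    exact eA.symm.injective ((h2 (eB.symm (g t i))).1 (e1.trans e2.symm))
  refine ⟨fun t => Equiv.ofBijective (g t) (Finite.injective_iff_bijective.1 (hinj t)), ?_, ?_⟩
  · intro i j
    refine ⟨eT.symm (L (eA.symm i) (eB.symm j)), ?_, ?_⟩
    · simp only [Equiv.ofBijective_apply]
      rw [hg]; simp
    · intro t ht
      simp only [Equiv.ofBijective_apply] at ht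
      rw [hg] at ht
      rw [ht]; simp
  · intro t
    rw [← Equiv.sum_comp eA]
    refine Finset.sum_congr rfl fun a _ => ?_
    have : ∀ b, (if L a b = eT t then (M (eA a) (eB b) : ℝ) else 0)
        = if b = eB.symm (g t (eA a)) then (M (eA a) (eB b) : ℝ) else 0 := by
      intro b
      have e := hg t (eA a) (eB b)
      simp only [Equiv.symm_apply_apply] at e
      have : (L a b = eT t) ↔ b = eB.symm (g t (eA a)) := by
        rw [← e, Equiv.eq_symm_apply]; exact eq_comm
      simp only [this]
    simp only [this, Finset.sum_ite_eq', mem_univ, if_true, Equiv.apply_symm_apply, Equiv.ofBijective_apply]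

lemma numerics (η : ℝ) (hη : 0 < η) (hη1 : η ≤ 1) (n : ℕ) (hn : 32 ≤ η * n) (hn12 : 12 ≤ n) :
    ∃ K k' : ℕ, η * n / 4 - 4 ≤ K ∧ η * n / 8 - 3 ≤ k' ∧
      ((K : ℝ) + k') * (2 * (n / 4 : ℕ)) ≤ 4 * ((n / 4 : ℕ) : ℝ) ^ 2 * η ∧
      (k' : ℝ) + (n / 2 : ℕ) * K + K * (2 * (n / 4 : ℕ)) ≤ 4 * ((n / 4 : ℕ) : ℝ) ^ 2 * η := by
  have hK := Nat.floor_le (a := η * n / 4 - 3) (by linarith)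
  have hK' := Nat.lt_floor_add_one (η * n / 4 - 3)
  have hk := Nat.floor_le (a := η * n / 8 - 2) (by linarith)
  have hk' := Nat.lt_floor_add_one (η * n / 8 - 2)
  refine ⟨⌊η * n / 4 - 3⌋₊, ⌊η * n / 8 - 2⌋₊, by linarith, by linarith, ?_, ?_⟩
  all_goals
    have hh : (n : ℝ) ≤ 4 * ((n / 4 : ℕ) : ℝ) + 3 := by
      have : n ≤ 4 * (n / 4) + 3 := by omega
      exact_mod_cast this
    have hq : ((n / 2 : ℕ) : ℝ) + 2 * ((n / 4 : ℕ) : ℝ) ≤ n := by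
      have : (n / 2) + 2 * (n / 4) ≤ n := by omega
      exact_mod_cast this
    have hn12' : (12 : ℝ) ≤ n := by exact_mod_cast hn12
    have hK0 : (0 : ℝ) ≤ ⌊η * n / 4 - 3⌋₊ := Nat.cast_nonneg _
    have hh0 : (0 : ℝ) ≤ ((n / 4 : ℕ) : ℝ) := Nat.cast_nonneg _
    generalize ((n / 4 : ℕ) : ℝ) = H at *
    generalize ((n / 2 : ℕ) : ℝ) = q at *
    generalize (⌊η * n / 4 - 3⌋₊ : ℝ) = K at *
    generalize (⌊η * n / 8 - 2⌋₊ : ℝ) = k at *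
    generalize (n : ℝ) = x at *
  · have h1 : K + k ≤ 2 * H * η := by nlinarith
    nlinarith
  · have h1 : K * (q + 2 * H) ≤ K * x := by gcongr
    have h2 : K * x ≤ (η * x / 4 - 3) * x := by gcongr
    have h3 : (x - 3) ^ 2 ≤ (4 * H) ^ 2 := by
      apply pow_le_pow_left₀ <;> linarith
    have h4 : η * (x - 3) ^ 2 ≤ η * (4 * H) ^ 2 := by gcongr
    nlinarith

theorem many_switchers_case :
    ∀ η : ℝ, 0 < η →
    ∃ n₀ : ℕ, ∀ n : ℕ, n₀ ≤ n →
    ∀ M : Fin n → Fin n → ℤ, IsSigning n M →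
    (switcherCount n M : ℝ) ≥ η * n ^ 4 →
    ∃ π : Fin n → Equiv.Perm (Fin n), IsOneFactorization n π ∧
      ∀ t : Fin n, |(∑ i, (M i (π t i) : ℝ))| ≥ (η / 8 - 3 / n) * n := by
  intro η hη
  refine ⟨max 12 ⌈32 / η⌉₊, fun n hn M hM hs => ?_⟩
  have hn12 : 12 ≤ n := le_trans (le_max_left _ _) hn
  have hn32 : 32 ≤ η * n := by
    have h1 : ⌈32 / η⌉₊ ≤ n := le_trans (le_max_right _ _) hn
    have h2 : 32 / η ≤ n := Nat.ceil_le.1 h1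
    rw [div_le_iff₀ hη] at h2
    linarith
  have hnpos : (0 : ℝ) < n := by exact_mod_cast (by omega : 0 < n)
  have hη1 : η ≤ 1 := by
    have h1 : switcherCount n M ≤ n ^ 4 := by
      unfold switcherCount
      refine (card_le_univ _).trans (le_of_eq ?_)
      simp only [Fintype.card_prod, Fintype.card_fin]
      ring
    have h2 : (switcherCount n M : ℝ) ≤ (n : ℝ) ^ 4 := by exact_mod_cast h1
    have h3 : η * (n : ℝ) ^ 4 ≤ 1 * (n : ℝ) ^ 4 := by linarith
    exact le_of_mul_le_mul_right h3 (by positivity)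
  have hbd : (η / 8 - 3 / n) * n = η * n / 8 - 3 := by
    field_simp
  rw [hbd]
  obtain ⟨z, w, P, hP, Q, hQ, hPc, hQc, hG⟩ := find_blocks n (by omega) M η hs
  obtain ⟨K, k', hK, hk', hnum1, hnum2⟩ := numerics η hη hη1 n hn32 hn12
  set G := (univ.filter fun x : P × Q => IsSw M x.1.1 x.2.1) with hGdef
  have hnum1' : (K + k') * (2 * (n / 4)) ≤ G.card := by exact_mod_cast hnum1.trans hG
  have hnum2' : k' + n / 2 * K + K * (2 * (n / 4)) ≤ G.card := by exact_mod_cast hnum2.trans hG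
  obtain ⟨c, hc, X, hX⟩ := block_coloring (U := P) (V := Q) (2 * (n / 4)) (n / 2)
    (by simp; omega) (by omega) (by omega) G (fun i => if i = 0 then K + k' else K)
    (by
      intro i hi
      rcases Nat.eq_zero_or_pos i with rfl | hpos
      · simpa using hnum1'
      · have h1 : ∑ j ∈ range i, (if j = 0 then K + k' else K) ≤ k' + i * K := by
          obtain ⟨i, rfl⟩ : ∃ i', i = i' + 1 := ⟨i - 1, by omega⟩
          rw [Finset.sum_range_succ']
          simp
          ring_nf
          rfl
        have h2 : i * K ≤ n / 2 * K := Nat.mul_le_mul_right _ hi.le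
        simp only [if_neg (by omega : ¬ i = 0)]
        omega)
  have hPi := pairMap_injective P hP
  have hQi := pairMap_injective Q hQ
  classical
  let A' := {i // i ∈ (Set.range (pairMap P))ᶜ}
  let B' := {i // i ∈ (Set.range (pairMap Q))ᶜ}
  let eA : (P × Bool) ⊕ A' ≃ Fin n :=
    ((Equiv.ofInjective _ hPi).sumCongr (Equiv.refl _)).trans (Equiv.Set.sumCompl _)
  let eB : (Q × Bool) ⊕ B' ≃ Fin n :=
    ((Equiv.ofInjective _ hQi).sumCongr (Equiv.refl _)).trans (Equiv.Set.sumCompl _)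
  have heA : ∀ x, eA (Sum.inl x) = pairMap P x := fun x => rfl
  have heB : ∀ x, eB (Sum.inl x) = pairMap Q x := fun x => rfl
  have hcA : Fintype.card (P × Bool) + Fintype.card A' = n := by
    rw [← Fintype.card_sum, Fintype.card_congr eA, Fintype.card_fin]
  have hcB : Fintype.card (Q × Bool) + Fintype.card B' = n := by
    rw [← Fintype.card_sum, Fintype.card_congr eB, Fintype.card_fin]
  have hcAB : Fintype.card (P × Bool) + Fintype.card (Q × Bool) ≤ n := by
    simp; omega
  let M' : (P × Bool) ⊕ A' → (Q × Bool) ⊕ B' → ℝ := fun a b => (M (eA a) (eB b) : ℝ)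
  have hdt : ∀ x : P × Q, blockDiag M' x true = ((M x.1.1.1 x.2.1.2 + M x.1.1.2 x.2.1.1 : ℤ) : ℝ) := by
    intro x; simp [blockDiag, M', heA, heB, pairMap]
  have hdf : ∀ x : P × Q, blockDiag M' x false = ((M x.1.1.1 x.2.1.1 + M x.1.1.2 x.2.1.2 : ℤ) : ℝ) := by
    intro x; simp [blockDiag, M', heA, heB, pairMap]
  have hd : ∀ x, |blockDiag M' x true - blockDiag M' x false| ≤ 4 := by
    intro x
    rw [hdt, hdf]
    norm_cast
    rw [abs_le]
    have h1 := hM x.1.1.1 x.2.1.1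
    have h2 := hM x.1.1.1 x.2.1.2
    have h3 := hM x.1.1.2 x.2.1.1
    have h4 := hM x.1.1.2 x.2.1.2
    omega
  have hd2 : ∀ x ∈ G, 2 ≤ |blockDiag M' x true - blockDiag M' x false| := by
    intro x hx
    have h0 : IsSw M x.1.1 x.2.1 := (mem_filter.1 hx).2
    unfold IsSw at h0
    rw [hdt, hdf]
    norm_cast
    rw [le_abs]
    have h1 := hM x.1.1.1 x.2.1.1
    have h2 := hM x.1.1.1 x.2.1.2
    have h3 := hM x.1.1.2 x.2.1.1
    have h4 := hM x.1.1.2 x.2.1.2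
    omega
  have hXK : ∀ i, K ≤ (X i).card := by
    intro i
    rw [(hX i).2.1]
    split_ifs <;> omega
  rcases Nat.even_or_odd' n with ⟨q', hq' | hq'⟩
  · have hT : Fintype.card (Fin (n / 2) × Bool) = n := by simp; omega
    obtain ⟨L, h1, h2, h3⟩ := assemble_even M' c hc (by rw [hT]; exact hcA) (by rw [hT]; exact hcB)
      (by rw [hT]; exact hcAB) hd X (fun i => (hX i).2.2) (fun i x hx => hd2 x ((hX i).1 hx))
      (η * n / 8 - 3) (fun i => by
        have : (K : ℝ) ≤ (X i).card := by exact_mod_cast hXK i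
        linarith)
    let eT : Fin n ≃ Fin (n / 2) × Bool := Fintype.equivOfCardEq (by rw [hT, Fintype.card_fin])
    obtain ⟨π, hπ, hS⟩ := to_factorization eA eB eT M L h1 h2
    refine ⟨π, hπ, fun t => ?_⟩
    rw [hS]
    exact h3 (eT t)
  · have hT : Fintype.card (Option (Fin (n / 2) × Bool)) = n := by simp; omega
    let i₀ : Fin (n / 2) := ⟨0, by omega⟩
    obtain ⟨Z, hZX, hZc⟩ := exists_subset_card_eq (s := X i₀) (n := k') (by
      rw [(hX i₀).2.1]; simp [i₀])
    obtain ⟨L, h1, h2, h3⟩ := assemble_odd M' c hc (by rw [hT]; exact hcA) (by rw [hT]; exact hcB)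
      (by rw [hT]; exact hcAB) hd (fun i => X i \ Z)
      (fun i x hx => (hX i).2.2 x (mem_sdiff.1 hx).1)
      (fun i x hx => hd2 x ((hX i).1 (mem_sdiff.1 hx).1))
      (η * n / 8 - 3) (fun i => by
        have h4 : K ≤ (X i \ Z).card := by
          by_cases hi : i = i₀
          · subst hi
            rw [card_sdiff_of_subset hZX, hZc, (hX _).2.1]
            simp [i₀]
          · have : X i \ Z = X i := by
              rw [Finset.sdiff_eq_self_iff_disjoint, disjoint_left]
              intro x hx hxZ
              exact hi (((hX i).2.2 x hx).symm.trans ((hX i₀).2.2 x (hZX hxZ)))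
            rw [this]
            exact hXK i
        have : (K : ℝ) ≤ (X i \ Z).card := by exact_mod_cast h4
        linarith)
      i₀ Z (fun x hx => (hX i₀).2.2 x (hZX hx)) (fun i => sdiff_disjoint)
      (fun x hx => hd2 x ((hX i₀).1 (hZX hx))) (by rw [hZc]; exact hk')
    let eT : Fin n ≃ Option (Fin (n / 2) × Bool) :=
      Fintype.equivOfCardEq (by rw [hT, Fintype.card_fin])
    obtain ⟨π, hπ, hS⟩ := to_factorization eA eB eT M L h1 h2
    refine ⟨π, hπ, fun t => ?_⟩
    rw [hS]
    exact h3 (eT t)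
end

section
/- For every real α with 0 < α ≤ 1/100 there exists n₀ such that for all n ≥ n₀ the following holds: for every signing M of K_{n,n}, if disc(M) ≤ α/3 and s(M) ≤ α²·n⁴/64, then there exists a balanced vector z : Fin n → ℤ such that either the number of pairs (i, j) with M i j ≠ z j is at most 4·√α·n², or the number of pairs (i, j) with M i j ≠ z i is at most 4·√α·n². -/
open Finset

lemma balance_aux (n : ℕ) (x : Fin n → ℤ) (hx : ∀ i, x i = 1 ∨ x i = -1)
    (h : (univ.filter fun i => x i = -1).card ≤ (univ.filter fun i => x i = 1).card) :
    ∃ z : Fin n → ℤ, IsBalanced n z ∧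
      (2 * ((univ.filter fun i => x i ≠ z i).card : ℤ) ≤ |∑ i, x i|) := by
  obtain ⟨U, hU, hUc⟩ := Finset.exists_subset_card_eq
    (s := univ.filter fun i => x i = 1)
    (n := ((univ.filter fun i => x i = 1).card - (univ.filter fun i => x i = -1).card) / 2)
    (by omega)
  have hU1 : ∀ i ∈ U, x i = 1 := fun i hi => by simpa using hU hi
  have hsum : ∑ i, x i = ((univ.filter fun i => x i = 1).card : ℤ)
      - ((univ.filter fun i => x i = -1).card : ℤ) := by
    rw [Finset.card_filter, Finset.card_filter]
    push_cast
    rw [← Finset.sum_sub_distrib]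
    refine Finset.sum_congr rfl fun i _ => ?_
    rcases hx i with h | h <;> simp [h]
  refine ⟨fun i => if i ∈ U then -1 else x i, ⟨?_, ?_⟩, ?_⟩
  · intro i
    by_cases hi : i ∈ U
    · simp [hi]
    · simpa [hi] using hx i
  · have e1 : (univ.filter fun i => (if i ∈ U then -1 else x i) = 1)
        = (univ.filter fun i => x i = 1) \ U := by
      ext i
      by_cases hi : i ∈ U <;> simp [hi]
    have e2 : (univ.filter fun i => (if i ∈ U then -1 else x i) = -1)
        = (univ.filter fun i => x i = -1) ∪ U := by
      ext i
      by_cases hi : i ∈ U <;> simp [hi]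
    have hd : Disjoint (univ.filter fun i => x i = -1) U := by
      rw [Finset.disjoint_left]
      intro i hi hi'
      have := hU1 i hi'
      simp [this] at hi
    rw [e1, e2, Finset.card_sdiff_of_subset hU, Finset.card_union_of_disjoint hd, hUc]
    rw [abs_le]
    constructor <;> omega
  · have e3 : (univ.filter fun i => x i ≠ (if i ∈ U then -1 else x i)) = U := by
      ext i
      by_cases hi : i ∈ U
      · simp [hi, hU1 i hi]
      · simp [hi]
    rw [e3, hUc, hsum]
    refine le_trans ?_ (le_abs_self _)
    omega

lemma balance_exists (n : ℕ) (x : Fin n → ℤ) (hx : ∀ i, x i = 1 ∨ x i = -1) :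
    ∃ z : Fin n → ℤ, IsBalanced n z ∧
      (2 * ((univ.filter fun i => x i ≠ z i).card : ℤ) ≤ |∑ i, x i|) := by
  rcases le_total (univ.filter fun i => x i = -1).card (univ.filter fun i => x i = 1).card
    with h | h
  · exact balance_aux n x hx h
  · obtain ⟨z, hz, hc⟩ := balance_aux n (fun i => - x i)
      (fun i => by rcases hx i with h | h <;> simp [h])
      (by simpa [neg_eq_iff_eq_neg] using h)
    refine ⟨fun i => - z i, ⟨fun i => ?_, ?_⟩, ?_⟩
    · rcases hz.1 i with h | h <;> simp [h]
    · have := hz.2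
      rw [abs_sub_comm]
      simpa [neg_eq_iff_eq_neg] using this
    · simpa [neg_eq_iff_eq_neg, abs_neg] using hc

/-- If a signing is close to having all rows equal to `x`, and has small discrepancy,
then `x` may be replaced by a balanced vector. -/
lemma close_balanced (n : ℕ) (hn : 1 ≤ n) (α : ℝ) (M : Fin n → Fin n → ℤ)
    (hM : IsSigning n M) (x : Fin n → ℤ) (hx : ∀ i, x i = 1 ∨ x i = -1)
    (hdisc : |(∑ i, ∑ j, (M i j : ℝ))| ≤ α / 3 * n ^ 2)
    (herr : ((univ.filter fun p : Fin n × Fin n => M p.1 p.2 ≠ x p.2).card : ℝ)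
      ≤ α / 2 * n ^ 2) :
    ∃ z : Fin n → ℤ, IsBalanced n z ∧
      ((univ.filter fun p : Fin n × Fin n => M p.1 p.2 ≠ z p.2).card : ℝ)
          ≤ 2 * α * n ^ 2 := by
  obtain ⟨z, hz, hc⟩ := balance_exists n x hx
  refine ⟨z, hz, ?_⟩
  have h1 : (univ.filter fun p : Fin n × Fin n => M p.1 p.2 ≠ z p.2).card ≤
      (univ.filter fun p : Fin n × Fin n => M p.1 p.2 ≠ x p.2).card +
      n * (univ.filter fun i => x i ≠ z i).card := by
    have : (univ.filter fun p : Fin n × Fin n => M p.1 p.2 ≠ z p.2) ⊆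
      (univ.filter fun p : Fin n × Fin n => M p.1 p.2 ≠ x p.2) ∪
      (univ ×ˢ (univ.filter fun i => x i ≠ z i)) := by
      intro p hp
      simp only [mem_filter, mem_univ, true_and, mem_union, mem_product] at hp ⊢
      by_contra hcon
      push Not at hcon
      exact hp (hcon.1.trans hcon.2)
    refine (card_le_card this).trans ((card_union_le _ _).trans ?_)
    simp [card_product]
  have h2 : (n : ℤ) * |∑ i, x i| ≤ |∑ i, ∑ j, M i j| +
      2 * ((univ.filter fun p : Fin n × Fin n => M p.1 p.2 ≠ x p.2).card : ℤ) := by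
    have e1 : (n : ℤ) * ∑ i, x i = ∑ i, ∑ j, M i j + ∑ p : Fin n × Fin n, (x p.2 - M p.1 p.2) := by
      rw [Finset.sum_sub_distrib, Fintype.sum_prod_type, Fintype.sum_prod_type]
      simp
    have e2 : |∑ p : Fin n × Fin n, (x p.2 - M p.1 p.2)| ≤
      2 * ((univ.filter fun p : Fin n × Fin n => M p.1 p.2 ≠ x p.2).card : ℤ) := by
      refine (Finset.abs_sum_le_sum_abs _ _).trans ?_
      rw [Finset.card_filter]
      push_cast
      rw [Finset.mul_sum]
      refine Finset.sum_le_sum fun p _ => ?_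
      rcases hM p.1 p.2 with h | h <;> rcases hx p.2 with h' | h' <;> simp [h, h']
    have e3 : (n : ℤ) * |∑ i, x i| = |(n : ℤ) * ∑ i, x i| := by
      rw [abs_mul]; simp
    rw [e3, e1]
    exact (abs_add_le _ _).trans (by linarith)
  have h2' : (n : ℝ) * ((|∑ i, x i| : ℤ) : ℝ) ≤ |∑ i, ∑ j, (M i j : ℝ)| +
      2 * ((univ.filter fun p : Fin n × Fin n => M p.1 p.2 ≠ x p.2).card : ℝ) := by
    exact_mod_cast h2
  have h1' : ((univ.filter fun p : Fin n × Fin n => M p.1 p.2 ≠ z p.2).card : ℝ) ≤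
      ((univ.filter fun p : Fin n × Fin n => M p.1 p.2 ≠ x p.2).card : ℝ) +
      n * ((univ.filter fun i => x i ≠ z i).card : ℝ) := by exact_mod_cast h1
  have hc' : 2 * ((univ.filter fun i => x i ≠ z i).card : ℝ) ≤ ((|∑ i, x i| : ℤ) : ℝ) := by
    exact_mod_cast hc
  have hc2 := mul_le_mul_of_nonneg_left hc' (Nat.cast_nonneg (α := ℝ) n)
  have h0 : (0 : ℝ) ≤ α / 3 * n ^ 2 := (abs_nonneg _).trans hdisc
  nlinarith

/-- Ordered switchers are at most four times the switchers. -/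
lemma ordered_le (n : ℕ) (M : Fin n → Fin n → ℤ) :
    (univ.filter fun q : (Fin n × Fin n) × (Fin n × Fin n) =>
      M q.1.1 q.2.2 + M q.2.1 q.1.2 ≠ M q.1.1 q.1.2 + M q.2.1 q.2.2).card
      ≤ 4 * switcherCount n M := by
  unfold switcherCount
  set S := (univ.filter fun p : Fin n × Fin n × Fin n × Fin n =>
    p.1 < p.2.1 ∧ p.2.2.1 < p.2.2.2 ∧
      M p.1 p.2.2.1 + M p.2.1 p.2.2.2 ≠ M p.1 p.2.2.2 + M p.2.1 p.2.2.1) with hS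
  have hsub : (univ.filter fun q : (Fin n × Fin n) × (Fin n × Fin n) =>
      M q.1.1 q.2.2 + M q.2.1 q.1.2 ≠ M q.1.1 q.1.2 + M q.2.1 q.2.2) ⊆
      ((S.image fun p => ((p.1, p.2.2.2), (p.2.1, p.2.2.1))) ∪
       (S.image fun p => ((p.2.1, p.2.2.2), (p.1, p.2.2.1)))) ∪
      ((S.image fun p => ((p.1, p.2.2.1), (p.2.1, p.2.2.2))) ∪
       (S.image fun p => ((p.2.1, p.2.2.1), (p.1, p.2.2.2)))) := by
    rintro ⟨⟨a, d⟩, ⟨c, b⟩⟩ hq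
    simp only [mem_filter, mem_univ, true_and] at hq
    simp only [mem_union, mem_image, hS, mem_filter, mem_univ, true_and]
    rcases lt_trichotomy a c with h | h | h
    · rcases lt_trichotomy b d with h' | h' | h'
      · exact Or.inl (Or.inl ⟨(a, c, b, d), ⟨h, h', by intro e; apply hq; linarith⟩, rfl⟩)
      · subst h'; exact absurd rfl hq
      · exact Or.inr (Or.inl ⟨(a, c, d, b), ⟨h, h', by intro e; apply hq; linarith⟩, rfl⟩)
    · subst h; exact absurd (add_comm _ _) hq
    · rcases lt_trichotomy b d with h' | h' | h'
      · exact Or.inl (Or.inr ⟨(c, a, b, d), ⟨h, h', by intro e; apply hq; linarith⟩, rfl⟩)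
      · subst h'; exact absurd rfl hq
      · exact Or.inr (Or.inr ⟨(c, a, d, b), ⟨h, h', by intro e; apply hq; linarith⟩, rfl⟩)
  refine (card_le_card hsub).trans ?_
  refine (card_union_le _ _).trans ?_
  refine (add_le_add (card_union_le _ _) (card_union_le _ _)).trans ?_
  have i1 := card_image_le (s := S)
    (f := fun p => ((p.1, p.2.2.2), (p.2.1, p.2.2.1)))
  have i2 := card_image_le (s := S)
    (f := fun p => ((p.2.1, p.2.2.2), (p.1, p.2.2.1)))
  have i3 := card_image_le (s := S)
    (f := fun p => ((p.1, p.2.2.1), (p.2.1, p.2.2.2)))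
  have i4 := card_image_le (s := S)
    (f := fun p => ((p.2.1, p.2.2.1), (p.1, p.2.2.2)))
  omega

/-- A good corner `(a, d)` exists. -/
lemma corner_exists (n : ℕ) (hn : 1 ≤ n) (M : Fin n → Fin n → ℤ) :
    ∃ a d : Fin n, n ^ 2 * (univ.filter fun p : Fin n × Fin n =>
      M a p.2 + M p.1 d ≠ M a d + M p.1 p.2).card ≤ 4 * switcherCount n M := by
  have : Nonempty (Fin n) := ⟨⟨0, hn⟩⟩
  have hT : (univ.filter fun q : (Fin n × Fin n) × (Fin n × Fin n) =>
      M q.1.1 q.2.2 + M q.2.1 q.1.2 ≠ M q.1.1 q.1.2 + M q.2.1 q.2.2).card =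
      ∑ r : Fin n × Fin n, (univ.filter fun p : Fin n × Fin n =>
      M r.1 p.2 + M p.1 r.2 ≠ M r.1 r.2 + M p.1 p.2).card := by
    simp only [Finset.card_filter]
    rw [Fintype.sum_prod_type]
  by_contra hcon
  push Not at hcon
  have hlt : ∑ r : Fin n × Fin n, 4 * switcherCount n M <
      ∑ r : Fin n × Fin n, n ^ 2 * (univ.filter fun p : Fin n × Fin n =>
      M r.1 p.2 + M p.1 r.2 ≠ M r.1 r.2 + M p.1 p.2).card :=
    Finset.sum_lt_sum_of_nonempty univ_nonempty fun r _ => hcon r.1 r.2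
  rw [Finset.sum_const, ← Finset.mul_sum, ← hT] at hlt
  simp only [card_univ, Fintype.card_prod, Fintype.card_fin, smul_eq_mul] at hlt
  have := ordered_le n M
  rw [← pow_two] at hlt
  exact absurd hlt (not_lt.mpr (Nat.mul_le_mul_left _ this))

/-- Few `-ε` entries in the column `y` force the matrix to be close to `x`. -/
lemma close_of_few (n : ℕ) (α : ℝ) (h0 : 0 < α) (h1 : α ≤ 1 / 100)
    (M : Fin n → Fin n → ℤ) (x y : Fin n → ℤ) (e : ℤ)
    (hE : ((univ.filter fun p : Fin n × Fin n => x p.2 + y p.1 ≠ e + M p.1 p.2).card : ℝ)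
      ≤ α ^ 2 / 16 * n ^ 2)
    (hq : ((univ.filter fun i => y i ≠ e).card : ℝ) ≤ α / 4 * n) :
    ((univ.filter fun p : Fin n × Fin n => M p.1 p.2 ≠ x p.2).card : ℝ)
      ≤ α / 2 * n ^ 2 := by
  have hc : (univ.filter fun p : Fin n × Fin n => M p.1 p.2 ≠ x p.2).card ≤
      (univ.filter fun p : Fin n × Fin n => x p.2 + y p.1 ≠ e + M p.1 p.2).card +
      (univ.filter fun i => y i ≠ e).card * n := by
    have : (univ.filter fun p : Fin n × Fin n => M p.1 p.2 ≠ x p.2) ⊆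
      (univ.filter fun p : Fin n × Fin n => x p.2 + y p.1 ≠ e + M p.1 p.2) ∪
      ((univ.filter fun i => y i ≠ e) ×ˢ univ) := by
      intro p hp
      simp only [mem_filter, mem_univ, true_and, and_true, mem_union, mem_product] at hp ⊢
      by_contra hcon
      push Not at hcon
      apply hp
      linarith [hcon.1, hcon.2]
    refine (card_le_card this).trans ((card_union_le _ _).trans ?_)
    simp [card_product]
  have hc' : ((univ.filter fun p : Fin n × Fin n => M p.1 p.2 ≠ x p.2).card : ℝ) ≤
      ((univ.filter fun p : Fin n × Fin n => x p.2 + y p.1 ≠ e + M p.1 p.2).card : ℝ) +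
      ((univ.filter fun i => y i ≠ e).card : ℝ) * n := by exact_mod_cast hc
  have hm := mul_le_mul_of_nonneg_right hq (Nat.cast_nonneg (α := ℝ) n)
  have hs : α ^ 2 / 16 * (n : ℝ) ^ 2 ≤ α / 4 * n ^ 2 :=
    mul_le_mul_of_nonneg_right (by nlinarith) (by positivity)
  nlinarith

lemma card_swap (n : ℕ) (P : Fin n → Fin n → Prop) [∀ i j, Decidable (P i j)] :
    (univ.filter fun p : Fin n × Fin n => P p.2 p.1).card =
    (univ.filter fun p : Fin n × Fin n => P p.1 p.2).card := by
  refine Finset.card_bij (fun p _ => (p.2, p.1)) ?_ ?_ ?_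
  · intro p hp; simpa using hp
  · rintro ⟨a, b⟩ _ ⟨c, d⟩ _ h; simp at h ⊢; tauto
  · rintro ⟨a, b⟩ h; exact ⟨(b, a), by simpa using h, rfl⟩

theorem low_disc_few_switchers_case :
    ∀ α : ℝ, 0 < α → α ≤ 1 / 100 →
    ∃ n₀ : ℕ, ∀ n : ℕ, n₀ ≤ n →
    ∀ M : Fin n → Fin n → ℤ, IsSigning n M →
    totalDisc n M ≤ α / 3 →
    (switcherCount n M : ℝ) ≤ α ^ 2 * n ^ 4 / 64 →
    ∃ z : Fin n → ℤ, IsBalanced n z ∧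
      ((((univ ×ˢ univ).filter fun p : Fin n × Fin n => M p.1 p.2 ≠ z p.2).card : ℝ)
          ≤ 4 * Real.sqrt α * n ^ 2 ∨
       (((univ ×ˢ univ).filter fun p : Fin n × Fin n => M p.1 p.2 ≠ z p.1).card : ℝ)
          ≤ 4 * Real.sqrt α * n ^ 2) := by
  intro α h0 h1
  refine ⟨1, fun n hn M hM hd hs => ?_⟩
  have hnpos : (0 : ℝ) < n := by exact_mod_cast hn
  have hdisc : |(∑ i, ∑ j, (M i j : ℝ))| ≤ α / 3 * n ^ 2 := by
    unfold totalDisc at hd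
    rwa [div_le_iff₀ (by positivity)] at hd
  have hsq : 2 * α * (n : ℝ) ^ 2 ≤ 4 * Real.sqrt α * n ^ 2 := by
    refine mul_le_mul_of_nonneg_right ?_ (by positivity)
    have hs0 := Real.sqrt_nonneg α
    have hs1 : Real.sqrt α ≤ 1 := Real.sqrt_le_one.mpr (by linarith)
    have := Real.mul_self_sqrt h0.le
    nlinarith
  obtain ⟨a, d, had⟩ := corner_exists n hn M
  have hE : ((univ.filter fun p : Fin n × Fin n =>
      M a p.2 + M p.1 d ≠ M a d + M p.1 p.2).card : ℝ) ≤ α ^ 2 / 16 * n ^ 2 := by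
    have had' : (n : ℝ) ^ 2 * ((univ.filter fun p : Fin n × Fin n =>
      M a p.2 + M p.1 d ≠ M a d + M p.1 p.2).card : ℝ) ≤ 4 * (switcherCount n M : ℝ) := by
      exact_mod_cast had
    have hn2 : (0 : ℝ) < (n : ℝ) ^ 2 := by positivity
    refine le_of_mul_le_mul_left ?_ hn2
    nlinarith
  have hpq : (univ.filter fun i => M i d ≠ M a d).card * (univ.filter fun j => M a j ≠ M a d).card
      ≤ (univ.filter fun p : Fin n × Fin n => M a p.2 + M p.1 d ≠ M a d + M p.1 p.2).card := by
    rw [← card_product]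
    refine card_le_card fun p hp => ?_
    simp only [mem_filter, mem_univ, true_and, mem_product] at hp ⊢
    obtain ⟨hp1, hp2⟩ := hp
    rcases hM a d with h | h <;> rcases hM p.1 d with h' | h' <;>
      rcases hM a p.2 with h'' | h'' <;> rcases hM p.1 p.2 with h3 | h3 <;>
      simp_all
  have hpq' : ((univ.filter fun i => M i d ≠ M a d).card : ℝ) *
      ((univ.filter fun j => M a j ≠ M a d).card : ℝ) ≤ α ^ 2 / 16 * n ^ 2 :=
    le_trans (by exact_mod_cast hpq) hE
  by_cases hq : ((univ.filter fun i => M i d ≠ M a d).card : ℝ) ≤ α / 4 * n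
  · obtain ⟨z, hz, hzc⟩ := close_balanced n hn α M hM (fun j => M a j) (hM a) hdisc
      (close_of_few n α h0 h1 M (fun j => M a j) (fun i => M i d) (M a d) hE hq)
    refine ⟨z, hz, Or.inl ?_⟩
    rw [univ_product_univ]
    exact hzc.trans hsq
  · have hp : ((univ.filter fun j => M a j ≠ M a d).card : ℝ) ≤ α / 4 * n := by
      by_contra hp
      push Not at hp hq
      have : (0 : ℝ) < α / 4 * n := by positivity
      have := mul_lt_mul'' hq hp this.le this.le
      nlinarith
    have hE' : ((univ.filter fun p : Fin n × Fin n =>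
      M p.2 d + M a p.1 ≠ M a d + M p.2 p.1).card : ℝ) ≤ α ^ 2 / 16 * n ^ 2 := by
      rw [card_swap n (fun i j => M i d + M a j ≠ M a d + M i j)]
      simpa only [add_comm] using hE
    obtain ⟨z, hz, hzc⟩ := close_balanced n hn α (fun i j => M j i) (fun i j => hM j i)
      (fun j => M j d) (fun j => hM j d) (by rw [Finset.sum_comm]; exact hdisc)
      (close_of_few n α h0 h1 (fun i j => M j i) (fun j => M j d) (fun i => M a i) (M a d) hE' hp)
    refine ⟨z, hz, Or.inr ?_⟩
    rw [univ_product_univ]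
    rw [card_swap n (fun i j => M i j ≠ z i)] at hzc
    exact hzc.trans hsq
end

section
/- There exists m₀ such that for all m ≥ m₀ the following holds: for every matrix A : ZMod m → ZMod m → ℝ all of whose entries lie in {0, 1}, there exists a permutation π of ZMod m such that for every t : ZMod m, |(∑ i, A i (π (i + t))) − (∑ i, ∑ j, A i j)/m| ≤ 3·m^(3/4). -/
open Finset

lemma exp_chord (l d : ℝ) (h1 : -2 ≤ d) (h2 : d ≤ 2) :
    Real.exp (l * d) ≤ Real.cosh (2 * l) + d / 2 * Real.sinh (2 * l) := by
  have h := convexOn_exp.2 (Set.mem_univ (2 * l)) (Set.mem_univ (-(2 * l)))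
    (show 0 ≤ (1 + d / 2) / 2 by linarith) (show 0 ≤ (1 - d / 2) / 2 by linarith) (by ring)
  simp only [smul_eq_mul] at h
  rw [show (1 + d / 2) / 2 * (2 * l) + (1 - d / 2) / 2 * (-(2 * l)) = l * d by ring] at h
  rw [Real.cosh_eq, Real.sinh_eq]
  linarith

lemma sum_exp_le {n : ℕ} (l : ℝ) (d : Fin n → ℝ) (h1 : ∀ j, -2 ≤ d j) (h2 : ∀ j, d j ≤ 2)
    (h0 : ∑ j, d j = 0) : ∑ j, Real.exp (l * d j) ≤ n * Real.exp (2 * l ^ 2) := by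
  calc ∑ j, Real.exp (l * d j)
      ≤ ∑ j, (Real.cosh (2 * l) + d j / 2 * Real.sinh (2 * l)) :=
        Finset.sum_le_sum fun j _ => exp_chord l (d j) (h1 j) (h2 j)
    _ = n * Real.cosh (2 * l) := by
        rw [Finset.sum_add_distrib, ← Finset.sum_mul, ← Finset.sum_div, h0]
        simp
    _ ≤ n * Real.exp (2 * l ^ 2) := by
        have := Real.cosh_le_exp_half_sq (2 * l)
        rw [show (2 * l) ^ 2 / 2 = 2 * l ^ 2 by ring] at this
        gcongr

lemma sum_swap {n : ℕ} (p : Fin (n + 1)) (f : Fin (n + 1) → ℝ) :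
    ∑ k : Fin n, f (Equiv.swap 0 p k.succ) = (∑ k, f k) - f p := by
  rw [← Equiv.sum_comp (Equiv.swap 0 p) f, Fin.sum_univ_succ]
  simp

lemma mgf_fin (l : ℝ) : ∀ (n : ℕ) (A : Fin n → Fin n → ℝ), (∀ i j, 0 ≤ A i j) →
    (∀ i j, A i j ≤ 1) →
    ∑ σ : Equiv.Perm (Fin n), Real.exp (l * ((∑ i, A i (σ i)) - (∑ i, ∑ j, A i j) / n)) ≤
      n.factorial * Real.exp (n * (2 * l ^ 2)) := by
  intro n
  induction n with
  | zero => intro A _ _; simp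
  | succ n ih =>
    intro A hA0 hA1
    set B : Fin (n + 1) → Fin n → Fin n → ℝ :=
      fun p i k => A i.succ (Equiv.swap 0 p k.succ) with hB
    set d : Fin (n + 1) → ℝ := fun p =>
      A 0 p + (∑ i, ∑ k, B p i k) / n - (∑ i, ∑ j, A i j) / ((n + 1 : ℕ) : ℝ) with hd
    set R : ℝ := ∑ i : Fin n, ∑ j, A i.succ j with hR
    set r : ℝ := ∑ j, A 0 j with hr
    set c : Fin (n + 1) → ℝ := fun p => ∑ i : Fin n, A i.succ p with hc
    have hBs : ∀ p, ∑ i, ∑ k, B p i k = R - c p := by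
      intro p
      simp only [hB, sum_swap p, hR, hc, Finset.sum_sub_distrib]
    have hS : ∑ i, ∑ j, A i j = r + R := by rw [Fin.sum_univ_succ]
    have hd' : ∀ p, d p = A 0 p + (R - c p) / n - (r + R) / (n + 1) := by
      intro p
      simp only [hd, hBs, hS]
      push_cast
      rfl
    have hcs : ∑ p, c p = R := by
      simp only [hc, hR]
      rw [Finset.sum_comm]
    have hc0 : ∀ p, 0 ≤ c p := fun p => Finset.sum_nonneg fun i _ => hA0 _ _
    have hc1 : ∀ p, c p ≤ n := fun p => by
      calc c p ≤ ∑ i : Fin n, (1 : ℝ) := Finset.sum_le_sum fun i _ => hA1 _ _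
        _ = n := by simp
    have hr0 : 0 ≤ r := Finset.sum_nonneg fun i _ => hA0 _ _
    have hr1 : r ≤ n + 1 := by
      calc r ≤ ∑ i : Fin (n + 1), (1 : ℝ) := Finset.sum_le_sum fun i _ => hA1 _ _
        _ = n + 1 := by simp
    have hR0 : 0 ≤ R := Finset.sum_nonneg fun i _ => Finset.sum_nonneg fun j _ => hA0 _ _
    have hR1 : R ≤ n * (n + 1) := by
      calc R ≤ ∑ i : Fin n, ∑ j : Fin (n + 1), (1 : ℝ) :=
            Finset.sum_le_sum fun i _ => Finset.sum_le_sum fun j _ => hA1 _ _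
        _ = n * (n + 1) := by simp; ring
    have hn1 : (0 : ℝ) < n + 1 := by positivity
    have hbd : ∀ p, -2 ≤ d p ∧ d p ≤ 2 := by
      intro p
      rw [hd']
      have e1 : 0 ≤ r / (n + 1) := by positivity
      have e2 : r / (n + 1) ≤ 1 := by rw [div_le_one hn1]; exact hr1
      have a0 := hA0 0 p
      have a1 := hA1 0 p
      rcases Nat.eq_zero_or_pos n with h | h
      · have hR' : R = 0 := by
          have : (n : ℝ) = 0 := by exact_mod_cast h
          rw [this] at hR1; linarith
        rw [hR', add_zero]
        have : (n : ℝ) = 0 := by exact_mod_cast h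
        have e3 : (0 - c p) / (n : ℝ) = 0 := by rw [this]; simp
        rw [e3]
        constructor <;> linarith
      · have hn : (0 : ℝ) < n := by exact_mod_cast h
        have e3 : A 0 p + (R - c p) / n - (r + R) / (n + 1) =
          A 0 p - c p / n + R / (n * (n + 1)) - r / (n + 1) := by field_simp; ring
        rw [e3]
        have e4 : 0 ≤ c p / n := div_nonneg (hc0 p) hn.le
        have e5 : c p / n ≤ 1 := by rw [div_le_one hn]; exact hc1 p
        have e6 : 0 ≤ R / (n * (n + 1)) := by positivity
        have e7 : R / (n * (n + 1)) ≤ 1 := by rw [div_le_one (by positivity)]; exact hR1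
        constructor <;> linarith
    have hsum : ∑ p, d p = 0 := by
      simp only [hd', Finset.sum_sub_distrib, Finset.sum_add_distrib, ← Finset.sum_div, hcs]
      rw [← hr]
      simp only [Finset.sum_const, Finset.card_univ, Fintype.card_fin, nsmul_eq_mul]
      push_cast
      rcases Nat.eq_zero_or_pos n with h | h
      · have hn : (n : ℝ) = 0 := by exact_mod_cast h
        have hR' : R = 0 := by
          rw [hn] at hR1; linarith
        rw [hR', hn]; simp
      · have hn : (0 : ℝ) < n := by exact_mod_cast h
        field_simp
        ring
    rw [← Equiv.sum_comp Equiv.Perm.decomposeFin.symm, Fintype.sum_prod_type]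
    have hstep : ∀ (p : Fin (n + 1)),
        ∑ e : Equiv.Perm (Fin n), Real.exp (l *
          ((∑ i, A i (Equiv.Perm.decomposeFin.symm (p, e) i)) -
            (∑ i, ∑ j, A i j) / ((n + 1 : ℕ) : ℝ))) ≤
        Real.exp (l * d p) * (n.factorial * Real.exp (n * (2 * l ^ 2))) := by
      intro p
      refine le_trans (le_of_eq ?_) (mul_le_mul_of_nonneg_left
        (ih (B p) (fun _ _ => hA0 _ _) (fun _ _ => hA1 _ _)) (Real.exp_pos _).le)
      rw [Finset.mul_sum]
      refine Finset.sum_congr rfl fun e _ => ?_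
      rw [← Real.exp_add, Fin.sum_univ_succ]
      simp only [Equiv.Perm.decomposeFin_symm_apply_zero,
        Equiv.Perm.decomposeFin_symm_apply_succ, hd, hB]
      congr 1
      ring
    calc _ ≤ ∑ p, Real.exp (l * d p) * (n.factorial * Real.exp (n * (2 * l ^ 2))) :=
          Finset.sum_le_sum fun p _ => hstep p
      _ = (∑ p, Real.exp (l * d p)) * (n.factorial * Real.exp (n * (2 * l ^ 2))) := by
          rw [Finset.sum_mul]
      _ ≤ (((n + 1 : ℕ) : ℝ) * Real.exp (2 * l ^ 2)) *
            (n.factorial * Real.exp (n * (2 * l ^ 2))) := by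
          gcongr
          exact sum_exp_le l d (fun p => (hbd p).1) (fun p => (hbd p).2) hsum
      _ = _ := by
          rw [Nat.factorial_succ]
          push_cast
          rw [show ((n : ℝ) + 1) * (2 * l ^ 2) = 2 * l ^ 2 + n * (2 * l ^ 2) by ring, Real.exp_add]
          ring

lemma mgf_zmod (l : ℝ) (m : ℕ) [NeZero m] (A : ZMod m → ZMod m → ℝ) (h0 : ∀ i j, 0 ≤ A i j)
    (h1 : ∀ i j, A i j ≤ 1) (t : ZMod m) :
    ∑ σ : Equiv.Perm (ZMod m),
      Real.exp (l * ((∑ i, A i (σ (i + t))) - (∑ i, ∑ j, A i j) / m)) ≤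
      m.factorial * Real.exp (m * (2 * l ^ 2)) := by
  have key : ∑ σ : Equiv.Perm (ZMod m),
      Real.exp (l * ((∑ i, A i (σ i)) - (∑ i, ∑ j, A i j) / m)) ≤
      m.factorial * Real.exp (m * (2 * l ^ 2)) := by
    let e : Fin m ≃ ZMod m := (ZMod.finEquiv m).toEquiv
    have h := mgf_fin l m (fun i j => A (e i) (e j)) (fun _ _ => h0 _ _) (fun _ _ => h1 _ _)
    refine le_trans (le_of_eq ?_) h
    rw [← Equiv.sum_comp (Equiv.permCongr e)]
    refine Finset.sum_congr rfl fun σ _ => ?_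
    rw [← Equiv.sum_comp e, ← Equiv.sum_comp e]
    simp only [Equiv.permCongr_apply, Equiv.symm_apply_apply]
    simp only [Equiv.sum_comp e (A _)]
  rw [← Equiv.sum_comp (Equiv.mulRight (Equiv.addRight t))] at key
  simpa using key

theorem cyclic_shift_concentration :
    ∃ m₀ : ℕ, 0 < m₀ ∧ ∀ (m : ℕ) [NeZero m], m₀ ≤ m →
    ∀ A : ZMod m → ZMod m → ℝ, (∀ i j, A i j = 0 ∨ A i j = 1) →
    ∃ π : Equiv.Perm (ZMod m), ∀ t : ZMod m,
      |(∑ i, A i (π (i + t))) - (∑ i, ∑ j, A i j) / m| ≤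
        3 * (m : ℝ) ^ ((3 : ℝ) / 4) := by
  refine ⟨144, by norm_num, ?_⟩
  intro m _ hm A hA
  have h0 : ∀ i j, 0 ≤ A i j := fun i j => by rcases hA i j with h | h <;> rw [h] <;> norm_num
  have h1 : ∀ i j, A i j ≤ 1 := fun i j => by rcases hA i j with h | h <;> rw [h] <;> norm_num
  have hmR : (144 : ℝ) ≤ m := by exact_mod_cast hm
  have hm0 : (0 : ℝ) ≤ m := by linarith
  set w : ℝ := (m : ℝ) ^ ((1 : ℝ) / 4) with hw
  have hwpos : 0 < w := Real.rpow_pos_of_pos (by linarith) _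
  have hw4 : w ^ 4 = m := by
    rw [hw, ← Real.rpow_natCast, ← Real.rpow_mul hm0]; norm_num
  have hw3 : (m : ℝ) ^ ((3 : ℝ) / 4) = w ^ 3 := by
    rw [hw, ← Real.rpow_natCast, ← Real.rpow_mul hm0]; norm_num
  have hw2 : 12 ≤ w ^ 2 := by nlinarith [sq_nonneg w]
  rw [hw3]
  set X : Equiv.Perm (ZMod m) → ZMod m → ℝ := fun π t =>
    (∑ i, A i (π (i + t))) - (∑ i, ∑ j, A i j) / m with hX
  have hexp : (m : ℝ) * (2 * (w⁻¹) ^ 2) = 2 * w ^ 2 := by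
    rw [← hw4]; field_simp
  have htot : ∑ π : Equiv.Perm (ZMod m), ∑ t, (Real.exp (w⁻¹ * X π t) + Real.exp (-w⁻¹ * X π t))
      ≤ ∑ π : Equiv.Perm (ZMod m), 2 * m * Real.exp (2 * w ^ 2) := by
    rw [Finset.sum_comm]
    calc _ ≤ ∑ t : ZMod m, (m.factorial * Real.exp (2 * w ^ 2)
            + m.factorial * Real.exp (2 * w ^ 2)) := by
          refine Finset.sum_le_sum fun t _ => ?_
          rw [Finset.sum_add_distrib]
          have a := mgf_zmod w⁻¹ m A h0 h1 t
          have b := mgf_zmod (-w⁻¹) m A h0 h1 t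
          rw [neg_sq] at b
          rw [hexp] at a b
          exact add_le_add a b
      _ = _ := by
          simp only [Finset.sum_const, Finset.card_univ, ZMod.card, Fintype.card_perm,
            nsmul_eq_mul]
          ring
  obtain ⟨π, -, hπ⟩ := Finset.exists_le_of_sum_le Finset.univ_nonempty htot
  refine ⟨π, fun t => ?_⟩
  change |X π t| ≤ 3 * w ^ 3
  by_contra! hcon
  have hle : Real.exp (w⁻¹ * X π t) + Real.exp (-w⁻¹ * X π t) ≤ 2 * m * Real.exp (2 * w ^ 2) :=
    le_trans (Finset.single_le_sum
      (f := fun t => Real.exp (w⁻¹ * X π t) + Real.exp (-w⁻¹ * X π t))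
      (fun t _ => by positivity) (Finset.mem_univ t)) hπ
  have habs : Real.exp (w⁻¹ * |X π t|) ≤ 2 * m * Real.exp (2 * w ^ 2) := by
    rcases abs_choice (X π t) with h | h <;> rw [h]
    · linarith [Real.exp_pos (-w⁻¹ * X π t)]
    · rw [mul_neg, ← neg_mul]
      linarith [Real.exp_pos (w⁻¹ * X π t)]
  have hlt : Real.exp (3 * w ^ 2) < Real.exp (w⁻¹ * |X π t|) := by
    apply Real.exp_lt_exp.mpr
    calc 3 * w ^ 2 = w⁻¹ * (3 * w ^ 3) := by field_simp
      _ < _ := by gcongr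
  have h3 : Real.exp (3 * w ^ 2) = Real.exp (w ^ 2) * Real.exp (2 * w ^ 2) := by
    rw [← Real.exp_add]; ring_nf
  have hlow : (w ^ 2) ^ 3 / 6 ≤ Real.exp (w ^ 2) := by
    have := Real.pow_div_factorial_le_exp (w ^ 2) (by positivity) 3
    simpa [Nat.factorial] using this
  have h2m : 2 * (m : ℝ) ≤ Real.exp (w ^ 2) := by
    rw [← hw4]
    nlinarith [mul_le_mul_of_nonneg_left hw2 (show 0 ≤ w ^ 4 by positivity)]
  have := mul_le_mul_of_nonneg_right h2m (Real.exp_pos (2 * w ^ 2)).le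
  linarith
end
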